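/- Let X₁, X₂, … be i.i.d. real random variables with a bounded Lebesgue density p, mean 0 and variance 1, let S̄_n := max_{1≤k≤n} (X₁+…+X_k), and let p̄_n* denote the density of S̄_n/√n. Then there exists a sequence of positive reals ε_n → 0 such that for all sufficiently large n and almost every x ∈ (0,∞), | p̄_n*(x) − φ₊(x) − P(S̄_{n−1} < 0)·√n·p(√n·x) | ≤ ε_n / x. -/

import Mathlib

open MeasureTheory ProbabilityTheory Filter Set
open scoped ENNReal

/-!
Let `M n` be the maximum of `0, S 1, …, S n`. Spitzer's identity, differentiated in the variable of
the generating function, reads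
`y P(M (n+1) ∈ dy) = ∑ k ≤ n, (k+1)⁻¹ (y⁺ P(S (k+1) ∈ dy)) ∗ P(M (n-k) ∈ ·)`.
The part of the `k = 0` summand carried by `{M n = 0}` is the singular term `P(M n = 0) y p(y)`.
On the scale `√n` everything else is a regular part: local limit bounds for the convolution powers
of `p`, together with concentration estimates for `M n`, show that it is bounded, asymptotically
equicontinuous and vanishing at infinity, uniformly in the space variable. Since `M n / √n`
converges in law to `|N(0,1)|`, local integrals of the regular part converge to those of `x φ₊(x)`,
and equicontinuity upgrades this to uniform convergence. Dividing by `x` gives the bound `ε n / x`.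
-/

section Spitzer

open Measure
open Finset.HasAntidiagonal (antidiagonal)

/-- The `k`-fold convolution power of `μ`, i.e. the law of the sum of `k` independent variables
with law `μ`. -/
noncomputable def convPow (μ : Measure ℝ) : ℕ → Measure ℝ
  | 0 => dirac 0
  | k + 1 => μ ∗ convPow μ k

/-- The law of `x⁺` when `x` has law `ν`. -/
noncomputable def posPartLaw (ν : Measure ℝ) : Measure ℝ := ν.map (max · 0)

/-- The measure `x⁺ ν(dx)`. On laws supported in `[0, ∞)` it plays the role of the derivative of
the Laplace transform. -/
noncomputable def posWeighted (ν : Measure ℝ) : Measure ℝ := ν.withDensity ENNReal.ofReal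

/-- The law of `max (0, S₁, …, Sₙ)` for the random walk with step law `μ`, encoded by Lindley's
recursion `Mₙ₊₁ = (X + Mₙ)⁺` with `X` independent of `Mₙ`. -/
noncomputable def maxLaw (μ : Measure ℝ) : ℕ → Measure ℝ
  | 0 => dirac 0
  | n + 1 => posPartLaw (μ ∗ maxLaw μ n)

section General

variable {ν ρ : Measure ℝ}

instance [IsProbabilityMeasure ν] : IsProbabilityMeasure (posPartLaw ν) :=
  isProbabilityMeasure_map (by fun_prop)

instance [IsFiniteMeasure ν] : IsFiniteMeasure (posPartLaw ν) := by
  unfold posPartLaw; infer_instance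

instance [SFinite ν] : SFinite (posPartLaw ν) := by unfold posPartLaw; infer_instance

instance [SFinite ν] : SFinite (posWeighted ν) := by unfold posWeighted; infer_instance

lemma lintegral_posPartLaw {f : ℝ → ℝ≥0∞} (hf : Measurable f) :
    ∫⁻ x, f x ∂posPartLaw ν = ∫⁻ x, f (max x 0) ∂ν := lintegral_map hf (by fun_prop)

lemma lintegral_posWeighted {f : ℝ → ℝ≥0∞} (hf : Measurable f) :
    ∫⁻ x, f x ∂posWeighted ν = ∫⁻ x, ENNReal.ofReal x * f x ∂ν :=
  lintegral_withDensity_eq_lintegral_mul _ (by fun_prop) hf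

lemma posPartLaw_sum {ι : Type*} (s : Finset ι) (m : ι → Measure ℝ) :
    posPartLaw (∑ i ∈ s, m i) = ∑ i ∈ s, posPartLaw (m i) := by
  refine Measure.ext_of_lintegral _ fun f hf => ?_
  simp only [lintegral_finsetSum_measure, lintegral_posPartLaw hf]

instance {ι : Type*} (s : Finset ι) (m : ι → Measure ℝ) [∀ i, SFinite (m i)] :
    SFinite (∑ i ∈ s, m i) := by
  rw [← sum_coe_finset]; infer_instance

lemma conv_finsetSum {ι : Type*} [SFinite ν] (s : Finset ι) (m : ι → Measure ℝ)
    [∀ i, SFinite (m i)] : ν ∗ (∑ i ∈ s, m i) = ∑ i ∈ s, ν ∗ m i := by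
  classical
  induction s using Finset.induction_on with
  | empty => simp
  | insert i s hi ih => rw [Finset.sum_insert hi, Finset.sum_insert hi, conv_add, ih]

lemma ae_nonneg_posPartLaw : ∀ᵐ x ∂posPartLaw ν, 0 ≤ x :=
  (ae_map_iff (by fun_prop) measurableSet_Ici).2 (ae_of_all _ fun x => le_max_right x 0)

-- Baxter's identity: taking positive parts is a Rota–Baxter projection of the convolution algebra.
lemma posPartLaw_conv_add_posPartLaw_conv [SFinite ν] [SFinite ρ] :
    posPartLaw ν ∗ posPartLaw ρ + posPartLaw (ν ∗ ρ) =
      posPartLaw (ν ∗ posPartLaw ρ) + posPartLaw (posPartLaw ν ∗ ρ) := by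
  refine Measure.ext_of_lintegral _ fun f hf => ?_
  have pointwise (a b : ℝ) : f (max a 0 + max b 0) + f (max (a + b) 0) =
      f (max (a + max b 0) 0) + f (max (max a 0 + b) 0) := by
    rcases le_total a 0 with ha | ha <;> rcases le_total b 0 with hb | hb <;>
      simp [ha, hb, add_nonpos, add_nonneg, add_comm]
  simp (disch := fun_prop) only [lintegral_add_measure, lintegral_conv, lintegral_posPartLaw]
  rw [lintegral_posPartLaw (by fun_prop), lintegral_posPartLaw (by fun_prop),
    ← lintegral_add_left (by fun_prop), ← lintegral_add_left (by fun_prop)]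
  refine lintegral_congr fun x => ?_
  rw [← lintegral_add_left (by fun_prop), ← lintegral_add_left (by fun_prop)]
  exact lintegral_congr fun y => pointwise x y

lemma posWeighted_posPartLaw : posWeighted (posPartLaw ν) = posWeighted ν := by
  refine Measure.ext_of_lintegral _ fun f hf => ?_
  rw [lintegral_posWeighted hf, lintegral_posWeighted hf, lintegral_posPartLaw (by fun_prop)]
  refine lintegral_congr fun x => ?_
  rcases le_total x 0 with hx | hx <;> simp [hx]

lemma posWeighted_dirac_zero : posWeighted (dirac 0) = 0 := by
  refine Measure.ext_of_lintegral _ fun f hf => ?_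
  rw [lintegral_posWeighted hf, lintegral_dirac' _ (by fun_prop)]
  simp

-- The Leibniz rule for the derivative of a product of Laplace transforms.
lemma posWeighted_conv [SFinite ν] [SFinite ρ] (hν : ∀ᵐ x ∂ν, 0 ≤ x) (hρ : ∀ᵐ x ∂ρ, 0 ≤ x) :
    posWeighted (ν ∗ ρ) = posWeighted ν ∗ ρ + ν ∗ posWeighted ρ := by
  refine Measure.ext_of_lintegral _ fun f hf => ?_
  simp (disch := fun_prop) only [lintegral_add_measure, lintegral_conv, lintegral_posWeighted]
  rw [lintegral_posWeighted (by fun_prop), ← lintegral_add_left (by fun_prop)]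
  refine lintegral_congr_ae ?_
  filter_upwards [hν] with x hx
  rw [← lintegral_const_mul _ (by fun_prop), ← lintegral_add_left (by fun_prop)]
  refine lintegral_congr_ae ?_
  filter_upwards [hρ] with y hy
  rw [ENNReal.ofReal_add hx hy, add_mul]

lemma posWeighted_sum {ι : Type*} (s : Finset ι) (m : ι → Measure ℝ) :
    posWeighted (∑ i ∈ s, m i) = ∑ i ∈ s, posWeighted (m i) := by
  refine Measure.ext_of_lintegral _ fun f hf => ?_
  simp only [lintegral_finsetSum_measure, lintegral_posWeighted hf]

end General

section Walk

variable {μ : Measure ℝ}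

lemma ae_nonneg_maxLaw (n : ℕ) : ∀ᵐ x ∂maxLaw μ n, 0 ≤ x := by
  cases n with
  | zero => exact (ae_dirac_iff measurableSet_Ici).2 le_rfl
  | succ n => exact ae_nonneg_posPartLaw

variable [IsProbabilityMeasure μ]

instance (k : ℕ) : IsProbabilityMeasure (convPow μ k) := by
  induction k with
  | zero => unfold convPow; infer_instance
  | succ k ih => unfold convPow; infer_instance

instance (n : ℕ) : IsProbabilityMeasure (maxLaw μ n) := by
  induction n with
  | zero => unfold maxLaw; infer_instance
  | succ n ih => unfold maxLaw; infer_instance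

lemma convPow_one : convPow μ 1 = μ := conv_dirac_zero μ

lemma convPow_add (a b : ℕ) : convPow μ (a + b) = convPow μ a ∗ convPow μ b := by
  induction a with
  | zero => simp [convPow]
  | succ a ih => rw [Nat.succ_add, convPow, ih, convPow, conv_assoc]

lemma sum_posPartLaw_conv_maxLaw_succ (n : ℕ) :
    ∑ ij ∈ antidiagonal n, posPartLaw (convPow μ (ij.1 + 1) ∗ maxLaw μ (ij.2 + 1)) +
        posPartLaw (convPow μ (n + 2)) =
      maxLaw μ (n + 2) +
        ∑ ij ∈ antidiagonal n, posPartLaw (convPow μ (ij.1 + 2) ∗ maxLaw μ ij.2) := by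
  have h := (Finset.Nat.sum_antidiagonal_succ' (n := n) (f := fun ij =>
    posPartLaw (convPow μ (ij.1 + 1) ∗ maxLaw μ ij.2))).symm.trans Finset.Nat.sum_antidiagonal_succ
  rw [zero_add, convPow_one, maxLaw, conv_dirac_zero, add_comm] at h
  exact h

-- Spitzer's identity, as the coefficient form of an ODE for the generating function of `maxLaw μ`.
lemma sum_posPartLaw_convPow_conv_maxLaw (n : ℕ) :
    ∑ ij ∈ antidiagonal n, posPartLaw (convPow μ (ij.1 + 1)) ∗ maxLaw μ ij.2 =
      (n + 1 : ℝ≥0∞) • maxLaw μ (n + 1) := by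
  induction n with
  | zero => simp [maxLaw, convPow]
  | succ n ih =>
    have baxter (ij : ℕ × ℕ) : posPartLaw (convPow μ (ij.1 + 1)) ∗ maxLaw μ (ij.2 + 1) +
        posPartLaw (convPow μ (ij.1 + 2) ∗ maxLaw μ ij.2) =
        posPartLaw (convPow μ (ij.1 + 1) ∗ maxLaw μ (ij.2 + 1)) +
          posPartLaw (μ ∗ posPartLaw (convPow μ (ij.1 + 1)) ∗ maxLaw μ ij.2) := by
      have h := posPartLaw_conv_add_posPartLaw_conv (ν := convPow μ (ij.1 + 1))
        (ρ := μ ∗ maxLaw μ ij.2)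
      rwa [← conv_assoc, ← conv_assoc (posPartLaw _), conv_comm _ μ, conv_comm _ μ,
        conv_assoc μ (posPartLaw _)] at h
    have recursion : ∑ ij ∈ antidiagonal n,
        posPartLaw (μ ∗ posPartLaw (convPow μ (ij.1 + 1)) ∗ maxLaw μ ij.2) =
        (n + 1 : ℝ≥0∞) • maxLaw μ (n + 2) := by
      rw [← posPartLaw_sum, ← conv_finsetSum, ih, conv_smul_right, posPartLaw, Measure.map_smul]
      rfl
    have sum_baxter := Finset.sum_congr (rfl : antidiagonal n = _) fun ij _ => baxter ij
    rw [Finset.sum_add_distrib, Finset.sum_add_distrib, recursion] at sum_baxter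
    rw [Finset.Nat.sum_antidiagonal_succ', maxLaw, conv_dirac_zero,
      ← add_left_inj (∑ ij ∈ antidiagonal n, posPartLaw (convPow μ (ij.1 + 2) ∗ maxLaw μ ij.2)),
      add_assoc, sum_baxter, ← add_assoc, add_comm (posPartLaw _),
      sum_posPartLaw_conv_maxLaw_succ]
    push_cast
    module

lemma sum_antidiagonal_assoc {M : Type*} [AddCommMonoid M] (f : ℕ → ℕ → ℕ → M) (n : ℕ) :
    ∑ im ∈ antidiagonal n, ∑ jk ∈ antidiagonal im.2, f im.1 jk.1 jk.2 =
      ∑ jm ∈ antidiagonal n, ∑ ik ∈ antidiagonal jm.2, f ik.1 jm.1 ik.2 := by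
  rw [Finset.sum_sigma', Finset.sum_sigma']
  refine Finset.sum_nbij' (fun x => ⟨(x.2.1, x.1.1 + x.2.2), (x.1.1, x.2.2)⟩)
    (fun x => ⟨(x.2.1, x.1.1 + x.2.2), (x.1.1, x.2.2)⟩) ?_ ?_ ?_ ?_ ?_ <;>
  simp only [Finset.mem_sigma, Finset.HasAntidiagonal.mem_antidiagonal] <;> grind

lemma sum_posPartLaw_convPow_conv_posWeighted (n : ℕ)
    (ih : ∀ k < n, posWeighted (maxLaw μ (k + 1)) = ∑ ij ∈ antidiagonal k,
      (ij.1 + 1 : ℝ≥0∞)⁻¹ • (posWeighted (convPow μ (ij.1 + 1)) ∗ maxLaw μ ij.2)) :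
    ∑ ij ∈ antidiagonal n, posPartLaw (convPow μ (ij.1 + 1)) ∗ posWeighted (maxLaw μ ij.2) =
      ∑ ij ∈ antidiagonal n, ((ij.1 + 1 : ℝ≥0∞)⁻¹ * ij.2) •
        (posWeighted (convPow μ (ij.1 + 1)) ∗ maxLaw μ ij.2) := by
  cases n with
  | zero => simp [maxLaw, posWeighted_dirac_zero]
  | succ m =>
    rw [Finset.Nat.sum_antidiagonal_succ', Finset.Nat.sum_antidiagonal_succ', maxLaw,
      posWeighted_dirac_zero, conv_zero, Nat.cast_zero, mul_zero, zero_smul, zero_add, zero_add]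
    calc ∑ im ∈ antidiagonal m,
          posPartLaw (convPow μ (im.1 + 1)) ∗ posWeighted (maxLaw μ (im.2 + 1))
      _ = ∑ im ∈ antidiagonal m, ∑ jk ∈ antidiagonal im.2, (jk.1 + 1 : ℝ≥0∞)⁻¹ •
            (posWeighted (convPow μ (jk.1 + 1)) ∗
              posPartLaw (convPow μ (im.1 + 1)) ∗ maxLaw μ jk.2) := by
        refine Finset.sum_congr rfl fun im him => ?_
        rw [ih _ (Nat.lt_succ_of_le (Finset.HasAntidiagonal.antidiagonal.snd_le him)),
          conv_finsetSum]
        refine Finset.sum_congr rfl fun jk _ => ?_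
        rw [conv_smul_right, ← conv_assoc, conv_comm (posPartLaw _), conv_assoc]
      _ = ∑ jm ∈ antidiagonal m, ∑ ik ∈ antidiagonal jm.2, (jm.1 + 1 : ℝ≥0∞)⁻¹ •
            (posWeighted (convPow μ (jm.1 + 1)) ∗
              posPartLaw (convPow μ (ik.1 + 1)) ∗ maxLaw μ ik.2) :=
        sum_antidiagonal_assoc (fun i j k => (j + 1 : ℝ≥0∞)⁻¹ •
          (posWeighted (convPow μ (j + 1)) ∗ posPartLaw (convPow μ (i + 1)) ∗ maxLaw μ k)) m
      _ = _ := by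
        refine Finset.sum_congr rfl fun jm _ => ?_
        rw [← Finset.smul_sum, ← conv_finsetSum, sum_posPartLaw_convPow_conv_maxLaw,
          conv_smul_right, smul_smul, Nat.cast_succ]

lemma posWeighted_maxLaw_succ (n : ℕ) :
    posWeighted (maxLaw μ (n + 1)) = ∑ ij ∈ antidiagonal n,
      (ij.1 + 1 : ℝ≥0∞)⁻¹ • (posWeighted (convPow μ (ij.1 + 1)) ∗ maxLaw μ ij.2) := by
  induction n using Nat.strong_induction_on with
  | _ n ih =>
    have derivative : (n + 1 : ℝ≥0∞) • posWeighted (maxLaw μ (n + 1)) =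
        ∑ ij ∈ antidiagonal n, (posWeighted (convPow μ (ij.1 + 1)) ∗ maxLaw μ ij.2 +
          posPartLaw (convPow μ (ij.1 + 1)) ∗ posWeighted (maxLaw μ ij.2)) := by
      rw [posWeighted, ← withDensity_smul_measure, ← sum_posPartLaw_convPow_conv_maxLaw,
        ← posWeighted, posWeighted_sum]
      refine Finset.sum_congr rfl fun ij _ => ?_
      rw [posWeighted_conv ae_nonneg_posPartLaw (ae_nonneg_maxLaw _), posWeighted_posPartLaw]
    have cancel (k : ℕ) : (k + 1 : ℝ≥0∞)⁻¹ * (k + 1 : ℝ≥0∞) = 1 :=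
      ENNReal.inv_mul_cancel (by simp) (by finiteness)
    rw [← one_smul ℝ≥0∞ (posWeighted _), ← cancel n, mul_smul, derivative,
      Finset.sum_add_distrib, sum_posPartLaw_convPow_conv_posWeighted n ih,
      ← Finset.sum_add_distrib, Finset.smul_sum]
    refine Finset.sum_congr rfl fun ij hij => ?_
    have hn : (n : ℝ≥0∞) = ij.1 + ij.2 := by
      exact_mod_cast (Finset.HasAntidiagonal.mem_antidiagonal.1 hij).symm
    have factor : 1 + (ij.1 + 1 : ℝ≥0∞)⁻¹ * ij.2 = (ij.1 + 1 : ℝ≥0∞)⁻¹ * (n + 1) := by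
      rw [hn, add_right_comm, mul_add _ (ij.1 + 1 : ℝ≥0∞), cancel]
    calc _ = ((n + 1 : ℝ≥0∞)⁻¹ * (1 + (ij.1 + 1 : ℝ≥0∞)⁻¹ * ij.2)) •
          (posWeighted (convPow μ (ij.1 + 1)) ∗ maxLaw μ ij.2) := by module
      _ = _ := by rw [factor, mul_left_comm, cancel, mul_one]

end Walk
end Spitzer

section Comparison

open Measure
open Finset.HasAntidiagonal (antidiagonal)

lemma conv_apply {ν ρ : Measure ℝ} [SFinite ν] [SFinite ρ] {s : Set ℝ} (hs : MeasurableSet s) :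
    (ν ∗ ρ) s = ∫⁻ x, ρ ((x + ·) ⁻¹' s) ∂ν := by
  rw [Measure.conv, Measure.map_apply (by fun_prop) hs, prod_apply (hs.preimage (by fun_prop))]
  rfl

lemma posPartLaw_apply_of_subset_Ioi {ν : Measure ℝ} {s : Set ℝ} (hs : MeasurableSet s)
    (h : s ⊆ Ioi 0) : posPartLaw ν s = ν s := by
  rw [posPartLaw, Measure.map_apply (by fun_prop) hs]
  congr 1
  ext x
  rcases le_or_gt x 0 with hx | hx
  · simpa [hx] using iff_of_false (fun h0 => lt_irrefl (0 : ℝ) (h h0))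
      (fun h1 => hx.not_gt (h h1))
  · simp [hx.le]

lemma posPartLaw_Iic {ν : Measure ℝ} {u : ℝ} (hu : 0 ≤ u) : posPartLaw ν (Iic u) = ν (Iic u) := by
  rw [posPartLaw, Measure.map_apply (by fun_prop) measurableSet_Iic]
  congr 1
  ext x; simp [hu]

variable {μ : Measure ℝ}

lemma maxLaw_of_subset_Iio {s : Set ℝ} (hs : s ⊆ Iio 0) (n : ℕ) : maxLaw μ n s = 0 :=
  measure_mono_null hs (by simpa [ae_iff] using! ae_nonneg_maxLaw (μ := μ) n)

variable [IsProbabilityMeasure μ]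

lemma maxLaw_succ_Iic {u : ℝ} (hu : 0 ≤ u) (n : ℕ) :
    maxLaw μ (n + 1) (Iic u) = ∫⁻ x, maxLaw μ n (Iic (u - x)) ∂μ := by
  rw [maxLaw, posPartLaw_Iic hu, conv_apply measurableSet_Iic]
  simp_rw [preimage_const_add_Iic]

lemma convPow_succ_conv_Icc {ρ : Measure ℝ} [SFinite ρ] (k : ℕ) (u v : ℝ) :
    (convPow μ (k + 1) ∗ ρ) (Icc u v) = ∫⁻ x, (convPow μ k ∗ ρ) (Icc (u - x) (v - x)) ∂μ := by
  rw [convPow, conv_assoc, conv_apply measurableSet_Icc]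
  simp_rw [preimage_const_add_Icc]

lemma maxLaw_succ_Iic_le (n : ℕ) (u : ℝ) : maxLaw μ (n + 1) (Iic u) ≤ maxLaw μ n (Iic u) := by
  induction n generalizing u with
  | zero =>
    rcases le_or_gt 0 u with hu | hu
    · simpa [maxLaw, hu] using prob_le_one
    · simp [maxLaw_of_subset_Iio (Iic_subset_Iio.2 hu)]
  | succ n ih =>
    rcases le_or_gt 0 u with hu | hu
    · rw [maxLaw_succ_Iic hu, maxLaw_succ_Iic hu]
      exact lintegral_mono fun x => ih _
    · simp [maxLaw_of_subset_Iio (Iic_subset_Iio.2 hu)]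

lemma antitone_maxLaw_Iic (u : ℝ) : Antitone fun n => maxLaw μ n (Iic u) :=
  antitone_nat_of_succ_le fun n => maxLaw_succ_Iic_le n u

lemma maxLaw_add_Iic_le (m n : ℕ) (u : ℝ) :
    maxLaw μ (m + n) (Iic u) ≤ ∫⁻ x, maxLaw μ n (Iic (u - x)) ∂convPow μ m := by
  induction m generalizing u with
  | zero => simp [convPow]
  | succ m ih =>
    rcases le_or_gt 0 u with hu | hu
    · rw [add_right_comm, maxLaw_succ_Iic hu, convPow, lintegral_conv (Antitone.measurable
        fun x y hxy => measure_mono (Iic_subset_Iic.2 (by linarith)))]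
      simp_rw [← sub_sub]
      exact lintegral_mono fun x => ih _
    · simp [maxLaw_of_subset_Iio (Iic_subset_Iio.2 hu)]

-- Sampling the walk every `m` steps can only decrease its maximum.
lemma maxLaw_mul_Iic_le (m N : ℕ) (u : ℝ) :
    maxLaw μ (m * N) (Iic u) ≤ maxLaw (convPow μ m) N (Iic u) := by
  induction N generalizing u with
  | zero => rfl
  | succ N ih =>
    rcases le_or_gt 0 u with hu | hu
    · rw [mul_add_one, add_comm, maxLaw_succ_Iic hu]
      exact (maxLaw_add_Iic_le _ _ u).trans (lintegral_mono fun x => ih _)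
    · simp [maxLaw_of_subset_Iio (Iic_subset_Iio.2 hu)]

lemma convPow_convPow (m k : ℕ) : convPow (convPow μ m) k = convPow μ (m * k) := by
  induction k with
  | zero => rfl
  | succ k ih => rw [convPow, ih, ← convPow_add, mul_add_one, add_comm]

lemma conv_singleton_zero {ν ρ : Measure ℝ} [SFinite ν] [SFinite ρ] (hν : ∀ᵐ x ∂ν, 0 ≤ x)
    (hρ : ∀ᵐ x ∂ρ, 0 ≤ x) : (ν ∗ ρ) {0} = ν {0} * ρ {0} := by
  rw [conv_apply (measurableSet_singleton 0), mul_comm, ← lintegral_indicator_const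
    (measurableSet_singleton 0)]
  refine lintegral_congr_ae ?_
  filter_upwards [hν] with x hx
  rcases hx.eq_or_lt with rfl | hx
  · simp
  · rw [indicator_of_notMem (by simpa using hx.ne')]
    refine measure_mono_null (fun y hy => ?_) (ae_iff.1 hρ)
    simp only [mem_preimage, mem_singleton_iff] at hy
    simp only [mem_ofPred_eq, not_le]
    linarith

lemma posPartLaw_singleton_zero {ν : Measure ℝ} : posPartLaw ν {0} = ν (Iic 0) := by
  rw [posPartLaw, Measure.map_apply (by fun_prop) (measurableSet_singleton 0)]
  congr 1
  ext x; simp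

lemma sum_convPow_Iic_zero_mul_maxLaw (n : ℕ) :
    ∑ ij ∈ antidiagonal n, (convPow μ (ij.1 + 1)).real (Iic 0) * (maxLaw μ ij.2).real {0} =
      (n + 1) * (maxLaw μ (n + 1)).real {0} := by
  have h := congrArg (fun ν => (ν {0}).toReal) (sum_posPartLaw_convPow_conv_maxLaw (μ := μ) n)
  simp only [Measure.finsetSum_apply, Measure.smul_apply, smul_eq_mul,
    conv_singleton_zero ae_nonneg_posPartLaw (ae_nonneg_maxLaw _), posPartLaw_singleton_zero] at h
  rw [ENNReal.toReal_sum fun _ _ => by finiteness, ENNReal.toReal_mul] at h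
  simp only [ENNReal.toReal_mul] at h
  have cast : (n + 1 : ℝ≥0∞).toReal = n + 1 := by norm_cast
  rwa [cast] at h

lemma sum_range_le_exp_harmonic {b : ℕ → ℝ} {θ : ℝ} (hb0 : b 0 ≤ 1) (hb : ∀ n, 0 ≤ b n)
    (h : ∀ n : ℕ, (n + 1) * b (n + 1) ≤ θ * ∑ j ∈ Finset.range (n + 1), b j) (n : ℕ) :
    ∑ j ∈ Finset.range (n + 1), b j ≤ Real.exp (θ * harmonic n) := by
  induction n with
  | zero => simpa using hb0
  | succ n ih =>
    set B := ∑ j ∈ Finset.range (n + 1), b j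
    calc ∑ j ∈ Finset.range (n + 2), b j
      _ = B + b (n + 1) := Finset.sum_range_succ _ _
      _ ≤ B + θ * B / (n + 1) := by
        gcongr; rw [le_div_iff₀ (by positivity), mul_comm]; exact h n
      _ = B * (θ * (n + 1 : ℝ)⁻¹ + 1) := by ring
      _ ≤ Real.exp (θ * harmonic n) * Real.exp (θ * (n + 1 : ℝ)⁻¹) :=
        mul_le_mul_of_nonneg ih (Real.add_one_le_exp _) (Finset.sum_nonneg fun j _ => hb j)
          (Real.exp_nonneg _)
      _ = Real.exp (θ * harmonic (n + 1)) := by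
        rw [← Real.exp_add, harmonic_succ]; push_cast; ring_nf

lemma le_rpow_of_succ_mul_le_sum {b : ℕ → ℝ} {θ : ℝ} (hb0 : b 0 ≤ 1) (hb : ∀ n, 0 ≤ b n)
    (hθ : 0 ≤ θ)
    (h : ∀ n : ℕ, (n + 1) * b (n + 1) ≤ θ * ∑ j ∈ Finset.range (n + 1), b j) (n : ℕ) :
    b (n + 1) ≤ θ * Real.exp θ * (n + 1 : ℝ) ^ (θ - 1) := by
  have hn : (0 : ℝ) < n + 1 := by positivity
  have hlog : (harmonic n : ℝ) ≤ 1 + Real.log (n + 1) := by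
    refine (Rat.cast_le.2 ?_).trans (by exact_mod_cast harmonic_le_one_add_log (n + 1))
    rw [harmonic_succ]
    exact le_add_of_nonneg_right (by positivity)
  have hexp : Real.exp (θ * harmonic n) ≤ Real.exp θ * (n + 1 : ℝ) ^ θ := by
    rw [Real.rpow_def_of_pos hn, ← Real.exp_add, Real.exp_le_exp]
    nlinarith
  rw [Real.rpow_sub_one hn.ne', ← mul_div_assoc, le_div_iff₀ hn, mul_comm, mul_assoc]
  exact (h n).trans (mul_le_mul_of_nonneg_left
    ((sum_range_le_exp_harmonic hb0 hb h n).trans hexp) hθ)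

lemma maxLaw_singleton_zero_le {θ : ℝ} (hθ : ∀ k, 1 ≤ k → (convPow μ k).real (Iic 0) ≤ θ) (n : ℕ) :
    (maxLaw μ (n + 1)).real {0} ≤ θ * Real.exp θ * (n + 1 : ℝ) ^ (θ - 1) := by
  refine le_rpow_of_succ_mul_le_sum measureReal_le_one (fun _ => measureReal_nonneg)
    (measureReal_nonneg.trans (hθ 1 le_rfl)) (fun n => ?_) n
  rw [← sum_convPow_Iic_zero_mul_maxLaw, ← Finset.Nat.sum_antidiagonal_eq_sum_range_succ
    (fun j _ => (maxLaw μ j).real {0}), Finset.mul_sum, ← Finset.Nat.sum_antidiagonal_swap]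
  exact Finset.sum_le_sum fun ij _ =>
    mul_le_mul_of_nonneg_right (hθ _ (Nat.le_add_left 1 _)) measureReal_nonneg

lemma measure_Iic_mul_maxLaw_Iic_le (n : ℕ) (h : ℝ) :
    μ (Iic (-h)) * maxLaw μ n (Iic h) ≤ maxLaw μ (n + 1) {0} := by
  rw [maxLaw, posPartLaw_singleton_zero, conv_apply measurableSet_Iic, mul_comm,
    ← lintegral_indicator_const measurableSet_Iic]
  refine lintegral_mono (indicator_le fun x hx => ?_)
  rw [preimage_const_add_Iic]
  exact measure_mono (Iic_subset_Iic.2 (by linarith [mem_Iic.1 hx]))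

-- Induction on `a`: only a window reaching below `0` feels the reflection in Lindley's recursion.
lemma maxLaw_add_Icc_le (a b : ℕ) (h u : ℝ) : maxLaw μ (a + b) (Icc u (u + h)) ≤
    maxLaw μ b (Iic h) + (convPow μ a ∗ maxLaw μ b) (Icc u (u + h)) := by
  induction a generalizing u with
  | zero => simp [convPow]
  | succ a ih =>
    rcases le_or_gt u 0 with hu | hu
    · calc maxLaw μ (a + 1 + b) (Icc u (u + h)) ≤ maxLaw μ (a + 1 + b) (Iic h) :=
            measure_mono (Icc_subset_Iic_self.trans (Iic_subset_Iic.2 (by linarith)))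
        _ ≤ maxLaw μ b (Iic h) := antitone_maxLaw_Iic h (by omega)
        _ ≤ _ := le_self_add
    · rw [add_right_comm, maxLaw, posPartLaw_apply_of_subset_Ioi measurableSet_Icc
        fun x hx => hu.trans_le hx.1, conv_apply measurableSet_Icc, convPow_succ_conv_Icc]
      simp_rw [preimage_const_add_Icc, add_sub_right_comm u h]
      calc ∫⁻ x, maxLaw μ (a + b) (Icc (u - x) (u - x + h)) ∂μ
        _ ≤ ∫⁻ x, (maxLaw μ b (Iic h) +
              (convPow μ a ∗ maxLaw μ b) (Icc (u - x) (u - x + h))) ∂μ :=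
          lintegral_mono fun x => ih (u - x)
        _ = _ := by rw [lintegral_add_left measurable_const]; simp

lemma conv_le_smul_volume {ν ρ : Measure ℝ} [SFinite ν] [IsProbabilityMeasure ρ] {D : ℝ≥0∞}
    (hν : ν ≤ D • volume) : ν ∗ ρ ≤ D • volume := by
  refine Measure.le_iff.2 fun s hs => ?_
  rw [conv_comm, conv_apply hs]
  calc ∫⁻ x, ν ((x + ·) ⁻¹' s) ∂ρ ≤ ∫⁻ _, (D • volume) s ∂ρ := by
        refine lintegral_mono fun x => (hν _).trans ?_
        simp only [Measure.smul_apply, measure_preimage_add, le_refl]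
    _ = (D • volume) s := by simp

lemma restrict_maxLaw_succ_le {D : ℝ≥0∞} (hμ : μ ≤ D • volume) (n : ℕ) :
    (maxLaw μ (n + 1)).restrict (Ioi 0) ≤ D • volume := by
  refine Measure.le_iff.2 fun s hs => ?_
  rw [Measure.restrict_apply hs, maxLaw, posPartLaw_apply_of_subset_Ioi
    (hs.inter measurableSet_Ioi) inter_subset_right]
  exact (measure_mono inter_subset_left).trans (conv_le_smul_volume hμ s)

end Comparison

section Moments

open Measure
open Finset.HasAntidiagonal (antidiagonal)

/-- `μ` has mean `0` and finite variance `v`. -/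
structure IsCentered (μ : Measure ℝ) (v : ℝ) : Prop where
  memLp_id : MemLp id 2 μ
  integral_id : ∫ x, x ∂μ = 0
  variance_id : Var[id; μ] = v

namespace IsCentered

variable {μ ν : Measure ℝ} {v w : ℝ}

lemma integrable_sq (h : IsCentered μ v) : Integrable (fun x => x ^ 2) μ := h.memLp_id.integrable_sq

lemma integral_sq (h : IsCentered μ v) : ∫ x, x ^ 2 ∂μ = v := by
  rw [← h.variance_id, variance_of_integral_eq_zero aemeasurable_id h.integral_id]; rfl

variable [IsProbabilityMeasure μ] [IsProbabilityMeasure ν]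

lemma integrable_id (h : IsCentered μ v) : Integrable id μ := h.memLp_id.integrable one_le_two

lemma conv (hμ : IsCentered μ v) (hν : IsCentered ν w) : IsCentered (μ ∗ ν) (v + w) where
  memLp_id := by
    rw [Measure.conv, memLp_map_measure_iff (by fun_prop) (by fun_prop)]
    exact (hμ.memLp_id.comp_fst ν).add (hν.memLp_id.comp_snd μ)
  integral_id := by
    rw [Measure.conv, integral_map (by fun_prop) (by fun_prop)]
    calc ∫ p, p.1 + p.2 ∂μ.prod ν = ∫ p, p.1 ∂μ.prod ν + ∫ p, p.2 ∂μ.prod ν :=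
          integral_add (hμ.integrable_id.comp_fst ν) (hν.integrable_id.comp_snd μ)
      _ = 0 := by
        rw [integral_fun_fst fun x => x, integral_fun_snd fun x => x]
        simp [hμ.integral_id, hν.integral_id]
  variance_id := by
    rw [Measure.conv, variance_id_map (by fun_prop), ← hμ.variance_id, ← hν.variance_id,
      ← variance_add_prod hμ.memLp_id hν.memLp_id]
    rfl

lemma convPow (h : IsCentered μ v) (k : ℕ) : IsCentered (convPow μ k) (k * v) := by
  induction k with
  | zero =>
    simpa [_root_.convPow] using
      { memLp_id := ⟨by fun_prop, by simp [eLpNorm_dirac]⟩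
        integral_id := by simp
        variance_id := by simp }
  | succ k ih => simpa [_root_.convPow, add_mul, add_comm] using h.conv ih

lemma integral_abs_le (h : IsCentered μ v) : ∫ x, |x| ∂μ ≤ √v := by
  refine Real.le_sqrt_of_sq_le ?_
  have := variance_nonneg |id| μ
  rw [variance_eq_sub h.memLp_id.abs] at this
  simpa [h.integral_sq] using this

lemma lintegral_ofReal_le (h : IsCentered μ v) : ∫⁻ x, ENNReal.ofReal x ∂μ ≤ ENNReal.ofReal √v :=
  calc ∫⁻ x, ENNReal.ofReal x ∂μ ≤ ∫⁻ x, ENNReal.ofReal |x| ∂μ :=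
        lintegral_mono fun x => ENNReal.ofReal_le_ofReal (le_abs_self x)
    _ = ENNReal.ofReal (∫ x, |x| ∂μ) := (ofReal_integral_eq_lintegral_ofReal
        h.integrable_id.abs (ae_of_all _ fun x => abs_nonneg x)).symm
    _ ≤ ENNReal.ofReal √v := ENNReal.ofReal_le_ofReal h.integral_abs_le

lemma measureReal_le_abs_le (h : IsCentered μ v) {a : ℝ} (ha : 0 < a) :
    μ.real {x | a ≤ |x|} ≤ v / a ^ 2 := by
  have := meas_ge_le_variance_div_sq h.memLp_id ha
  simp only [id, h.integral_id, sub_zero] at this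
  rw [← h.variance_id]
  exact ENNReal.toReal_le_of_le_ofReal (div_nonneg (variance_nonneg _ _) (sq_nonneg a)) this

end IsCentered

lemma sqrt_le_two_mul_sqrt {a b : ℝ} (h : a ≤ 4 * b) : √a ≤ 2 * √b := by
  rw [show (2 : ℝ) = √4 by rw [show (4 : ℝ) = 2 ^ 2 by norm_num, Real.sqrt_sq zero_le_two],
    ← Real.sqrt_mul (by norm_num)]
  exact Real.sqrt_le_sqrt h

lemma sum_range_rpow_sub_one_le {a : ℝ} (ha0 : 0 < a) (ha1 : a ≤ 1) (n : ℕ) :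
    ∑ k ∈ Finset.range n, (k + 1 : ℝ) ^ (a - 1) ≤ (n : ℝ) ^ a / a := by
  induction n with
  | zero => simp [ha0.ne']
  | succ n ih =>
    have hn : (0 : ℝ) < n + 1 := by positivity
    have bernoulli : (n / (n + 1) : ℝ) ^ a ≤ 1 - a / (n + 1) := by
      have h := rpow_one_add_le_one_add_mul_self (s := -1 / (n + 1 : ℝ))
        (by rw [le_div_iff₀ hn]; linarith [n.cast_nonneg (α := ℝ)]) ha0.le ha1
      convert h using 2 <;> field_simp <;> ring
    have key : (n : ℝ) ^ a ≤ (n + 1) ^ a - a * (n + 1 : ℝ) ^ (a - 1) := by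
      rw [Real.div_rpow n.cast_nonneg hn.le, div_le_iff₀ (by positivity)] at bernoulli
      rw [Real.rpow_sub_one hn.ne']
      exact bernoulli.trans_eq (by ring)
    calc ∑ k ∈ Finset.range (n + 1), (k + 1 : ℝ) ^ (a - 1)
      _ ≤ (n : ℝ) ^ a / a + (n + 1 : ℝ) ^ (a - 1) := by rw [Finset.sum_range_succ]; gcongr
      _ ≤ ((n + 1) ^ a - a * (n + 1 : ℝ) ^ (a - 1)) / a + (n + 1 : ℝ) ^ (a - 1) := by gcongr
      _ = ((n + 1 : ℕ) : ℝ) ^ a / a := by push_cast; field_simp; ring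

variable {μ : Measure ℝ} [IsProbabilityMeasure μ]

lemma lintegral_maxLaw_le (h : IsCentered μ 1) (n : ℕ) :
    ∫⁻ x, ENNReal.ofReal x ∂maxLaw μ n ≤ ENNReal.ofReal (2 * √n) := by
  rcases n with _ | n
  · simp [maxLaw]
  have step (k : ℕ) : (k + 1 : ℝ≥0∞)⁻¹ * ∫⁻ x, ENNReal.ofReal x ∂convPow μ (k + 1) ≤
      ENNReal.ofReal ((k + 1 : ℝ) ^ (1 / 2 - 1 : ℝ)) := by
    calc (k + 1 : ℝ≥0∞)⁻¹ * ∫⁻ x, ENNReal.ofReal x ∂convPow μ (k + 1)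
      _ ≤ (k + 1 : ℝ≥0∞)⁻¹ * ENNReal.ofReal √(k + 1) := by
        gcongr
        simpa using (h.convPow (k + 1)).lintegral_ofReal_le
      _ = ENNReal.ofReal ((k + 1 : ℝ) ^ (1 / 2 - 1 : ℝ)) := by
        rw [Real.rpow_sub_one (by positivity), ← Real.sqrt_eq_rpow, div_eq_inv_mul,
          ENNReal.ofReal_mul (by positivity), ENNReal.ofReal_inv_of_pos (by positivity)]
        norm_cast
  have total := congrArg (fun ν => ν univ) (posWeighted_maxLaw_succ (μ := μ) n)
  simp only [Measure.finsetSum_apply, Measure.smul_apply, smul_eq_mul, conv_apply .univ,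
    preimage_univ, measure_univ, lintegral_one, posWeighted, withDensity_apply _ .univ,
    Measure.restrict_univ] at total
  rw [total, Finset.Nat.sum_antidiagonal_eq_sum_range_succ_mk]
  refine (Finset.sum_le_sum fun k _ => step k).trans ?_
  rw [← ENNReal.ofReal_sum_of_nonneg fun _ _ => by positivity]
  refine ENNReal.ofReal_le_ofReal
    ((sum_range_rpow_sub_one_le one_half_pos (by norm_num) _).trans_eq ?_)
  rw [← Real.sqrt_eq_rpow]
  ring

lemma measureReal_maxLaw_Ioi_le (h : IsCentered μ 1) {n : ℕ} (hn : n ≠ 0) {x : ℝ} (hx : 0 < x) :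
    (maxLaw μ n).real (Ioi (x * √n)) ≤ 2 / x := by
  have hn' : 0 < √n := by positivity
  have markov := mul_meas_ge_le_lintegral (μ := maxLaw μ n) ENNReal.measurable_ofReal
    (ENNReal.ofReal (x * √n))
  have hsub : Ioi (x * √n) ⊆ {y | ENNReal.ofReal (x * √n) ≤ ENNReal.ofReal y} :=
    fun y hy => ENNReal.ofReal_le_ofReal (mem_Ioi.1 hy).le
  have := ENNReal.toReal_mono (by finiteness) ((mul_le_mul_right (measure_mono hsub) _).trans
    (markov.trans (lintegral_maxLaw_le h n)))
  rw [ENNReal.toReal_mul, ENNReal.toReal_ofReal (by positivity), ENNReal.toReal_ofReal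
    (by positivity), ← measureReal_def] at this
  rw [le_div_iff₀ hx]
  nlinarith

end Moments

section CentralLimit

variable {μ : Measure ℝ} [IsProbabilityMeasure μ]

lemma charFun_convPow (k : ℕ) (t : ℝ) : charFun (convPow μ k) t = charFun μ t ^ k := by
  induction k with
  | zero => simp [convPow, charFun_apply]
  | succ k ih => rw [convPow, charFun_conv, ih, pow_succ']

lemma tendsto_convPow_preimage_div_sqrt (h : IsCentered μ 1) {s : Set ℝ} (hs : MeasurableSet s)
    (hs' : gaussianReal 0 1 (frontier s) = 0) :
    Tendsto (fun n : ℕ => (convPow μ n).real ((· / √n) ⁻¹' s)) atTop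
      (nhds ((gaussianReal 0 1).real s)) := by
  let P (n : ℕ) : ProbabilityMeasure ℝ :=
    ⟨(convPow μ n).map ((√n)⁻¹ * ·), Measure.isProbabilityMeasure_map (by fun_prop)⟩
  have hP : Tendsto P atTop (nhds ⟨gaussianReal 0 1, inferInstance⟩) := by
    refine ProbabilityMeasure.tendsto_iff_tendsto_charFun.2 fun t => ?_
    have := tendsto_charFun_inv_sqrt_mul_pow (P := μ) (X := id) aemeasurable_id h.integral_id
      h.integral_sq t
    simpa [P, charFun_map_mul, charFun_convPow, charFun_gaussianReal, neg_div] using this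
  have := (ENNReal.tendsto_toReal (measure_ne_top (gaussianReal 0 1) s)).comp
    (ProbabilityMeasure.tendsto_measure_of_null_frontier_of_tendsto' hP hs')
  refine this.congr fun n => ?_
  simp only [P, Function.comp_apply, ProbabilityMeasure.coe_mk]
  rw [Measure.map_apply (by fun_prop) hs]
  simp [measureReal_def, div_eq_inv_mul]

lemma tendsto_convPow_Ioi (h : IsCentered μ 1) (x : ℝ) :
    Tendsto (fun n : ℕ => (convPow μ n).real (Ioi (x * √n))) atTop
      (nhds ((gaussianReal 0 1).real (Ioi x))) := by
  have := nullSingletonClass_gaussianReal (μ := 0) (one_ne_zero (α := NNReal))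
  refine (tendsto_convPow_preimage_div_sqrt h measurableSet_Ioi (by simp)).congr' ?_
  filter_upwards [eventually_gt_atTop 0] with n hn
  congr 1
  ext y
  simp [lt_div_iff₀ (Real.sqrt_pos.2 (Nat.cast_pos.2 hn))]

lemma tendsto_convPow_Iic (h : IsCentered μ 1) (x : ℝ) :
    Tendsto (fun n : ℕ => (convPow μ n).real (Iic (x * √n))) atTop
      (nhds ((gaussianReal 0 1).real (Iic x))) := by
  have := nullSingletonClass_gaussianReal (μ := 0) (one_ne_zero (α := NNReal))
  refine (tendsto_convPow_preimage_div_sqrt h measurableSet_Iic (by simp)).congr' ?_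
  filter_upwards [eventually_gt_atTop 0] with n hn
  congr 1
  ext y
  simp [div_le_iff₀ (Real.sqrt_pos.2 (Nat.cast_pos.2 hn))]

lemma gaussianReal_real_Ioi_zero : (gaussianReal 0 1).real (Ioi 0) = 1 / 2 := by
  have := nullSingletonClass_gaussianReal (μ := 0) (one_ne_zero (α := NNReal))
  have symm : (gaussianReal 0 1).real (Iic 0) = (gaussianReal 0 1).real (Ioi 0) := by
    conv_rhs => rw [← neg_zero, ← gaussianReal_map_neg,
      map_measureReal_apply (by fun_prop) measurableSet_Ioi]
    exact measureReal_congr (by simpa using Iio_ae_eq_Iic.symm)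
  have := probReal_compl_eq_one_sub (μ := gaussianReal 0 1) (measurableSet_Ioi (a := (0 : ℝ)))
  rw [compl_Ioi, symm] at this
  linarith

lemma gaussianReal_real_Iic_zero : (gaussianReal 0 1).real (Iic 0) = 1 / 2 := by
  have := probReal_compl_eq_one_sub (μ := gaussianReal 0 1) (measurableSet_Ioi (a := (0 : ℝ)))
  rw [compl_Ioi, gaussianReal_real_Ioi_zero] at this
  linarith

lemma exists_eventually_convPow_Iic (h : IsCentered μ 1) :
    ∃ c > 0, ∀ᶠ m : ℕ in atTop, (convPow μ m).real (Iic 0) ≤ 3 / 4 ∧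
      c ≤ (convPow μ m).real (Iic (-√m)) := by
  have hpos : 0 < (gaussianReal 0 1).real (Iic (-1)) := by
    refine ENNReal.toReal_pos (fun h0 => ?_) (by finiteness)
    simpa using gaussianReal_absolutelyContinuous' 0 (one_ne_zero (α := NNReal)) h0
  have h0 := tendsto_convPow_Iic h 0
  rw [gaussianReal_real_Iic_zero] at h0
  refine ⟨_, half_pos hpos, ?_⟩
  filter_upwards [h0.eventually_le_const (by norm_num : (1 / 2 : ℝ) < 3 / 4),
    (tendsto_convPow_Iic h (-1)).eventually_const_le (half_lt_self hpos)] with m hm0 hm1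
  simpa using And.intro hm0 hm1

end CentralLimit

section Reflection

open Measure

variable {μ : Measure ℝ}

lemma maxLaw_Ioi_of_neg [IsProbabilityMeasure μ] (n : ℕ) {u : ℝ} (hu : u < 0) :
    maxLaw μ n (Ioi u) = 1 := by
  rw [← prob_compl_eq_zero_iff measurableSet_Ioi, compl_Ioi]
  exact maxLaw_of_subset_Iio (Iic_subset_Iio.2 hu) n

variable [IsProbabilityMeasure μ]

lemma maxLaw_succ_Ioi {u : ℝ} (hu : 0 ≤ u) (n : ℕ) :
    maxLaw μ (n + 1) (Ioi u) = ∫⁻ x, maxLaw μ n (Ioi (u - x)) ∂μ := by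
  rw [maxLaw, posPartLaw_apply_of_subset_Ioi measurableSet_Ioi (Ioi_subset_Ioi hu),
    conv_apply measurableSet_Ioi]
  simp_rw [preimage_const_add_Ioi]

lemma convPow_succ_Ioi (n : ℕ) (u : ℝ) :
    convPow μ (n + 1) (Ioi u) = ∫⁻ x, convPow μ n (Ioi (u - x)) ∂μ := by
  rw [convPow, conv_apply measurableSet_Ioi]
  simp_rw [preimage_const_add_Ioi]

-- Once the walk has passed level `u`, it ends above `u - h` with probability at least `c`.
lemma mul_maxLaw_Ioi_le {c : ℝ≥0∞} {h : ℝ} {n : ℕ} (hc : ∀ j ≤ n, c ≤ convPow μ j (Ioi (-h)))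
    (u : ℝ) : c * maxLaw μ n (Ioi u) ≤ convPow μ n (Ioi (u - h)) := by
  induction n generalizing u with
  | zero =>
    rcases lt_or_ge u 0 with hu | hu
    · exact (mul_le_of_le_one_right' prob_le_one).trans ((hc 0 le_rfl).trans
        (measure_mono (Ioi_subset_Ioi (by linarith))))
    · simp [maxLaw, hu]
  | succ n ih =>
    rcases lt_or_ge u 0 with hu | hu
    · exact (mul_le_of_le_one_right' prob_le_one).trans ((hc _ le_rfl).trans
        (measure_mono (Ioi_subset_Ioi (by linarith))))
    · rw [maxLaw_succ_Ioi hu, convPow_succ_Ioi, ← lintegral_const_mul _ (Monotone.measurable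
        fun x y hxy => measure_mono (Ioi_subset_Ioi (by linarith)))]
      refine lintegral_mono fun x => (ih (fun j hj => hc j (by omega)) (u - x)).trans_eq ?_
      rw [sub_right_comm]

-- To end above `u + h`, the walk either passes `u` by a step of size more than `h / 2`, or has to
-- climb by more than `h / 2` after its passage.
lemma convPow_Ioi_add_le {d : ℝ≥0∞} {h : ℝ} (hh : 0 ≤ h) {n : ℕ}
    (hd : ∀ j ≤ n, convPow μ j (Ioi (h / 2)) ≤ d) {u : ℝ} (hu : 0 ≤ u) :
    convPow μ n (Ioi (u + h)) ≤ d * maxLaw μ n (Ioi u) + n * μ (Ioi (h / 2)) := by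
  induction n generalizing u with
  | zero => simp [convPow, add_nonneg hu hh]
  | succ n ih =>
    have split : ((n + 1 : ℕ) : ℝ≥0∞) * μ (Ioi (h / 2)) =
        ∫⁻ x, (n * μ (Ioi (h / 2)) + (Ioi (h / 2)).indicator 1 x) ∂μ := by
      rw [lintegral_add_left measurable_const, lintegral_indicator_one measurableSet_Ioi]
      simp [add_mul]
    have hmeas : Measurable fun x => maxLaw μ n (Ioi (u - x)) :=
      Monotone.measurable fun x y hxy => measure_mono (Ioi_subset_Ioi (by linarith))
    rw [maxLaw_succ_Ioi hu, convPow_succ_Ioi, split, ← lintegral_const_mul _ hmeas,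
      ← lintegral_add_left (hmeas.const_mul d)]
    refine lintegral_mono fun x => ?_
    rcases le_or_gt x u with below | above
    · rw [add_sub_right_comm, ← add_assoc]
      exact (ih (fun j hj => hd j (by omega)) (sub_nonneg.2 below)).trans le_self_add
    rcases le_or_gt x (u + h / 2) with short | long
    · rw [maxLaw_Ioi_of_neg n (by linarith), mul_one]
      exact ((measure_mono (Ioi_subset_Ioi (by linarith))).trans (hd n (by omega))).trans
        le_self_add
    · rw [indicator_of_mem (by rw [mem_Ioi]; linarith), ← add_assoc]
      exact prob_le_one.trans le_add_self

lemma tendsto_nat_mul_real_Ioi_sqrt (hμ : Integrable (fun x => x ^ 2) μ) {ε : ℝ} (hε : 0 < ε) :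
    Tendsto (fun n : ℕ => n * μ.real (Ioi (ε * √n))) atTop (nhds 0) := by
  have tail : Tendsto (fun n : ℕ => (ε ^ 2)⁻¹ * ∫ x in Ioi (ε * √n), x ^ 2 ∂μ) atTop (nhds 0) := by
    have h := tendsto_setIntegral_of_antitone (s := fun n : ℕ => Ioi (ε * √n))
      (fun _ => measurableSet_Ioi)
      (fun m n hmn => Ioi_subset_Ioi (by gcongr)) ⟨0, hμ.integrableOn⟩
    have empty : ⋂ n : ℕ, Ioi (ε * √n) = ∅ := by
      have hlim : Tendsto (fun n : ℕ => ε * √n) atTop atTop :=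
        (Real.tendsto_sqrt_atTop.comp tendsto_natCast_atTop_atTop).const_mul_atTop hε
      refine eq_empty_of_forall_notMem fun x hx => ?_
      obtain ⟨n, hn⟩ := (hlim.eventually_ge_atTop x).exists
      exact hn.not_gt (mem_iInter.1 hx n)
    simpa [empty] using h.const_mul (ε ^ 2)⁻¹
  refine squeeze_zero (fun n => by positivity) (fun n => ?_) tail
  rw [le_inv_mul_iff₀ (by positivity), mul_comm (n : ℝ), ← mul_assoc, mul_right_comm]
  calc ε ^ 2 * n * μ.real (Ioi (ε * √n)) = ∫ x in Ioi (ε * √n), (ε * √n) ^ 2 ∂μ := by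
        simp [mul_pow, mul_comm]
    _ ≤ ∫ x in Ioi (ε * √n), x ^ 2 ∂μ := by
        refine setIntegral_mono_on (integrable_const _).integrableOn hμ.integrableOn
          measurableSet_Ioi fun x hx => ?_
        have := (mem_Ioi.1 hx).le
        gcongr

lemma eventually_forall_le_convPow_inter_le (h : IsCentered μ 1) {s : Set ℝ}
    (hs : Tendsto (fun n : ℕ => (convPow μ n).real s) atTop (nhds (1 / 2))) {ε : ℝ} (hε : 0 < ε) :
    ∀ᶠ n : ℕ in atTop, ∀ j ≤ n, (convPow μ j).real (s ∩ {x | ε * √n ≤ |x|}) ≤ 1 / 2 + ε := by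
  obtain ⟨K, hK⟩ := eventually_atTop.1 (hs.eventually_le_const (lt_add_of_pos_right _ hε))
  have hlarge : Tendsto (fun n : ℕ => (n : ℝ) * (ε ^ 2 / 2)) atTop atTop :=
    tendsto_natCast_atTop_atTop.atTop_mul_const (by positivity)
  filter_upwards [hlarge.eventually_ge_atTop K, eventually_gt_atTop 0] with n hn hn0 j _
  rcases lt_or_ge j K with hjK | hjK
  · have chebyshev := (h.convPow j).measureReal_le_abs_le (a := ε * √n) (by positivity)
    refine (measureReal_mono inter_subset_right).trans (chebyshev.trans ?_)
    rw [mul_pow, Real.sq_sqrt n.cast_nonneg, div_le_iff₀ (by positivity)]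
    have : (j : ℝ) ≤ K := by exact_mod_cast hjK.le
    nlinarith [show (0 : ℝ) ≤ ε * (ε ^ 2 * n) by positivity]
  · exact (measureReal_mono inter_subset_left).trans (hK j hjK)

lemma eventually_forall_le_convPow_Ioi_le (h : IsCentered μ 1) {ε : ℝ} (hε : 0 < ε) :
    ∀ᶠ n : ℕ in atTop, ∀ j ≤ n, (convPow μ j).real (Ioi (ε * √n)) ≤ 1 / 2 + ε := by
  have half := tendsto_convPow_Ioi h 0
  rw [gaussianReal_real_Ioi_zero] at half
  simp only [zero_mul] at half
  filter_upwards [eventually_forall_le_convPow_inter_le h half hε] with n hn j hj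
  refine (measureReal_mono fun x hx => ?_).trans (hn j hj)
  have : 0 ≤ ε * √n := by positivity
  exact ⟨this.trans_lt hx, (le_of_lt hx).trans (le_abs_self x)⟩

lemma eventually_forall_le_le_convPow_Ioi (h : IsCentered μ 1) {ε : ℝ} (hε : 0 < ε) :
    ∀ᶠ n : ℕ in atTop, ∀ j ≤ n, 1 / 2 - ε ≤ (convPow μ j).real (Ioi (-(ε * √n))) := by
  have half := tendsto_convPow_Iic h 0
  rw [gaussianReal_real_Iic_zero] at half
  simp only [zero_mul] at half
  filter_upwards [eventually_forall_le_convPow_inter_le h half hε] with n hn j hj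
  have compl := probReal_compl_eq_one_sub (μ := convPow μ j) (measurableSet_Ioi (a := -(ε * √n)))
  have : (convPow μ j).real (Ioi (-(ε * √n)))ᶜ ≤ 1 / 2 + ε := by
    refine (measureReal_mono fun x hx => ?_).trans (hn j hj)
    rw [compl_Ioi, mem_Iic] at hx
    have : 0 ≤ ε * √n := by positivity
    exact ⟨by rw [mem_Iic]; linarith, by simpa using (le_neg.1 hx).trans (neg_le_abs x)⟩
  linarith

lemma eventually_mul_maxLaw_Ioi_le (h : IsCentered μ 1) {ε : ℝ} (hε : 0 < ε) (x : ℝ) :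
    ∀ᶠ n : ℕ in atTop, (1 / 2 - ε) * (maxLaw μ n).real (Ioi (x * √n)) ≤
      (convPow μ n).real (Ioi ((x - ε) * √n)) := by
  filter_upwards [eventually_forall_le_le_convPow_Ioi h hε] with n hn
  have := ENNReal.toReal_mono (by finiteness) (mul_maxLaw_Ioi_le (c := .ofReal (1 / 2 - ε))
    (fun j hj => ENNReal.ofReal_le_of_le_toReal (hn j hj)) (x * √n))
  rw [ENNReal.toReal_mul, ENNReal.toReal_ofReal', ← sub_mul] at this
  exact (mul_le_mul_of_nonneg_right (le_max_left _ _) measureReal_nonneg).trans this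

lemma eventually_convPow_Ioi_le (h : IsCentered μ 1) {ε : ℝ} (hε : 0 < ε) {x : ℝ} (hx : 0 ≤ x) :
    ∀ᶠ n : ℕ in atTop, (convPow μ n).real (Ioi ((x + ε) * √n)) ≤
      (1 / 2 + ε) * (maxLaw μ n).real (Ioi (x * √n)) + ε := by
  filter_upwards [eventually_forall_le_convPow_Ioi_le h (half_pos hε),
    (tendsto_nat_mul_real_Ioi_sqrt h.integrable_sq (half_pos hε)).eventually_le_const hε]
    with n hn htail
  have key := convPow_Ioi_add_le (μ := μ) (n := n) (d := .ofReal (1 / 2 + ε / 2))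
    (h := ε * √n) (by positivity) (fun j hj => by
      rw [ENNReal.le_ofReal_iff_toReal_le (by finiteness) (by positivity), mul_div_right_comm]
      exact hn j hj) (u := x * √n) (by positivity)
  have := ENNReal.toReal_mono (by finiteness) key
  rw [ENNReal.toReal_add (by finiteness) (by finiteness), ENNReal.toReal_mul, ENNReal.toReal_mul,
    ENNReal.toReal_ofReal (by positivity), ENNReal.toReal_natCast, mul_div_right_comm,
    ← add_mul] at this
  refine this.trans (add_le_add ?_ htail)
  exact mul_le_mul_of_nonneg_right (by linarith) measureReal_nonneg

lemma continuous_measureReal_Ioi (ν : Measure ℝ) [IsFiniteMeasure ν] [NullSingletonClass ν] :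
    Continuous fun x => ν.real (Ioi x) := by
  have h : (fun x => ν.real (Ioi x)) = fun x => ∫ y, (Ioi x).indicator 1 y ∂ν :=
    funext fun x => (integral_indicator_one measurableSet_Ioi).symm
  rw [h]
  refine continuous_iff_continuousAt.2 fun x => continuousAt_of_dominated (bound := 1)
    (.of_forall fun y => (measurable_one.indicator measurableSet_Ioi).aestronglyMeasurable)
    (.of_forall fun y => .of_forall fun z => ?_) (integrable_const 1) ?_
  · by_cases hz : z ∈ Ioi y <;> simp [hz]
  · filter_upwards [measure_eq_zero_iff_ae_notMem.1 (measure_singleton (μ := ν) x)] with z hz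
    rcases lt_or_gt_of_ne hz with hzx | hzx
    · exact (continuousAt_const (y := (0 : ℝ))).congr ((eventually_gt_nhds hzx).mono
        fun y hy => (indicator_of_notMem (notMem_Ioi.2 hy.le) _).symm)
    · exact (continuousAt_const (y := (1 : ℝ))).congr ((eventually_lt_nhds hzx).mono
        fun y hy => (indicator_of_mem (mem_Ioi.2 hy) (1 : ℝ → ℝ)).symm)

theorem tendsto_maxLaw_Ioi (h : IsCentered μ 1) {x : ℝ} (hx : 0 ≤ x) :
    Tendsto (fun n : ℕ => (maxLaw μ n).real (Ioi (x * √n))) atTop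
      (nhds (2 * (gaussianReal 0 1).real (Ioi x))) := by
  have := nullSingletonClass_gaussianReal (μ := 0) (v := 1) one_ne_zero
  have hcont := continuous_measureReal_Ioi (gaussianReal 0 1)
  refine tendsto_order.2 ⟨fun a ha => ?_, fun a ha => ?_⟩
  · have near : Tendsto (fun ε => 2 * (gaussianReal 0 1).real (Ioi (x + ε)) - 6 * ε)
        (nhdsWithin 0 (Ioi 0)) (nhds (2 * (gaussianReal 0 1).real (Ioi x))) := by
      refine (Continuous.tendsto' ?_ 0 _ (by simp)).mono_left nhdsWithin_le_nhds
      exact ((hcont.comp (continuous_const_add x)).const_mul 2).sub (continuous_const_mul 6)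
    obtain ⟨ε, haε, hε⟩ := ((near.eventually_const_lt ha).and self_mem_nhdsWithin).exists
    filter_upwards [eventually_convPow_Ioi_le h hε hx, (tendsto_convPow_Ioi h (x + ε)).eventually
      (eventually_gt_nhds (sub_lt_self _ hε))] with n hn hclt
    have : (maxLaw μ n).real (Ioi (x * √n)) ≤ 1 := measureReal_le_one
    nlinarith
  · have near : Tendsto (fun ε => 2 * (gaussianReal 0 1).real (Ioi (x - ε)) + 4 * ε)
        (nhdsWithin 0 (Ioi 0)) (nhds (2 * (gaussianReal 0 1).real (Ioi x))) := by
      refine (Continuous.tendsto' ?_ 0 _ (by simp)).mono_left nhdsWithin_le_nhds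
      exact ((hcont.comp (continuous_const.sub continuous_id)).const_mul 2).add
        (continuous_const_mul 4)
    obtain ⟨ε, haε, hε⟩ := ((near.eventually_lt_const ha).and self_mem_nhdsWithin).exists
    filter_upwards [eventually_mul_maxLaw_Ioi_le h hε x, (tendsto_convPow_Ioi h (x - ε)).eventually
      (eventually_lt_nhds (lt_add_of_pos_right _ hε))] with n hn hclt
    have : (maxLaw μ n).real (Ioi (x * √n)) ≤ 1 := measureReal_le_one
    nlinarith

end Reflection

section Fourier

open scoped FourierTransform SchwartzMap ContDiff

lemma memLp_two_fourier {f : ℝ → ℂ} (hf : Integrable f) (hf2 : MemLp f 2) : MemLp (𝓕 f) 2 := by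
  set g : Lp ℂ 2 (volume : Measure ℝ) := 𝓕 (hf2.toLp f)
  have hcont : Continuous (𝓕 f) :=
    VectorFourier.fourierIntegral_continuous (μ := volume) (L := innerₗ ℝ)
      Real.continuous_fourierChar continuous_inner hf
  refine (memLp_congr_ae ?_).2 (Lp.memLp g)
  refine ae_eq_of_integral_contDiff_smul_eq hcont.locallyIntegrable
    ((Lp.memLp g).locallyIntegrable one_le_two) fun ψ hψ hsupp => ?_
  have hsupp' : HasCompactSupport fun x => (ψ x : ℂ) := hsupp.comp_left (g := Complex.ofReal) rfl
  set S : 𝓢(ℝ, ℂ) := hsupp'.toSchwartzMap (Complex.ofRealCLM.contDiff.comp hψ)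
  calc ∫ x, ψ x • 𝓕 f x = ∫ x, S x • 𝓕 f x := rfl
    _ = ∫ x, (𝓕 S : 𝓢(ℝ, ℂ)) x • f x := by
        have flip : (innerₗ ℝ : ℝ →ₗ[ℝ] ℝ →ₗ[ℝ] ℝ).flip = innerₗ ℝ := by ext; simp
        have := VectorFourier.integral_fourierIntegral_smul_eq_flip (L := innerₗ ℝ)
          Real.continuous_fourierChar (by exact continuous_inner) (S.integrable (μ := volume)) hf
        rw [flip] at this
        exact this.symm
    _ = ∫ x, (𝓕 S : 𝓢(ℝ, ℂ)) x • hf2.toLp f x :=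
        integral_congr_ae (by filter_upwards [hf2.coeFn_toLp] with x hx; rw [hx])
    _ = ∫ x, S x • g x := by
        rw [← Lp.toTemperedDistribution_apply, ← TemperedDistribution.fourier_apply,
          Lp.fourier_toTemperedDistribution_eq, Lp.toTemperedDistribution_apply]
    _ = ∫ x, ψ x • g x := rfl

end Fourier

lemma continuous_integral_sub_mul {p f : ℝ → ℝ} {M : ℝ} (hp : AEStronglyMeasurable p)
    (hpM : ∀ x, |p x| ≤ M) (hf : Integrable f) : Continuous fun z => ∫ u, p (z - u) * f u := by
  refine continuous_of_uniform_approx_of_continuous ?_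
  intro s hs
  obtain ⟨ε, hε, hεs⟩ := Metric.mem_uniformity_dist.1 hs
  have hM : 0 ≤ M := (abs_nonneg _).trans (hpM 0)
  obtain ⟨g, hg, hfg, hgcont, hgint⟩ := hf.exists_hasCompactSupport_integral_sub_le
    (ε := ε / (2 * (M + 1))) (by positivity)
  have hint : ∀ {h : ℝ → ℝ}, Integrable h → ∀ z, Integrable fun u => p (z - u) * h u :=
    fun hh z => hh.bdd_mul (c := M)
      (hp.comp_measurePreserving (Measure.measurePreserving_sub_left volume z))
      (.of_forall fun u => hpM _)
  refine ⟨fun z => ∫ u, p (z - u) * g u, ?_, fun z => hεs ?_⟩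
  · have hploc : LocallyIntegrable p := by
      refine (locallyIntegrable_const M).mono hp (.of_forall fun x => ?_)
      exact (hpM x).trans (le_abs_self M)
    have := hg.continuous_convolution_left (ContinuousLinearMap.mul ℝ ℝ) hgcont hploc
    refine this.congr fun z => integral_congr_ae (.of_forall fun u => mul_comm _ _)
  · rw [Real.dist_eq, ← integral_sub (hint hf z) (hint hgint z)]
    calc |∫ u, p (z - u) * f u - p (z - u) * g u| ≤ ∫ u, M * ‖f u - g u‖ := by
          refine norm_integral_le_of_norm_le (f := fun u => p (z - u) * f u - p (z - u) * g u)
            (g := fun u => M * ‖f u - g u‖)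
            ((hf.sub hgint).norm.const_mul M) (.of_forall fun u => ?_)
          rw [← mul_sub, norm_mul (p (z - u))]
          exact mul_le_mul_of_nonneg_right (hpM _) (norm_nonneg _)
      _ ≤ M * (ε / (2 * (M + 1))) := by
          rw [integral_const_mul]
          exact mul_le_mul_of_nonneg_left hfg hM
      _ < ε := by
        rw [← mul_div_assoc, div_lt_iff₀ (by positivity)]
        nlinarith

section CharFun

variable {μ : Measure ℝ} [IsProbabilityMeasure μ]

lemma exists_norm_charFun_le_exp (h : IsCentered μ 1) :
    ∃ r > 0, ∀ ξ : ℝ, |ξ| ≤ r → ‖charFun μ (2 * Real.pi * ξ)‖ ≤ Real.exp (-ξ ^ 2) := by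
  have taylor := taylor_charFun_two (P := μ) (X := id) aemeasurable_id h.integral_id h.integral_sq
  rw [Measure.map_id] at taylor
  obtain ⟨r, hr, hr'⟩ := Metric.eventually_nhds_iff.1 (taylor.def (c := 1 / 4) (by norm_num))
  refine ⟨min (r / 8) (1 / 8), by positivity, fun ξ hξ => ?_⟩
  have hpi := Real.pi_gt_three
  set t := 2 * Real.pi * ξ with ht
  have ht_le : |t| ≤ 7 * |ξ| := by
    rw [ht, abs_mul, abs_of_pos (by positivity)]
    nlinarith [abs_nonneg ξ, Real.pi_lt_d2]
  have hξr : |ξ| ≤ r / 8 := hξ.trans (min_le_left _ _)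
  have hξ1 : |ξ| ≤ 1 / 8 := hξ.trans (min_le_right _ _)
  have approx := @hr' t (by rw [Real.dist_eq, sub_zero]; linarith)
  rw [norm_pow, Real.norm_eq_abs, sq_abs] at approx
  have main : ‖(1 - (t : ℂ) ^ 2 / 2)‖ = 1 - t ^ 2 / 2 := by
    rw [show (1 - (t : ℂ) ^ 2 / 2) = ((1 - t ^ 2 / 2 : ℝ) : ℂ) by push_cast; ring,
      Complex.norm_real, Real.norm_of_nonneg]
    nlinarith [abs_nonneg t, sq_abs t]
  have tri := norm_le_norm_add_norm_sub' (charFun μ t) (1 - (t : ℂ) ^ 2 / 2)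
  have hξt : ξ ^ 2 ≤ t ^ 2 / 4 := by
    rw [ht]; nlinarith [mul_nonneg (sq_nonneg ξ) (by nlinarith : 0 ≤ Real.pi ^ 2 - 1)]
  linarith [Real.add_one_le_exp (-ξ ^ 2)]

lemma countable_setOf_exp_mul_I_eq {t : ℝ} (ht : t ≠ 0) (c : ℂ) :
    {x : ℝ | Complex.exp (t * x * Complex.I) = c}.Countable := by
  rcases eq_empty_or_nonempty {x : ℝ | Complex.exp (t * x * Complex.I) = c} with he | ⟨y, hy⟩
  · simp [he]
  · refine (countable_range fun n : ℤ => y + n * (2 * Real.pi) / t).mono fun x hx => ?_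
    obtain ⟨n, hn⟩ := Complex.exp_eq_exp_iff_exists_int.1 (Eq.trans hx (Eq.symm hy))
    have him : t * x = t * y + n * (2 * Real.pi) := by simpa using congrArg Complex.im hn
    exact ⟨n, by field_simp; linarith⟩

lemma norm_charFun_lt_one (hμ : μ ≪ volume) {t : ℝ} (ht : t ≠ 0) : ‖charFun μ t‖ < 1 := by
  have hnorm (x : ℝ) : ‖Complex.exp (t * x * Complex.I)‖ ≤ 1 := by
    rw [← Complex.ofReal_mul, Complex.norm_exp_ofReal_mul_I]
  rw [charFun_apply_real]
  rcases ae_eq_const_or_norm_integral_lt_of_norm_le_const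
    (μ := μ) (.of_forall hnorm) with hconst | hlt
  · have hnull := hμ ((countable_setOf_exp_mul_I_eq ht
      (⨍ x, Complex.exp (t * x * Complex.I) ∂μ)).measure_zero volume)
    have : ∀ᵐ _ ∂μ, False := by
      filter_upwards [hconst, measure_eq_zero_iff_ae_notMem.1 hnull] with x hx hx'
      exact hx' hx
    simp [IsProbabilityMeasure.ne_zero μ] at this
  · simpa using hlt

lemma exists_pow_sub_two_le {ρ : ℝ} (h0 : 0 < ρ) (h1 : ρ < 1) :
    ∃ C > 0, ∀ k : ℕ, 2 ≤ k → ρ ^ (k - 2) ≤ C / k := by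
  obtain ⟨B, hB⟩ := (tendsto_self_mul_const_pow_of_lt_one h0.le h1).bddAbove_range
  refine ⟨max B 1 / ρ ^ 2, by positivity, fun k hk => ?_⟩
  rw [le_div_iff₀ (by positivity), le_div_iff₀ (by positivity)]
  calc ρ ^ (k - 2) * k * ρ ^ 2 = k * ρ ^ (k - 2 + 2) := by ring
    _ = k * ρ ^ k := by rw [Nat.sub_add_cancel hk]
    _ ≤ max B 1 := (hB (mem_range_self k)).trans (le_max_left _ _)

end CharFun

section BoundedDensity

/-- The measure `μ` has Lebesgue density `p`, with `0 ≤ p ≤ M` everywhere. -/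
structure HasBoundedDensity (μ : Measure ℝ) (p : ℝ → ℝ) (M : ℝ) : Prop where
  measurable : Measurable p
  nonneg : ∀ x, 0 ≤ p x
  le : ∀ x, p x ≤ M
  eq_withDensity : μ = volume.withDensity fun x => ENNReal.ofReal (p x)

/-- The density at `z` of the sum of two independent variables, one with density `p` and one with
law `ν`. -/
noncomputable def convDensity (p : ℝ → ℝ) (ν : Measure ℝ) (z : ℝ) : ℝ :=
  ∫ u, p (z - u) ∂ν

lemma conv_withDensity {ν : Measure ℝ} [SFinite ν] {f : ℝ → ℝ≥0∞} (hf : Measurable f) :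
    ν ∗ volume.withDensity f = volume.withDensity fun z => ∫⁻ u, f (z - u) ∂ν := by
  ext s hs
  rw [conv_apply hs, withDensity_apply _ hs, lintegral_lintegral_swap (by fun_prop)]
  refine lintegral_congr fun u => ?_
  rw [withDensity_apply _ (hs.preimage (by fun_prop)),
    ← (measurePreserving_sub_right volume u).setLIntegral_comp_preimage_emb
      (MeasurableEquiv.subRight u).measurableEmbedding]
  congr 2
  ext x; simp

namespace HasBoundedDensity

variable {μ ν : Measure ℝ} {p q : ℝ → ℝ} {M N : ℝ}

lemma bound_nonneg (h : HasBoundedDensity μ p M) : 0 ≤ M := (h.nonneg 0).trans (h.le 0)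

lemma le_smul_volume (h : HasBoundedDensity μ p M) : μ ≤ ENNReal.ofReal M • volume := by
  rw [h.eq_withDensity, ← withDensity_const]
  exact withDensity_mono (.of_forall fun x => ENNReal.ofReal_le_ofReal (h.le x))

lemma absolutelyContinuous (h : HasBoundedDensity μ p M) : μ ≪ volume :=
  h.eq_withDensity ▸ withDensity_absolutelyContinuous _ _

lemma integral_eq {E : Type*} [NormedAddCommGroup E] [NormedSpace ℝ E]
    (h : HasBoundedDensity μ p M) (f : ℝ → E) : ∫ x, f x ∂μ = ∫ x, p x • f x := by
  rw [h.eq_withDensity, integral_withDensity_eq_integral_toReal_smul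
    h.measurable.ennreal_ofReal (by simp)]
  simp_rw [ENNReal.toReal_ofReal (h.nonneg _)]

lemma integrable_iff {E : Type*} [NormedAddCommGroup E] [NormedSpace ℝ E]
    (h : HasBoundedDensity μ p M) {f : ℝ → E} :
    Integrable f μ ↔ Integrable fun x => p x • f x := by
  rw [h.eq_withDensity, integrable_withDensity_iff_integrable_smul'
    h.measurable.ennreal_ofReal (by simp)]
  simp_rw [ENNReal.toReal_ofReal (h.nonneg _)]

lemma integrable [IsFiniteMeasure μ] (h : HasBoundedDensity μ p M) : Integrable p := by
  simpa using h.integrable_iff.1 (integrable_const (1 : ℝ))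

lemma integrable_comp_sub [IsFiniteMeasure ν] (h : HasBoundedDensity μ p M) (z : ℝ) :
    Integrable (fun u => p (z - u)) ν := by
  refine .of_bound (h.measurable.comp (measurable_const.sub measurable_id)).aestronglyMeasurable M
    (.of_forall fun u => ?_)
  rw [Real.norm_of_nonneg (h.nonneg _)]
  exact h.le _

lemma measurable_convDensity [SFinite ν] (h : HasBoundedDensity μ p M) :
    Measurable (convDensity p ν) := by
  have : StronglyMeasurable (Function.uncurry fun z u : ℝ => p (z - u)) :=
    (h.measurable.comp (measurable_fst.sub measurable_snd)).stronglyMeasurable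
  exact this.integral_prod_right.measurable

lemma ofReal_convDensity [IsFiniteMeasure ν] (h : HasBoundedDensity μ p M) (z : ℝ) :
    ENNReal.ofReal (convDensity p ν z) = ∫⁻ u, ENNReal.ofReal (p (z - u)) ∂ν :=
  ofReal_integral_eq_lintegral_ofReal (h.integrable_comp_sub z) (.of_forall fun _ => h.nonneg _)

lemma withDensity_conv [IsFiniteMeasure ν] (h : HasBoundedDensity μ p M) :
    ν ∗ μ = volume.withDensity fun z => ENNReal.ofReal (convDensity p ν z) := by
  simp_rw [h.eq_withDensity, h.ofReal_convDensity]
  exact conv_withDensity h.measurable.ennreal_ofReal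

lemma conv [IsProbabilityMeasure ν] (h : HasBoundedDensity μ p M) :
    HasBoundedDensity (ν ∗ μ) (convDensity p ν) M where
  measurable := h.measurable_convDensity
  nonneg z := integral_nonneg fun _ => h.nonneg _
  le z := (integral_mono (h.integrable_comp_sub z) (integrable_const M) fun _ => h.le _).trans
    (by simp)
  eq_withDensity := h.withDensity_conv

lemma continuous_convDensity [IsFiniteMeasure ν] (h : HasBoundedDensity μ p M)
    (hν : HasBoundedDensity ν q N) : Continuous (convDensity p ν) := by
  have : convDensity p ν = fun z => ∫ u, p (z - u) * q u :=
    funext fun z => (hν.integral_eq _).trans (by simp_rw [smul_eq_mul, mul_comm])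
  rw [this]
  refine continuous_integral_sub_mul h.measurable.aestronglyMeasurable (M := M) (fun x => ?_)
    hν.integrable
  rw [abs_of_nonneg (h.nonneg x)]
  exact h.le x

open scoped FourierTransform

lemma fourier_eq_charFun (h : HasBoundedDensity μ p M) (ξ : ℝ) :
    𝓕 (fun x => (p x : ℂ)) ξ = charFun μ (2 * Real.pi * -ξ) := by
  rw [charFun_apply_real, h.integral_eq, Real.fourier_eq']
  refine integral_congr_ae (.of_forall fun x => ?_)
  simp only [smul_eq_mul, Complex.real_smul]
  rw [mul_comm]
  congr 2
  simp
  ring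

lemma integrable_norm_charFun_sq [IsFiniteMeasure μ] (h : HasBoundedDensity μ p M) :
    Integrable fun ξ => ‖charFun μ (2 * Real.pi * ξ)‖ ^ 2 := by
  have hp : Integrable fun x => (p x : ℂ) := h.integrable.ofReal
  have hp2 : MemLp (fun x => (p x : ℂ)) 2 := by
    rw [memLp_two_iff_integrable_sq_norm hp.1]
    refine (h.integrable.const_mul M).mono' (by have := h.measurable; fun_prop)
      (.of_forall fun x => ?_)
    have := h.nonneg x
    rw [Real.norm_of_nonneg (by positivity), Complex.norm_real, Real.norm_of_nonneg this, sq]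
    exact mul_le_mul_of_nonneg_right (h.le x) this
  have h2 := (memLp_two_fourier hp hp2).integrable_norm_pow two_ne_zero
  simpa [h.fourier_eq_charFun] using h2.comp_neg

lemma tendsto_charFun_cocompact (h : HasBoundedDensity μ p M) :
    Tendsto (fun ξ => charFun μ (2 * Real.pi * ξ)) (cocompact ℝ) (nhds 0) := by
  have := (Real.zero_at_infty_fourier fun x => (p x : ℂ)).comp
    (Homeomorph.neg ℝ).isClosedEmbedding.tendsto_cocompact
  simpa [Function.comp_def, h.fourier_eq_charFun] using this

lemma exists_norm_charFun_le [IsProbabilityMeasure μ] (h : HasBoundedDensity μ p M) {r : ℝ}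
    (hr : 0 < r) : ∃ ρ, 0 < ρ ∧ ρ < 1 ∧ ∀ ξ : ℝ, r ≤ |ξ| → ‖charFun μ (2 * Real.pi * ξ)‖ ≤ ρ := by
  have hcont : Continuous fun ξ : ℝ => ‖charFun μ (2 * Real.pi * ξ)‖ := by
    have : Continuous (charFun μ) := continuous_charFun
    fun_prop
  have hsmall := h.tendsto_charFun_cocompact.norm.eventually_le_const (u := 1 / 2) (by simp)
  obtain ⟨K, hK, hK'⟩ := mem_cocompact.1 hsmall
  have hKr : IsCompact (K ∩ {ξ | r ≤ |ξ|}) :=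
    hK.inter_right (isClosed_le continuous_const continuous_abs)
  rcases (K ∩ {ξ | r ≤ |ξ|}).eq_empty_or_nonempty with hempty | hne
  · refine ⟨1 / 2, by norm_num, by norm_num, fun ξ hξ => hK' fun hξK => ?_⟩
    exact (hempty ▸ ⟨hξK, hξ⟩ : ξ ∈ (∅ : Set ℝ))
  · obtain ⟨η, hη, hmax⟩ := hKr.exists_isMaxOn hne hcont.continuousOn
    have hη0 : η ≠ 0 := abs_pos.1 (hr.trans_le hη.2)
    refine ⟨max (1 / 2) ‖charFun μ (2 * Real.pi * η)‖, by positivity, max_lt (by norm_num)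
      (norm_charFun_lt_one h.absolutelyContinuous (by positivity)), fun ξ hξ => ?_⟩
    by_cases hξK : ξ ∈ K
    · exact le_max_of_le_right (hmax ⟨hξK, hξ⟩)
    · exact le_max_of_le_left (hK' hξK)

lemma exists_norm_charFun_pow_le [IsProbabilityMeasure μ] (h : HasBoundedDensity μ p M)
    (hc : IsCentered μ 1) : ∃ C > 0, ∀ k : ℕ, 2 ≤ k → ∀ ξ : ℝ,
      ‖charFun μ (2 * Real.pi * ξ)‖ ^ k ≤
        Real.exp (-(k : ℝ) * ξ ^ 2) + C / k * ‖charFun μ (2 * Real.pi * ξ)‖ ^ 2 := by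
  obtain ⟨r, hr, near⟩ := exists_norm_charFun_le_exp hc
  obtain ⟨ρ, hρ0, hρ1, far⟩ := h.exists_norm_charFun_le hr
  obtain ⟨C, hC, geom⟩ := exists_pow_sub_two_le hρ0 hρ1
  refine ⟨C, hC, fun k hk ξ => ?_⟩
  rcases le_total |ξ| r with hξ | hξ
  · calc ‖charFun μ (2 * Real.pi * ξ)‖ ^ k ≤ Real.exp (-ξ ^ 2) ^ k := by gcongr; exact near ξ hξ
      _ = Real.exp (-(k : ℝ) * ξ ^ 2) := by rw [← Real.exp_nat_mul]; ring_nf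
      _ ≤ _ := le_add_of_nonneg_right (by positivity)
  · calc ‖charFun μ (2 * Real.pi * ξ)‖ ^ k
        = ‖charFun μ (2 * Real.pi * ξ)‖ ^ (k - 2) * ‖charFun μ (2 * Real.pi * ξ)‖ ^ 2 := by
          rw [← pow_add, Nat.sub_add_cancel hk]
      _ ≤ C / k * ‖charFun μ (2 * Real.pi * ξ)‖ ^ 2 := by
          gcongr
          exact (pow_le_pow_left₀ (norm_nonneg _) (far ξ hξ) _).trans (geom k hk)
      _ ≤ _ := le_add_of_nonneg_left (Real.exp_nonneg _)

end HasBoundedDensity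

end BoundedDensity

section FourierInv

open scoped FourierTransform

lemma norm_exp_mul_I_sub_exp_mul_I_le (a b : ℝ) :
    ‖Complex.exp (a * Complex.I) - Complex.exp (b * Complex.I)‖ ≤ min 2 |a - b| := by
  refine le_min ((norm_sub_le _ _).trans ?_) ?_
  · rw [Complex.norm_exp_ofReal_mul_I, Complex.norm_exp_ofReal_mul_I]
    norm_num
  · have : Complex.exp (a * Complex.I) - Complex.exp (b * Complex.I) =
        Complex.exp (b * Complex.I) * (Complex.exp (Complex.I * ((a - b : ℝ) : ℂ)) - 1) := by
      rw [mul_sub, ← Complex.exp_add, mul_one]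
      push_cast
      ring_nf
    rw [this, norm_mul, Complex.norm_exp_ofReal_mul_I, one_mul]
    exact Real.norm_exp_I_mul_ofReal_sub_one_le

lemma norm_fourierInv_sub_le {f : ℝ → ℂ} (hf : Integrable f) (z z' : ℝ) :
    ‖𝓕⁻ f z - 𝓕⁻ f z'‖ ≤ ∫ ξ, ‖f ξ‖ * min 2 (2 * Real.pi * |ξ| * |z - z'|) := by
  have hint (z : ℝ) : Integrable fun ξ : ℝ =>
      Complex.exp (↑(2 * Real.pi * inner ℝ ξ z) * Complex.I) • f ξ :=
    hf.bdd_mul (c := 1) (by fun_prop) (.of_forall fun ξ => (Complex.norm_exp_ofReal_mul_I _).le)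
  have hbound : Integrable fun ξ => ‖f ξ‖ * min 2 (2 * Real.pi * |ξ| * |z - z'|) := by
    refine hf.norm.mul_bdd (c := 2) (by fun_prop) (.of_forall fun ξ => ?_)
    rw [Real.norm_of_nonneg (by positivity)]
    exact min_le_left _ _
  rw [Real.fourierInv_eq', Real.fourierInv_eq', ← integral_sub (hint z) (hint z')]
  refine norm_integral_le_of_norm_le hbound (.of_forall fun ξ => ?_)
  rw [← sub_smul, norm_smul, mul_comm]
  refine mul_le_mul_of_nonneg_left ((norm_exp_mul_I_sub_exp_mul_I_le _ _).trans_eq ?_)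
    (norm_nonneg _)
  rw [← mul_sub, ← inner_sub_right, abs_mul, abs_of_nonneg Real.two_pi_pos.le]
  simp only [RCLike.inner_apply, conj_trivial, abs_mul]
  ring_nf

lemma abs_mul_exp_neg_mul_sq_le {m : ℝ} (hm : 0 < m) (ξ : ℝ) :
    |ξ| * Real.exp (-m * ξ ^ 2) ≤ (√m)⁻¹ * Real.exp (-(m / 2) * ξ ^ 2) := by
  have hexp : √m * |ξ| ≤ Real.exp (m / 2 * ξ ^ 2) := by
    have hsq : (√m * |ξ|) ^ 2 = m * ξ ^ 2 := by rw [mul_pow, Real.sq_sqrt hm.le, sq_abs]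
    nlinarith [Real.add_one_le_exp (m / 2 * ξ ^ 2), sq_nonneg (√m * |ξ| - 1)]
  have hsplit : Real.exp (-(m / 2) * ξ ^ 2) = Real.exp (m / 2 * ξ ^ 2) * Real.exp (-m * ξ ^ 2) := by
    rw [← Real.exp_add]
    ring_nf
  rw [hsplit, ← mul_assoc]
  gcongr
  rwa [inv_mul_eq_div, le_div_iff₀ (by positivity), mul_comm]

section GaussianMajorant

variable {f : ℝ → ℂ} {w : ℝ → ℝ} {m c : ℝ}

lemma norm_fourierInv_le_of_norm_le_gaussian (hm : 0 < m) (hw : Integrable w)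
    (hfw : ∀ ξ, ‖f ξ‖ ≤ Real.exp (-m * ξ ^ 2) + c * w ξ) (z : ℝ) :
    ‖𝓕⁻ f z‖ ≤ √(Real.pi / m) + c * ∫ ξ, w ξ := by
  have hexp := integrable_exp_neg_mul_sq hm
  rw [Real.fourierInv_eq', ← integral_gaussian, ← integral_const_mul,
    ← integral_add hexp (hw.const_mul c)]
  refine norm_integral_le_of_norm_le (hexp.add (hw.const_mul c)) (.of_forall fun ξ => ?_)
  rw [norm_smul, Complex.norm_exp_ofReal_mul_I, one_mul]
  exact hfw ξ

lemma norm_fourierInv_sub_le_of_norm_le_gaussian (hf : Integrable f) (hm : 0 < m) (hc : 0 ≤ c)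
    (hw : Integrable w) (hw0 : ∀ ξ, 0 ≤ w ξ)
    (hfw : ∀ ξ, ‖f ξ‖ ≤ Real.exp (-m * ξ ^ 2) + c * w ξ) (z z' : ℝ) :
    ‖𝓕⁻ f z - 𝓕⁻ f z'‖ ≤
      2 * Real.pi * √(2 * Real.pi) * |z - z'| / m + 2 * c * ∫ ξ, w ξ := by
  have hexp := integrable_exp_neg_mul_sq (half_pos hm)
  set A := 2 * Real.pi * |z - z'|
  have hpt (ξ : ℝ) : ‖f ξ‖ * min 2 (2 * Real.pi * |ξ| * |z - z'|) ≤
      A * (√m)⁻¹ * Real.exp (-(m / 2) * ξ ^ 2) + 2 * c * w ξ := by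
    have := hw0 ξ
    calc ‖f ξ‖ * min 2 (2 * Real.pi * |ξ| * |z - z'|)
        ≤ (Real.exp (-m * ξ ^ 2) + c * w ξ) * min 2 (2 * Real.pi * |ξ| * |z - z'|) := by
          gcongr
          exact hfw ξ
      _ ≤ Real.exp (-m * ξ ^ 2) * (2 * Real.pi * |ξ| * |z - z'|) + c * w ξ * 2 := by
          rw [add_mul]
          gcongr
          exacts [min_le_right _ _, min_le_left _ _]
      _ = A * (|ξ| * Real.exp (-m * ξ ^ 2)) + 2 * c * w ξ := by ring
      _ ≤ _ := by
          rw [mul_assoc A]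
          have := mul_le_mul_of_nonneg_left (abs_mul_exp_neg_mul_sq_le hm ξ)
            (by positivity : 0 ≤ A)
          gcongr
  calc ‖𝓕⁻ f z - 𝓕⁻ f z'‖ ≤ _ := norm_fourierInv_sub_le hf z z'
    _ ≤ ∫ ξ, (A * (√m)⁻¹ * Real.exp (-(m / 2) * ξ ^ 2) + 2 * c * w ξ) :=
        integral_mono_of_nonneg (.of_forall fun ξ => by positivity)
          ((hexp.const_mul _).add (hw.const_mul _)) (.of_forall hpt)
    _ = A * (√m)⁻¹ * √(Real.pi / (m / 2)) + 2 * c * ∫ ξ, w ξ := by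
        rw [integral_add (hexp.const_mul _) (hw.const_mul _), integral_const_mul,
          integral_const_mul, integral_gaussian]
    _ = _ := by
        congr 1
        rw [show Real.pi / (m / 2) = 2 * Real.pi / m by field_simp, Real.sqrt_div (by positivity)]
        calc A * (√m)⁻¹ * (√(2 * Real.pi) / √m) = A * √(2 * Real.pi) / (√m * √m) := by
              field_simp
          _ = _ := by rw [Real.mul_self_sqrt hm.le]; ring

end GaussianMajorant

end FourierInv

section ConvPowDensity

open scoped FourierTransform

lemma convDensity_convPow_zero (p : ℝ → ℝ) (μ : Measure ℝ) : convDensity p (convPow μ 0) = p := by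
  funext z
  simp [convDensity, convPow]

variable {μ : Measure ℝ} [IsProbabilityMeasure μ] {p : ℝ → ℝ} {M : ℝ}

lemma HasBoundedDensity.convPow_succ (h : HasBoundedDensity μ p M) (k : ℕ) :
    HasBoundedDensity (convPow μ (k + 1)) (convDensity p (convPow μ k)) M := by
  rw [convPow_add, convPow_one]
  exact h.conv

lemma HasBoundedDensity.continuous_convDensity_convPow (h : HasBoundedDensity μ p M) (k : ℕ) :
    Continuous (convDensity p (convPow μ (k + 1))) :=
  h.continuous_convDensity (h.convPow_succ k)

/-- The bounds of a local limit theorem for the density `p` of `μ`: the density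
`convDensity p (convPow μ k)` of the sum of `k + 1` independent copies is at most `C / √(k + 1)`,
and `C / (k + 1)`-Lipschitz up to an error of the same size. -/
structure HasLocalBounds (μ : Measure ℝ) (p : ℝ → ℝ) (C : ℝ) : Prop where
  le (k : ℕ) (z : ℝ) : convDensity p (convPow μ k) z ≤ C / √(k + 1)
  abs_sub_le (k : ℕ) (z z' : ℝ) :
    |convDensity p (convPow μ k) z - convDensity p (convPow μ k) z'| ≤
      C * (|z - z'| + 1) / (k + 1)

lemma HasBoundedDensity.ofReal_convDensity_eq_fourierInv (h : HasBoundedDensity μ p M) {k : ℕ}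
    (hf : Integrable (𝓕 fun x => (convDensity p (convPow μ (k + 1)) x : ℂ))) (z : ℝ) :
    (convDensity p (convPow μ (k + 1)) z : ℂ) =
      𝓕⁻ (𝓕 fun x => (convDensity p (convPow μ (k + 1)) x : ℂ)) z := by
  have hcont := h.continuous_convDensity_convPow k
  exact (congrFun (Continuous.fourierInv_fourier_eq (Complex.continuous_ofReal.comp hcont)
    (h.convPow_succ (k + 1)).integrable.ofReal hf) z).symm

lemma HasBoundedDensity.exists_norm_fourier_convDensity_le (h : HasBoundedDensity μ p M)
    (hc : IsCentered μ 1) : ∃ C ≥ 0, ∃ w : ℝ → ℝ, Integrable w ∧ (∀ ξ, 0 ≤ w ξ) ∧ ∀ (k : ℕ) (ξ : ℝ),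
      ‖𝓕 (fun x => (convDensity p (convPow μ (k + 1)) x : ℂ)) ξ‖ ≤
        Real.exp (-(k + 2) * ξ ^ 2) + C / (k + 2) * w ξ := by
  obtain ⟨C, hC, hpow⟩ := h.exists_norm_charFun_pow_le hc
  refine ⟨C, hC.le, fun ξ => ‖charFun μ (2 * Real.pi * -ξ)‖ ^ 2,
    h.integrable_norm_charFun_sq.comp_neg, fun ξ => by positivity, fun k ξ => ?_⟩
  rw [(h.convPow_succ (k + 1)).fourier_eq_charFun, charFun_convPow, norm_pow]
  simpa [add_assoc, one_add_one_eq_two] using hpow (k + 2) le_add_self (-ξ)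

lemma HasBoundedDensity.integrable_fourier_convDensity (h : HasBoundedDensity μ p M)
    (hc : IsCentered μ 1) (k : ℕ) :
    Integrable (𝓕 fun x => (convDensity p (convPow μ (k + 1)) x : ℂ)) := by
  obtain ⟨C, -, w, hw, -, hle⟩ := h.exists_norm_fourier_convDensity_le hc
  have hcont : Continuous (𝓕 fun x => (convDensity p (convPow μ (k + 1)) x : ℂ)) :=
    VectorFourier.fourierIntegral_continuous (μ := volume) (L := innerₗ ℝ)
      Real.continuous_fourierChar continuous_inner (h.convPow_succ (k + 1)).integrable.ofReal
  exact ((integrable_exp_neg_mul_sq (by positivity)).add (hw.const_mul _)).mono'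
    hcont.aestronglyMeasurable (.of_forall (hle k))

lemma HasBoundedDensity.exists_convDensity_convPow_succ_le (h : HasBoundedDensity μ p M)
    (hc : IsCentered μ 1) : ∃ K ≥ 0, ∀ (k : ℕ) (z z' : ℝ),
      convDensity p (convPow μ (k + 1)) z ≤ K / √(k + 2) ∧
      |convDensity p (convPow μ (k + 1)) z - convDensity p (convPow μ (k + 1)) z'| ≤
        K * (|z - z'| + 1) / (k + 2) := by
  obtain ⟨C, hC, w, hw, hw0, hle⟩ := h.exists_norm_fourier_convDensity_le hc
  set I := C * ∫ ξ, w ξ with hIdef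
  have hI : 0 ≤ I := mul_nonneg hC (integral_nonneg hw0)
  have hπ : 0 ≤ 2 * Real.pi * √(2 * Real.pi) := by positivity
  refine ⟨√Real.pi + 2 * Real.pi * √(2 * Real.pi) + 2 * I, by positivity, fun k z z' => ⟨?_, ?_⟩⟩
  · calc convDensity p (convPow μ (k + 1)) z
        ≤ ‖𝓕⁻ (𝓕 fun x => (convDensity p (convPow μ (k + 1)) x : ℂ)) z‖ := by
          rw [← h.ofReal_convDensity_eq_fourierInv (h.integrable_fourier_convDensity hc k),
            Complex.norm_real]
          exact le_abs_self _
      _ ≤ √(Real.pi / (k + 2)) + C / (k + 2) * ∫ ξ, w ξ :=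
          norm_fourierInv_le_of_norm_le_gaussian (by positivity) hw (hle k) z
      _ = √Real.pi / √(k + 2) + I / (k + 2) := by
          rw [Real.sqrt_div Real.pi_pos.le, div_mul_eq_mul_div]
      _ ≤ √Real.pi / √(k + 2) + I / √(k + 2) := by
          gcongr
          exact Real.sqrt_le_iff.2 ⟨by positivity, by nlinarith [k.cast_nonneg (α := ℝ)]⟩
      _ ≤ _ := by rw [← add_div]; gcongr ?_ / _; linarith
  · calc |convDensity p (convPow μ (k + 1)) z - convDensity p (convPow μ (k + 1)) z'|
        = ‖𝓕⁻ (𝓕 fun x => (convDensity p (convPow μ (k + 1)) x : ℂ)) z -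
            𝓕⁻ (𝓕 fun x => (convDensity p (convPow μ (k + 1)) x : ℂ)) z'‖ := by
          rw [← h.ofReal_convDensity_eq_fourierInv (h.integrable_fourier_convDensity hc k),
            ← h.ofReal_convDensity_eq_fourierInv (h.integrable_fourier_convDensity hc k),
            ← Complex.ofReal_sub, Complex.norm_real, Real.norm_eq_abs]
      _ ≤ 2 * Real.pi * √(2 * Real.pi) * |z - z'| / (k + 2) + 2 * (C / (k + 2)) * ∫ ξ, w ξ :=
          norm_fourierInv_sub_le_of_norm_le_gaussian (h.integrable_fourier_convDensity hc k)
            (by positivity) (by positivity) hw hw0 (hle k) z z'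
      _ = (2 * Real.pi * √(2 * Real.pi) * |z - z'| + 2 * I) / (k + 2) := by rw [hIdef]; ring
      _ ≤ _ := by
          gcongr
          nlinarith [abs_nonneg (z - z'), Real.sqrt_nonneg Real.pi]

lemma HasBoundedDensity.exists_hasLocalBounds (h : HasBoundedDensity μ p M)
    (hc : IsCentered μ 1) : ∃ C, HasLocalBounds μ p C := by
  obtain ⟨K, hK, hbound⟩ := h.exists_convDensity_convPow_succ_le hc
  have hM := h.bound_nonneg
  have cast (k : ℕ) : ((k + 1 : ℕ) : ℝ) + 1 = k + 2 := by push_cast; ring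
  refine ⟨K + M, fun k z => ?_, fun k z z' => ?_⟩ <;> rcases k with _ | k
  · simpa [convDensity_convPow_zero] using (h.le z).trans (le_add_of_nonneg_left hK)
  · rw [cast]
    exact (hbound k z z).1.trans (by gcongr; linarith)
  · have : |p z - p z'| ≤ M :=
      abs_sub_le_of_nonneg_of_le (h.nonneg z) (h.le z) (h.nonneg z') (h.le z')
    simp only [convDensity_convPow_zero, Nat.cast_zero, zero_add, div_one]
    nlinarith [abs_nonneg (z - z')]
  · rw [cast]
    exact (hbound k z z').2.trans (by gcongr; linarith)

end ConvPowDensity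

section WeightedDensity

namespace HasBoundedDensity

variable {μ ν τ : Measure ℝ} {p f g : ℝ → ℝ} {M A B v w : ℝ}

lemma convDensity_convDensity [IsFiniteMeasure ν] [IsFiniteMeasure τ]
    (h : HasBoundedDensity μ p M) : convDensity (convDensity p ν) τ = convDensity p (τ ∗ ν) := by
  funext z
  rw [convDensity, convDensity, integral_conv (h.integrable_comp_sub z)]
  simp_rw [convDensity, sub_sub]

lemma integral_mul_comp_sub_eq (hν : HasBoundedDensity ν f A) (hτ : HasBoundedDensity τ g B)
    (φ : ℝ → ℝ) (z : ℝ) : ∫ u, φ (z - u) * g (z - u) ∂ν = ∫ w, φ w * f (z - w) ∂τ := by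
  rw [hν.integral_eq, hτ.integral_eq,
    ← integral_sub_left_eq_self (fun w => g w • (φ w * f (z - w))) _ z]
  simp only [sub_sub_cancel, smul_eq_mul]
  congr 1 with u
  ring

lemma integrable_mul_comp_sub (h : HasBoundedDensity τ g B) {φ : ℝ → ℝ} (hφ : Integrable φ ν)
    (z : ℝ) : Integrable (fun u => φ u * g (z - u)) ν := by
  refine hφ.mul_bdd (c := B)
    (h.measurable.comp (measurable_const.sub measurable_id)).aestronglyMeasurable
    (.of_forall fun u => ?_)
  rw [Real.norm_of_nonneg (h.nonneg _)]
  exact h.le _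

lemma mul_convDensity [IsFiniteMeasure ν] (hν : HasBoundedDensity ν f A)
    (hτ : HasBoundedDensity τ g B) (hid : Integrable id ν) (z : ℝ) :
    z * convDensity g ν z = ∫ u, u * g (z - u) ∂ν + ∫ w, w * f (z - w) ∂τ := by
  have hi : Integrable (fun u => u * g (z - u)) ν := hτ.integrable_mul_comp_sub hid z
  have hi' : Integrable (fun u => (z - u) * g (z - u)) ν :=
    hτ.integrable_mul_comp_sub ((integrable_const z).sub hid) z
  rw [convDensity, ← hν.integral_mul_comp_sub_eq hτ (fun w => w), ← integral_const_mul,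
    ← integral_add hi hi']
  congr 1 with u
  ring

lemma integral_sq_mul_comp_sub_le (hτ : HasBoundedDensity τ g B) (hν : IsCentered ν v) (z : ℝ) :
    ∫ u, u ^ 2 * g (z - u) ∂ν ≤ B * v := by
  rw [← hν.integral_sq, ← integral_const_mul]
  refine integral_mono (hτ.integrable_mul_comp_sub hν.integrable_sq z)
    (hν.integrable_sq.const_mul B) fun u => ?_
  calc u ^ 2 * g (z - u) ≤ u ^ 2 * B := mul_le_mul_of_nonneg_left (hτ.le _) (sq_nonneg u)
    _ = B * u ^ 2 := mul_comm _ _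

lemma sq_mul_convDensity_le [IsProbabilityMeasure ν] (hν : HasBoundedDensity ν f A)
    (hτ : HasBoundedDensity τ g B) (hνc : IsCentered ν v) (hτc : IsCentered τ w) (z : ℝ) :
    z ^ 2 * convDensity g ν z ≤ 2 * (B * v + A * w) := by
  have hsq : Integrable (fun u => (z - u) ^ 2) ν := by
    have := ((memLp_const z).sub hνc.memLp_id).integrable_sq
    simpa using this
  have hi := hτ.integrable_mul_comp_sub hνc.integrable_sq z
  have hi' := hτ.integrable_mul_comp_sub hsq z
  calc z ^ 2 * convDensity g ν z = ∫ u, z ^ 2 * g (z - u) ∂ν := by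
        rw [convDensity, integral_const_mul]
    _ ≤ ∫ u, 2 * (u ^ 2 * g (z - u) + (z - u) ^ 2 * g (z - u)) ∂ν := by
        refine integral_mono (hτ.integrable_mul_comp_sub (integrable_const _) z)
          ((hi.add hi').const_mul 2) fun u => ?_
        have : 0 ≤ (z - 2 * u) ^ 2 * g (z - u) := mul_nonneg (sq_nonneg _) (hτ.nonneg _)
        dsimp only
        linarith
    _ = 2 * (∫ u, u ^ 2 * g (z - u) ∂ν + ∫ w, w ^ 2 * f (z - w) ∂τ) := by
        rw [integral_const_mul, integral_add hi hi', hν.integral_mul_comp_sub_eq hτ (· ^ 2)]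
    _ ≤ 2 * (B * v + A * w) := by
        gcongr
        exacts [hτ.integral_sq_mul_comp_sub_le hνc z, hν.integral_sq_mul_comp_sub_le hτc z]

end HasBoundedDensity

lemma IsCentered.abs_integral_mul_le {ν : Measure ℝ} [IsProbabilityMeasure ν] {v B : ℝ}
    {φ : ℝ → ℝ} (h : IsCentered ν v) (hφ : ∀ u, |φ u| ≤ B) : |∫ u, u * φ u ∂ν| ≤ B * √v := by
  have hB : 0 ≤ B := (abs_nonneg _).trans (hφ 0)
  calc |∫ u, u * φ u ∂ν| ≤ ∫ u, B * |u| ∂ν := by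
        refine norm_integral_le_of_norm_le (f := fun u => u * φ u)
          (h.integrable_id.abs.const_mul B) (.of_forall fun u => ?_)
        rw [norm_mul, mul_comm]
        exact mul_le_mul_of_nonneg_right (hφ u) (norm_nonneg u)
    _ = B * ∫ u, |u| ∂ν := integral_const_mul _ _
    _ ≤ B * √v := mul_le_mul_of_nonneg_left h.integral_abs_le hB

/-- The density of the measure `x⁺ P(S ∈ dx)`, where `S` is the sum of `k + 1` independent
variables with law `μ` and density `p`. -/
noncomputable def posWeightedDensity (μ : Measure ℝ) (p : ℝ → ℝ) (k : ℕ) (z : ℝ) : ℝ :=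
  max z 0 * convDensity p (convPow μ k) z

/-- Bounds on `posWeightedDensity μ p k` for sums of at least two variables: it is bounded,
decays like `√k / |z|`, and is `1 / √k`-Lipschitz up to an error of the same size. -/
structure HasPosWeightedBounds (μ : Measure ℝ) (p : ℝ → ℝ) (C : ℝ) : Prop where
  le (k : ℕ) (z : ℝ) : posWeightedDensity μ p (k + 1) z ≤ C
  mul_abs_le (k : ℕ) (z : ℝ) : posWeightedDensity μ p (k + 1) z * |z| ≤ C * √(k + 2)
  abs_sub_le (k : ℕ) (z z' : ℝ) :
    |posWeightedDensity μ p (k + 1) z - posWeightedDensity μ p (k + 1) z'| ≤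
      C * (|z - z'| + 1) / √(k + 2)

variable {μ : Measure ℝ} [IsProbabilityMeasure μ] {p : ℝ → ℝ} {M C : ℝ}

lemma HasBoundedDensity.measurable_posWeightedDensity (h : HasBoundedDensity μ p M) (k : ℕ) :
    Measurable (posWeightedDensity μ p k) :=
  (measurable_id.max measurable_const).mul h.measurable_convDensity

lemma HasBoundedDensity.posWeightedDensity_nonneg (h : HasBoundedDensity μ p M) (k : ℕ) (z : ℝ) :
    0 ≤ posWeightedDensity μ p k z :=
  mul_nonneg (le_max_right _ _) ((h.convPow_succ k).nonneg z)

lemma HasBoundedDensity.posWeighted_convPow (h : HasBoundedDensity μ p M) (k : ℕ) :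
    posWeighted (convPow μ (k + 1)) =
      volume.withDensity fun z => ENNReal.ofReal (posWeightedDensity μ p k z) := by
  have hk := h.convPow_succ k
  have := hk.measurable
  rw [posWeighted, hk.eq_withDensity, ← withDensity_mul _ (by fun_prop) (by fun_prop)]
  congr 1 with z
  rw [Pi.mul_apply, posWeightedDensity, mul_comm, ENNReal.ofReal_mul (le_max_right _ _),
    ENNReal.ofReal_max]
  simp

namespace HasLocalBounds

lemma nonneg (hl : HasLocalBounds μ p C) (h : HasBoundedDensity μ p M) : 0 ≤ C := by
  simpa using ((h.convPow_succ 0).nonneg 0).trans (hl.le 0 0)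

lemma hasBoundedDensity_convPow (hl : HasLocalBounds μ p C) (h : HasBoundedDensity μ p M) {i n : ℕ}
    (hn : 0 < n) (hi : n ≤ 4 * (i + 1)) :
    HasBoundedDensity (convPow μ (i + 1)) (convDensity p (convPow μ i)) (2 * C / √n) where
  __ := h.convPow_succ i
  le z := by
    have hC := hl.nonneg h
    have hsqrt : √n ≤ 2 * √(i + 1) := sqrt_le_two_mul_sqrt (by exact_mod_cast hi)
    refine (hl.le i z).trans ?_
    rw [div_le_div_iff₀ (by positivity) (by positivity), mul_comm 2 C, mul_assoc]
    gcongr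

lemma abs_sub_le_of_le (hl : HasLocalBounds μ p C) (h : HasBoundedDensity μ p M) {i n : ℕ}
    (hn : 0 < n) (hi : n ≤ 4 * (i + 1)) (z z' : ℝ) :
    |convDensity p (convPow μ i) z - convDensity p (convPow μ i) z'| ≤
      4 * C * (|z - z'| + 1) / n := by
  have hC := hl.nonneg h
  have hn' : (n : ℝ) ≤ 4 * (i + 1) := by exact_mod_cast hi
  refine (hl.abs_sub_le i z z').trans ?_
  rw [div_le_div_iff₀ (by positivity) (by positivity)]
  calc C * (|z - z'| + 1) * n ≤ C * (|z - z'| + 1) * (4 * (i + 1)) := by gcongr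
    _ = _ := by ring

end HasLocalBounds

lemma HasBoundedDensity.exists_convDensity_convPow_succ_eq (h : HasBoundedDensity μ p M) (k : ℕ) :
    ∃ i j, i + j = k ∧ k + 2 ≤ 4 * (i + 1) ∧ k + 2 ≤ 4 * (j + 1) ∧
      convDensity p (convPow μ (k + 1)) =
        convDensity (convDensity p (convPow μ j)) (convPow μ (i + 1)) := by
  refine ⟨k / 2, k - k / 2, by omega, by omega, by omega, ?_⟩
  rw [h.convDensity_convDensity, ← convPow_add]
  congr 2
  omega

lemma abs_mul_convDensity_sub_le {ν τ : Measure ℝ} [IsProbabilityMeasure ν]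
    [IsProbabilityMeasure τ] {f g : ℝ → ℝ} {A B v w D z z' : ℝ} (hν : HasBoundedDensity ν f A)
    (hτ : HasBoundedDensity τ g B) (hνc : IsCentered ν v) (hτc : IsCentered τ w)
    (hf : ∀ u, |f (z - u) - f (z' - u)| ≤ D) (hg : ∀ u, |g (z - u) - g (z' - u)| ≤ D) :
    |z * convDensity g ν z - z' * convDensity g ν z'| ≤ D * √v + D * √w := by
  have hνid : Integrable (fun u : ℝ => u) ν := hνc.integrable_id
  have hτid : Integrable (fun u : ℝ => u) τ := hτc.integrable_id
  have hdiff : z * convDensity g ν z - z' * convDensity g ν z' =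
      ∫ u, u * (g (z - u) - g (z' - u)) ∂ν + ∫ u, u * (f (z - u) - f (z' - u)) ∂τ := by
    simp_rw [mul_sub]
    rw [hν.mul_convDensity hτ hνid, hν.mul_convDensity hτ hνid,
      integral_sub (hτ.integrable_mul_comp_sub hνid z) (hτ.integrable_mul_comp_sub hνid z'),
      integral_sub (hν.integrable_mul_comp_sub hτid z) (hν.integrable_mul_comp_sub hτid z')]
    ring
  rw [hdiff]
  exact (abs_add_le _ _).trans
    (add_le_add (hνc.abs_integral_mul_le hg) (hτc.abs_integral_mul_le hf))

lemma HasBoundedDensity.abs_mul_convDensity_convPow_sub_le (h : HasBoundedDensity μ p M)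
    (hc : IsCentered μ 1) {k : ℕ} {z z' D : ℝ}
    (hD : ∀ i, k + 2 ≤ 4 * (i + 1) → ∀ u,
      |convDensity p (convPow μ i) (z - u) - convDensity p (convPow μ i) (z' - u)| ≤ D) :
    |z * convDensity p (convPow μ (k + 1)) z - z' * convDensity p (convPow μ (k + 1)) z'| ≤
      2 * D * √(k + 2) := by
  obtain ⟨i, j, hij, hi, hj, heq⟩ := h.exists_convDensity_convPow_succ_eq k
  have hD0 : 0 ≤ D := (abs_nonneg _).trans (hD i hi 0)
  have cast_le {l : ℕ} (hl : l ≤ k) : ((l + 1 : ℕ) : ℝ) * 1 ≤ k + 2 := by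
    rw [mul_one]
    exact_mod_cast (by omega : l + 1 ≤ k + 2)
  rw [heq]
  calc _ ≤ D * √((i + 1 : ℕ) * 1) + D * √((j + 1 : ℕ) * 1) :=
        abs_mul_convDensity_sub_le (h.convPow_succ i)
          (h.convPow_succ j) (hc.convPow (i + 1)) (hc.convPow (j + 1)) (hD i hi) (hD j hj)
    _ ≤ D * √(k + 2) + D * √(k + 2) := by
        gcongr
        exacts [cast_le (by omega), cast_le (by omega)]
    _ = _ := by ring

namespace HasLocalBounds

lemma sq_mul_convDensity_le (hl : HasLocalBounds μ p C) (h : HasBoundedDensity μ p M)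
    (hc : IsCentered μ 1) (k : ℕ) (z : ℝ) :
    z ^ 2 * convDensity p (convPow μ (k + 1)) z ≤ 4 * C * √(k + 2) := by
  obtain ⟨i, j, rfl, hi, hj, heq⟩ := h.exists_convDensity_convPow_succ_eq k
  rw [heq]
  calc _ ≤ 2 * (2 * C / √(i + j + 2 : ℕ) * ((j + 1 : ℕ) * 1) +
          2 * C / √(i + j + 2 : ℕ) * ((i + 1 : ℕ) * 1)) := by
        rw [add_comm (2 * C / _ * _)]
        exact (hl.hasBoundedDensity_convPow h (by omega) hi).sq_mul_convDensity_le
          (hl.hasBoundedDensity_convPow h (by omega) hj) (hc.convPow (i + 1)) (hc.convPow (j + 1)) z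
    _ = 4 * C * ((i + j + 2) / √(i + j + 2)) := by push_cast; ring
    _ = 4 * C * √((i + j : ℕ) + 2) := by rw [Real.div_sqrt]; push_cast; rfl

lemma hasPosWeightedBounds (hl : HasLocalBounds μ p C) (h : HasBoundedDensity μ p M)
    (hc : IsCentered μ 1) : HasPosWeightedBounds μ p (8 * C) := by
  have hC := hl.nonneg h
  have hnonneg (k : ℕ) (z : ℝ) : 0 ≤ convDensity p (convPow μ k) z := (h.convPow_succ k).nonneg z
  have hmax (k : ℕ) (z : ℝ) :
      posWeightedDensity μ p k z = max (z * convDensity p (convPow μ k) z) 0 := by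
    rw [posWeightedDensity, max_mul_of_nonneg _ _ (hnonneg k z), zero_mul]
  refine ⟨fun k z => ?_, fun k z => ?_, fun k z z' => ?_⟩
  · have hk : 0 < √((k : ℝ) + 2) := by positivity
    have := h.abs_mul_convDensity_convPow_sub_le hc (z := z) (z' := 0) (D := 2 * C / √(k + 2))
      fun i hi u => by
        have hb := hl.hasBoundedDensity_convPow h (n := k + 2) (by omega) hi
        push_cast at hb
        exact abs_sub_le_of_nonneg_of_le (hb.nonneg _) (hb.le _) (hb.nonneg _) (hb.le _)
    rw [zero_mul, sub_zero, mul_assoc, div_mul_cancel₀ _ hk.ne'] at this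
    rw [hmax]
    exact max_le ((le_abs_self _).trans (this.trans (by linarith))) (by positivity)
  · have hz : max z 0 * |z| ≤ z ^ 2 := by
      rw [← sq_abs, sq]
      gcongr
      exact max_le (le_abs_self z) (abs_nonneg z)
    calc posWeightedDensity μ p (k + 1) z * |z|
        = max z 0 * |z| * convDensity p (convPow μ (k + 1)) z := by rw [posWeightedDensity]; ring
      _ ≤ z ^ 2 * convDensity p (convPow μ (k + 1)) z := by gcongr; exact hnonneg _ z
      _ ≤ 4 * C * √(k + 2) := hl.sq_mul_convDensity_le h hc k z
      _ ≤ 8 * C * √(k + 2) := by gcongr; norm_num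
  · rw [hmax, hmax]
    refine (abs_max_sub_max_le_abs _ _ _).trans ?_
    calc _ ≤ 2 * (4 * C * (|z - z'| + 1) / (k + 2 : ℕ)) * √(k + 2) :=
          h.abs_mul_convDensity_convPow_sub_le hc fun i hi u => by
            simpa using hl.abs_sub_le_of_le h (n := k + 2) (by omega) hi (z - u) (z' - u)
      _ = 8 * C * (|z - z'| + 1) * (√(k + 2) / (k + 2)) := by push_cast; ring
      _ = 8 * C * (|z - z'| + 1) / √(k + 2) := by rw [Real.sqrt_div_self', mul_one_div]

end HasLocalBounds

end WeightedDensity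

section Concentration

variable {μ : Measure ℝ} [IsProbabilityMeasure μ] {p : ℝ → ℝ} {M C : ℝ}

-- The walk observed at multiples of `m` has steps comparable to `√m`, so its maximum stays
-- below `√m` about as often as it stays at `0`.
lemma mul_measureReal_maxLaw_Iic_le {c θ : ℝ} {m : ℕ}
    (hθ : ∀ k, m ≤ k → (convPow μ k).real (Iic 0) ≤ θ)
    (hc : c ≤ (convPow μ m).real (Iic (-√m))) (n : ℕ) :
    c * (maxLaw μ n).real (Iic √m) ≤ θ * Real.exp θ * ((n / m : ℕ) + 1 : ℝ) ^ (θ - 1) := by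
  have hskeleton : (maxLaw μ n).real (Iic √m) ≤
      (maxLaw (convPow μ m) (n / m)).real (Iic √m) :=
    ENNReal.toReal_mono (by finiteness) <|
      (antitone_maxLaw_Iic _ (Nat.mul_div_le n m)).trans (maxLaw_mul_Iic_le m (n / m) _)
  calc c * (maxLaw μ n).real (Iic √m)
    _ ≤ (convPow μ m).real (Iic (-√m)) * (maxLaw (convPow μ m) (n / m)).real (Iic √m) := by gcongr
    _ ≤ (maxLaw (convPow μ m) (n / m + 1)).real {0} := by
        rw [Measure.real, Measure.real, ← ENNReal.toReal_mul]
        exact ENNReal.toReal_mono (by finiteness) (measure_Iic_mul_maxLaw_Iic_le _ _)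
    _ ≤ _ := maxLaw_singleton_zero_le (fun k hk => by
        rw [convPow_convPow]
        exact hθ _ (Nat.le_mul_of_pos_right m hk)) _

lemma exists_measureReal_maxLaw_Iic_le (hc : IsCentered μ 1) :
    ∃ C, ∀ (n : ℕ) (t : ℝ), 1 ≤ t → (maxLaw μ n).real (Iic t) ≤ C * √(t / √(n + 1)) := by
  obtain ⟨c, hc0, hev⟩ := exists_eventually_convPow_Iic hc
  obtain ⟨m₀, hm₀⟩ := eventually_atTop.1 hev
  refine ⟨3 / 4 * Real.exp (3 / 4) / c * √√(m₀ + 2), fun n t ht => ?_⟩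
  set m := max m₀ ⌈t ^ 2⌉₊
  set N := n / m
  have hmt : t ≤ √m := Real.le_sqrt_of_sq_le <|
    (Nat.le_ceil _).trans (mod_cast le_max_right m₀ ⌈t ^ 2⌉₊)
  have hm : (m : ℝ) ≤ (m₀ + 2) * t ^ 2 := by
    have hceil := (Nat.ceil_lt_add_one (sq_nonneg t)).le
    have ht2 : 1 ≤ t ^ 2 := one_le_pow₀ ht
    have hm₀t : (m₀ : ℝ) * 1 ≤ m₀ * t ^ 2 := by gcongr
    rw [Nat.cast_max]
    exact max_le (by linarith) (by nlinarith)
  have hm0 : 0 < m := by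
    have : (0 : ℝ) < m := Real.sqrt_pos.1 (by linarith)
    exact_mod_cast this
  have hn : ((n : ℝ) + 1) ≤ (m₀ + 2) * t ^ 2 * (N + 1) := by
    refine le_trans ?_ (mul_le_mul_of_nonneg_right hm (by positivity))
    exact_mod_cast Nat.lt_mul_div_succ n hm0
  have hsqrt : √(n + 1) ≤ √(m₀ + 2) * t * √(N + 1) := by
    refine (Real.sqrt_le_sqrt hn).trans_eq ?_
    rw [Real.sqrt_mul (by positivity), Real.sqrt_mul (by positivity),
      Real.sqrt_sq (by linarith)]
  have hrpow : ((N : ℝ) + 1) ^ (3 / 4 - 1 : ℝ) = √(1 / √(N + 1)) := by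
    rw [Real.sqrt_eq_rpow, Real.sqrt_eq_rpow, one_div, ← Real.rpow_neg (by positivity),
      ← Real.rpow_mul (by positivity)]
    norm_num
  have hbound := mul_measureReal_maxLaw_Iic_le (fun k hk => (hm₀ k (le_of_max_le_left hk)).1)
    (hm₀ m (le_max_left _ _)).2 n
  rw [hrpow] at hbound
  calc (maxLaw μ n).real (Iic t) ≤ (maxLaw μ n).real (Iic √m) :=
        measureReal_mono (Iic_subset_Iic.2 hmt)
    _ ≤ 3 / 4 * Real.exp (3 / 4) / c * √(1 / √(N + 1)) := by
        rw [div_mul_eq_mul_div, le_div_iff₀ hc0, mul_comm]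
        exact hbound
    _ ≤ 3 / 4 * Real.exp (3 / 4) / c * √(√(m₀ + 2) * (t / √(n + 1))) := by
        gcongr
        rw [mul_div_assoc', div_le_div_iff₀ (by positivity) (by positivity), one_mul]
        exact hsqrt
    _ = _ := by rw [Real.sqrt_mul (by positivity), mul_assoc]

/-- `HasConcentration μ C` says that, for the maximum of `n` steps of the walk with step law `μ`,
a window of length `t ≥ 1` has probability at most `C √(t / √(n + 1))`. -/
def HasConcentration (μ : Measure ℝ) (C : ℝ) : Prop :=
  ∀ (n : ℕ) (u t : ℝ), 1 ≤ t → (maxLaw μ n).real (Icc u (u + t)) ≤ C * √(t / √(n + 1))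

lemma HasLocalBounds.measureReal_convPow_conv_Icc_le (hl : HasLocalBounds μ p C)
    (h : HasBoundedDensity μ p M) {ρ : Measure ℝ} [IsProbabilityMeasure ρ] (k : ℕ) (u : ℝ) {t : ℝ}
    (ht : 0 ≤ t) : (convPow μ (k + 1) ∗ ρ).real (Icc u (u + t)) ≤ C * t / √(k + 1) := by
  have hd : HasBoundedDensity (convPow μ (k + 1)) (convDensity p (convPow μ k)) (C / √(k + 1)) :=
    { __ := h.convPow_succ k, le := hl.le k }
  have hC := hl.nonneg h
  refine ENNReal.toReal_le_of_le_ofReal (by positivity)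
    ((conv_le_smul_volume hd.le_smul_volume _).trans_eq ?_)
  rw [Measure.smul_apply, Real.volume_Icc, add_sub_cancel_left, smul_eq_mul,
    ← ENNReal.ofReal_mul (by positivity), div_mul_eq_mul_div]

theorem HasLocalBounds.exists_hasConcentration (hl : HasLocalBounds μ p C)
    (h : HasBoundedDensity μ p M) (hc : IsCentered μ 1) : ∃ C', HasConcentration μ C' := by
  obtain ⟨C₁, hC₁⟩ := exists_measureReal_maxLaw_Iic_le hc
  have hC := hl.nonneg h
  have hC₁0 : 0 ≤ C₁ := nonneg_of_mul_nonneg_left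
    (measureReal_nonneg.trans (hC₁ 0 1 le_rfl)) (by simp)
  refine ⟨2 * C₁ + 2 * C + 2, fun n u t ht => ?_⟩
  set q := t / √(n + 1)
  have hq : 0 ≤ q := by positivity
  rcases le_or_gt 1 q with hq1 | hq1
  · have : 1 ≤ √q := Real.one_le_sqrt.2 hq1
    exact measureReal_le_one.trans (by nlinarith)
  have hn : 1 ≤ n := by
    by_contra! hn
    simp only [Nat.lt_one_iff.1 hn, Nat.cast_zero, zero_add, Real.sqrt_one, div_one, q] at hq1
    linarith
  obtain ⟨a, b, hab, ha, hb⟩ : ∃ a b, n = a + 1 + b ∧ n + 1 ≤ 4 * (a + 1) ∧ n + 1 ≤ 4 * (b + 1) :=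
    ⟨(n - 1) / 2, n - 1 - (n - 1) / 2, by omega, by omega, by omega⟩
  have hhalf {k : ℕ} (hk : n + 1 ≤ 4 * (k + 1)) : t / √(k + 1) ≤ 2 * q := by
    have : √(n + 1) ≤ 2 * √(k + 1) := sqrt_le_two_mul_sqrt (by exact_mod_cast hk)
    rw [mul_div_assoc', div_le_div_iff₀ (by positivity) (by positivity)]
    nlinarith
  have hqq : q ≤ √q := Real.le_sqrt_of_sq_le (by nlinarith)
  have hfar : C * t / √(a + 1) ≤ 2 * C * √q := by
    rw [mul_div_assoc]
    nlinarith [mul_le_mul_of_nonneg_left ((hhalf ha).trans (by linarith : 2 * q ≤ 2 * √q)) hC]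
  have hnear : C₁ * √(t / √(b + 1)) ≤ 2 * C₁ * √q := by
    have : √(t / √(b + 1)) ≤ 2 * √q := Real.sqrt_le_iff.2
      ⟨by positivity, (hhalf hb).trans (by rw [mul_pow, Real.sq_sqrt hq]; linarith)⟩
    nlinarith [mul_le_mul_of_nonneg_left this hC₁0]
  calc (maxLaw μ n).real (Icc u (u + t))
    _ ≤ (maxLaw μ b).real (Iic t) + (convPow μ (a + 1) ∗ maxLaw μ b).real (Icc u (u + t)) := by
        rw [hab, Measure.real, Measure.real, Measure.real, ← ENNReal.toReal_add (by finiteness)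
          (by finiteness)]
        exact ENNReal.toReal_mono (by finiteness) (maxLaw_add_Icc_le (a + 1) b t u)
    _ ≤ 2 * C₁ * √q + 2 * C * √q := add_le_add ((hC₁ b t ht).trans hnear)
        ((hl.measureReal_convPow_conv_Icc_le h a u (by positivity)).trans hfar)
    _ ≤ _ := by nlinarith [Real.sqrt_nonneg q]

end Concentration

section RegularPart

variable {μ : Measure ℝ} [IsProbabilityMeasure μ] {p : ℝ → ℝ} {M C : ℝ}

/-- The density of `posWeighted (maxLaw μ (n + 1))` minus the singular term
`P(maximum of n steps = 0) · max y 0 · p y`, which is the contribution of walks reaching their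
maximum in a single jump; see `posWeighted_maxLaw_succ_eq_withDensity`. -/
noncomputable def regularPart (μ : Measure ℝ) (p : ℝ → ℝ) (n : ℕ) (y : ℝ) : ℝ :=
  ∫ u in Ioi 0, posWeightedDensity μ p 0 (y - u) ∂maxLaw μ n +
    ∑ i ∈ Finset.range n,
      (i + 2 : ℝ)⁻¹ * convDensity (posWeightedDensity μ p (i + 1)) (maxLaw μ (n - (i + 1))) y

namespace HasBoundedDensity

lemma integrable_posWeightedDensity_comp_sub (h : HasBoundedDensity μ p M) (k n : ℕ) (y : ℝ) :
    Integrable (fun u => posWeightedDensity μ p k (y - u)) (maxLaw μ n) := by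
  refine Integrable.of_bound ((h.measurable_posWeightedDensity k).comp
    (measurable_const.sub measurable_id)).aestronglyMeasurable (max y 0 * M) ?_
  filter_upwards [ae_nonneg_maxLaw n] with u hu
  rw [Real.norm_of_nonneg (h.posWeightedDensity_nonneg k _)]
  exact mul_le_mul (max_le_max (by linarith) le_rfl) ((h.convPow_succ k).le _)
    ((h.convPow_succ k).nonneg _) (le_max_right _ _)

lemma convDensity_posWeightedDensity_nonneg (h : HasBoundedDensity μ p M) (k n : ℕ) (y : ℝ) :
    0 ≤ convDensity (posWeightedDensity μ p k) (maxLaw μ n) y :=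
  integral_nonneg fun u => h.posWeightedDensity_nonneg k (y - u)

lemma measurable_convDensity_posWeightedDensity (h : HasBoundedDensity μ p M) (k n : ℕ) :
    Measurable (convDensity (posWeightedDensity μ p k) (maxLaw μ n)) :=
  (StronglyMeasurable.integral_prod_right (f := fun y u => posWeightedDensity μ p k (y - u))
    ((h.measurable_posWeightedDensity k).comp
      (measurable_fst.sub measurable_snd)).stronglyMeasurable).measurable

lemma posWeighted_convPow_conv_maxLaw (h : HasBoundedDensity μ p M) (k n : ℕ) :
    posWeighted (convPow μ (k + 1)) ∗ maxLaw μ n = volume.withDensity fun y =>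
      ENNReal.ofReal (convDensity (posWeightedDensity μ p k) (maxLaw μ n) y) := by
  rw [h.posWeighted_convPow, Measure.conv_comm,
    conv_withDensity (h.measurable_posWeightedDensity k).ennreal_ofReal]
  congr 1 with y
  exact (ofReal_integral_eq_lintegral_ofReal (h.integrable_posWeightedDensity_comp_sub k n y)
    (.of_forall fun u => h.posWeightedDensity_nonneg k _)).symm

lemma convDensity_posWeightedDensity_zero (h : HasBoundedDensity μ p M) (n : ℕ) (y : ℝ) :
    convDensity (posWeightedDensity μ p 0) (maxLaw μ n) y =
      (maxLaw μ n).real {0} * (max y 0 * p y) +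
        ∫ u in Ioi 0, posWeightedDensity μ p 0 (y - u) ∂maxLaw μ n := by
  have hint := h.integrable_posWeightedDensity_comp_sub 0 n y
  have hsupp : (maxLaw μ n).restrict ({0} ∪ Ioi 0) = maxLaw μ n := by
    refine Measure.restrict_eq_self_of_ae_mem ?_
    filter_upwards [ae_nonneg_maxLaw n] with u hu
    simpa [singleton_union, Ioi_insert] using hu
  rw [convDensity]
  conv_lhs => rw [← hsupp]
  rw [setIntegral_union (by simp) measurableSet_Ioi hint.integrableOn hint.integrableOn,
    integral_singleton, sub_zero, smul_eq_mul, posWeightedDensity, convDensity_convPow_zero]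

lemma sum_convDensity_posWeightedDensity (h : HasBoundedDensity μ p M) (n : ℕ) (y : ℝ) :
    ∑ ij ∈ Finset.HasAntidiagonal.antidiagonal n,
        (ij.1 + 1 : ℝ)⁻¹ * convDensity (posWeightedDensity μ p ij.1) (maxLaw μ ij.2) y =
      (maxLaw μ n).real {0} * (max y 0 * p y) + regularPart μ p n y := by
  rw [Finset.Nat.sum_antidiagonal_eq_sum_range_succ_mk, Finset.sum_range_succ', regularPart,
    ← add_assoc, ← h.convDensity_posWeightedDensity_zero, add_comm]
  norm_num [add_assoc]

theorem posWeighted_maxLaw_succ_eq_withDensity (h : HasBoundedDensity μ p M) (n : ℕ) :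
    posWeighted (maxLaw μ (n + 1)) = volume.withDensity fun y =>
      ENNReal.ofReal ((maxLaw μ n).real {0} * (max y 0 * p y) + regularPart μ p n y) := by
  have hterm (k j : ℕ) (y : ℝ) : ENNReal.ofReal ((k + 1 : ℝ)⁻¹ *
      convDensity (posWeightedDensity μ p k) (maxLaw μ j) y) = (k + 1 : ℝ≥0∞)⁻¹ *
        ENNReal.ofReal (convDensity (posWeightedDensity μ p k) (maxLaw μ j) y) := by
    rw [ENNReal.ofReal_mul (by positivity), ENNReal.ofReal_inv_of_pos (by positivity)]
    norm_cast
  have hmeas (k j : ℕ) : Measurable fun y =>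
      ENNReal.ofReal (convDensity (posWeightedDensity μ p k) (maxLaw μ j) y) :=
    (h.measurable_convDensity_posWeightedDensity k j).ennreal_ofReal
  have hnonneg (k j : ℕ) (y : ℝ) :
      0 ≤ (k + 1 : ℝ)⁻¹ * convDensity (posWeightedDensity μ p k) (maxLaw μ j) y :=
    mul_nonneg (by positivity) (h.convDensity_posWeightedDensity_nonneg k j y)
  simp_rw [← h.sum_convDensity_posWeightedDensity, posWeighted_maxLaw_succ,
    h.posWeighted_convPow_conv_maxLaw]
  ext s hs
  simp_rw [ENNReal.ofReal_sum_of_nonneg fun (ij : ℕ × ℕ) _ => hnonneg ij.1 ij.2 _, hterm,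
    Measure.finsetSum_apply, Measure.smul_apply, withDensity_apply _ hs, smul_eq_mul]
  rw [lintegral_finsetSum _ fun ij _ => (hmeas ij.1 ij.2).const_mul _]
  simp_rw [lintegral_const_mul _ (hmeas _ _)]

end HasBoundedDensity

end RegularPart

section ShortRange

lemma integral_le_measureReal_mul_add {ρ : Measure ℝ} [IsProbabilityMeasure ρ] {f : ℝ → ℝ}
    (hf : Integrable f ρ) {s : Set ℝ} (hs : MeasurableSet s) {A B : ℝ} (hB : 0 ≤ B)
    (hmem : ∀ u ∈ s, f u ≤ A) (hnotMem : ∀ u ∉ s, f u ≤ B) :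
    ∫ u, f u ∂ρ ≤ ρ.real s * A + B := by
  have hind : Integrable (s.indicator fun _ => A) ρ := (integrable_const A).indicator hs
  calc ∫ u, f u ∂ρ ≤ ∫ u, (s.indicator (fun _ => A) u + B) ∂ρ := by
        refine integral_mono hf (hind.add (integrable_const B)) fun u => ?_
        by_cases hu : u ∈ s
        · simpa only [indicator_of_mem hu] using (hmem u hu).trans (le_add_of_nonneg_right hB)
        · simpa only [indicator_of_notMem hu, zero_add] using hnotMem u hu
    _ = ρ.real s * A + B := by
        rw [integral_add hind (integrable_const B), integral_indicator_const _ hs]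
        simp

lemma sum_inv_mul_rpow_le {a δ : ℝ} (ha0 : 0 < a) (ha1 : a ≤ 1) (hδ : 0 ≤ δ) (n : ℕ) :
    ∑ i ∈ Finset.range n with ((i : ℕ) + 2 : ℝ) ≤ δ * (n + 1),
      (i + 2 : ℝ)⁻¹ * ((i + 2 : ℝ) / (n + 1)) ^ a ≤ δ ^ a / a := by
  have hN : (0 : ℝ) < n + 1 := by positivity
  calc ∑ i ∈ Finset.range n with ((i : ℕ) + 2 : ℝ) ≤ δ * (n + 1),
        (i + 2 : ℝ)⁻¹ * ((i + 2 : ℝ) / (n + 1)) ^ a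
      ≤ ∑ i ∈ Finset.range n with ((i : ℕ) + 2 : ℝ) ≤ δ * (n + 1),
        (i + 1 : ℝ) ^ (a - 1) / (n + 1) ^ a := by
        refine Finset.sum_le_sum fun i _ => ?_
        rw [Real.div_rpow (by positivity) hN.le, mul_div_assoc', inv_mul_eq_div,
          ← Real.rpow_sub_one (by positivity)]
        refine div_le_div_of_nonneg_right ?_ (by positivity)
        exact Real.rpow_le_rpow_of_nonpos (by positivity) (by linarith) (by linarith)
    _ ≤ ∑ i ∈ Finset.range ⌊δ * (n + 1)⌋₊, (i + 1 : ℝ) ^ (a - 1) / (n + 1) ^ a := by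
        refine Finset.sum_le_sum_of_subset_of_nonneg (fun i hi => ?_) fun i _ _ => by positivity
        have : i + 2 ≤ ⌊δ * (n + 1)⌋₊ :=
          Nat.le_floor (by push_cast; exact (Finset.mem_filter.1 hi).2)
        exact Finset.mem_range.2 (by omega)
    _ ≤ (δ * (n + 1)) ^ a / a / (n + 1) ^ a := by
        rw [← Finset.sum_div]
        gcongr
        refine (sum_range_rpow_sub_one_le ha0 ha1 _).trans ?_
        gcongr
        exact Nat.floor_le (by positivity)
    _ = δ ^ a / a := by
        rw [Real.mul_rpow hδ hN.le]
        field_simp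

variable {μ : Measure ℝ} {p : ℝ → ℝ} {M B C : ℝ}

lemma HasConcentration.nonneg (hB : HasConcentration μ B) : 0 ≤ B := by
  simpa using measureReal_nonneg.trans (hB 0 0 1 le_rfl)

namespace HasBoundedDensity

lemma integrable_sq_mul (h : HasBoundedDensity μ p M) (hc : IsCentered μ 1) :
    Integrable fun z => z ^ 2 * p z := by
  simpa only [smul_eq_mul, mul_comm] using h.integrable_iff.1 hc.integrable_sq

lemma integral_sq_mul (h : HasBoundedDensity μ p M) (hc : IsCentered μ 1) :
    ∫ z, z ^ 2 * p z = 1 := by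
  simpa only [smul_eq_mul, mul_comm, h.integral_eq] using hc.integral_sq

lemma posWeightedDensity_zero_le (h : HasBoundedDensity μ p M) {A : ℝ} (hA : 0 < A) (z : ℝ) :
    posWeightedDensity μ p 0 z ≤ (Icc 0 A).indicator (fun _ => A * M) z + A⁻¹ * (z ^ 2 * p z) := by
  have hp := h.nonneg z
  rw [posWeightedDensity, convDensity_convPow_zero]
  by_cases hz : z ∈ Icc 0 A
  · rw [indicator_of_mem hz, max_eq_left hz.1]
    have : z * p z ≤ A * M := mul_le_mul hz.2 (h.le z) hp hA.le
    exact this.trans (le_add_of_nonneg_right (by positivity))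
  rw [indicator_of_notMem hz, zero_add]
  rcases le_or_gt z 0 with hz0 | hz0
  · rw [max_eq_right hz0, zero_mul]
    positivity
  · have hAz : A < z := by
      by_contra! hzA
      exact hz ⟨hz0.le, hzA⟩
    rw [max_eq_left hz0.le, inv_mul_eq_div, le_div_iff₀ hA]
    nlinarith [mul_le_mul_of_nonneg_left hAz.le (mul_nonneg hz0.le hp)]

variable [IsProbabilityMeasure μ]

lemma setIntegral_posWeightedDensity_zero_le (h : HasBoundedDensity μ p M) (hc : IsCentered μ 1)
    (hB : HasConcentration μ B) {A : ℝ} (hA : 1 ≤ A) (n : ℕ) (y : ℝ) :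
    ∫ u in Ioi 0, posWeightedDensity μ p 0 (y - u) ∂maxLaw μ (n + 1) ≤
      A * M * (B * √(A / √(n + 2))) + A⁻¹ * M := by
  have hM := h.bound_nonneg
  have hle := restrict_maxLaw_succ_le h.le_smul_volume n
  have hsq : Integrable (fun u => (y - u) ^ 2 * p (y - u)) (ENNReal.ofReal M • volume) :=
    ((h.integrable_sq_mul hc).comp_sub_left y).smul_measure (by finiteness)
  have hind : Integrable ((Icc (y - A) (y - A + A)).indicator fun _ => A * M) (maxLaw μ (n + 1)) :=
    (integrable_const _).indicator measurableSet_Icc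
  have hnear : ∫ u in Ioi 0, (Icc (y - A) (y - A + A)).indicator (fun _ => A * M) u
      ∂maxLaw μ (n + 1) ≤ A * M * (B * √(A / √(n + 2))) := by
    refine (setIntegral_le_integral hind
      (ae_of_all _ fun u => indicator_nonneg (fun _ _ => by positivity) _)).trans ?_
    rw [integral_indicator_const _ measurableSet_Icc, smul_eq_mul, mul_comm]
    gcongr
    simpa [add_assoc, one_add_one_eq_two] using hB (n + 1) (y - A) A hA
  have hfar : ∫ u in Ioi 0, (y - u) ^ 2 * p (y - u) ∂maxLaw μ (n + 1) ≤ M := by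
    refine (integral_mono_measure hle
      (ae_of_all _ fun u => mul_nonneg (sq_nonneg _) (h.nonneg _)) hsq).trans_eq ?_
    rw [integral_smul_measure, integral_sub_left_eq_self (fun w => w ^ 2 * p w) _ y,
      h.integral_sq_mul hc, smul_eq_mul, mul_one, ENNReal.toReal_ofReal hM]
  calc ∫ u in Ioi 0, posWeightedDensity μ p 0 (y - u) ∂maxLaw μ (n + 1)
      ≤ ∫ u in Ioi 0, ((Icc (y - A) (y - A + A)).indicator (fun _ => A * M) u +
          A⁻¹ * ((y - u) ^ 2 * p (y - u))) ∂maxLaw μ (n + 1) := by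
        refine integral_mono (h.integrable_posWeightedDensity_comp_sub 0 _ y).integrableOn
          (hind.integrableOn.add ((hsq.mono_measure hle).const_mul _)) fun u => ?_
        refine (h.posWeightedDensity_zero_le (by positivity) (y - u)).trans_eq ?_
        have hmem : y - u ∈ Icc 0 A ↔ u ∈ Icc (y - A) (y - A + A) := by
          simp only [mem_Icc]
          constructor <;> rintro ⟨h₁, h₂⟩ <;> constructor <;> linarith
        simp only [indicator, hmem]
    _ ≤ A * M * (B * √(A / √(n + 2))) + A⁻¹ * M := by
        rw [integral_add hind.integrableOn ((hsq.mono_measure hle).const_mul _),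
          integral_const_mul]
        gcongr

lemma eventually_setIntegral_posWeightedDensity_zero_le (h : HasBoundedDensity μ p M)
    (hc : IsCentered μ 1) (hB : HasConcentration μ B) {ε : ℝ} (hε : 0 < ε) :
    ∀ᶠ n in atTop, ∀ y, ∫ u in Ioi 0, posWeightedDensity μ p 0 (y - u) ∂maxLaw μ n ≤ ε := by
  have hfar : Tendsto (fun A : ℝ => A⁻¹ * M) atTop (nhds 0) := by
    simpa using tendsto_inv_atTop_zero.mul_const M
  obtain ⟨A, hA, hAε⟩ :=
    ((eventually_ge_atTop 1).and (hfar.eventually_lt_const (half_pos hε))).exists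
  have hsqrt : Tendsto (fun n : ℕ => √(n + 2)) atTop atTop :=
    Real.tendsto_sqrt_atTop.comp
      (tendsto_atTop_add_const_right _ _ tendsto_natCast_atTop_atTop)
  have hnear : Tendsto (fun n : ℕ => A * M * (B * √(A / √(n + 2)))) atTop (nhds 0) := by
    simpa using (((tendsto_const_nhds (x := A)).div_atTop hsqrt).sqrt.const_mul B).const_mul (A * M)
  rw [← map_add_atTop_eq_nat 1, eventually_map]
  filter_upwards [hnear.eventually_lt_const (half_pos hε)] with n hn y
  linarith [h.setIntegral_posWeightedDensity_zero_le hc hB hA n y]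

end HasBoundedDensity

variable [IsProbabilityMeasure μ]

namespace HasPosWeightedBounds

lemma nonneg (hb : HasPosWeightedBounds μ p C) (h : HasBoundedDensity μ p M) :
    0 ≤ C :=
  (h.posWeightedDensity_nonneg 1 0).trans (hb.le 0 0)

lemma convDensity_maxLaw_le (hb : HasPosWeightedBounds μ p C) (h : HasBoundedDensity μ p M)
    (hB : HasConcentration μ B) {T : ℝ} (hT : 1 ≤ T) (k j : ℕ) (y : ℝ) :
    convDensity (posWeightedDensity μ p (k + 1)) (maxLaw μ j) y ≤
      B * √(2 * T / √(j + 1)) * C + C * √(k + 2) / T := by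
  have hC := hb.nonneg h
  refine (integral_le_measureReal_mul_add (s := Icc (y - T) (y - T + 2 * T)) (B := C * √(k + 2) / T)
    (h.integrable_posWeightedDensity_comp_sub (k + 1) j y) measurableSet_Icc (by positivity)
    (fun u _ => hb.le k _) fun u hu => ?_).trans ?_
  · have hTu : T ≤ |y - u| := by
      by_contra! hlt
      rw [abs_lt] at hlt
      exact hu ⟨by linarith [hlt.2], by linarith [hlt.1]⟩
    rw [le_div_iff₀ (by positivity)]
    exact (mul_le_mul_of_nonneg_left hTu (h.posWeightedDensity_nonneg _ _)).trans
      (hb.mul_abs_le k (y - u))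
  · gcongr
    exact hB j _ _ (by linarith)

-- The window `T = √(n + 1) r²` balances `√(T / √(n + 1)) = r` against `√(k + 2) / T = r`.
lemma convDensity_maxLaw_sub_le (hb : HasPosWeightedBounds μ p C) (h : HasBoundedDensity μ p M)
    (hB : HasConcentration μ B) {n k : ℕ} (hk : 2 * (k + 2) ≤ n + 1) (y : ℝ) :
    convDensity (posWeightedDensity μ p (k + 1)) (maxLaw μ (n - (k + 1))) y ≤
      (2 * B * C + C) * ((k + 2 : ℝ) / (n + 1)) ^ (6⁻¹ : ℝ) := by
  have hC := hb.nonneg h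
  have hB0 := hB.nonneg
  have hN : (0 : ℝ) < n + 1 := by positivity
  set r : ℝ := ((k + 2 : ℝ) / (n + 1)) ^ (6⁻¹ : ℝ)
  set T : ℝ := √(n + 1) * r ^ 2
  have hr0 : 0 < r := by positivity
  have hr6 : (k + 2 : ℝ) = (n + 1) * (r ^ 3) ^ 2 := by
    rw [← pow_mul, ← Real.rpow_natCast r, ← Real.rpow_mul (by positivity)]
    norm_num
    field_simp
  have hr1 : r ≤ 1 := Real.rpow_le_one (by positivity)
    ((div_le_one hN).2 (by exact_mod_cast (by omega : k + 2 ≤ n + 1))) (by norm_num)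
  have hsqrt_k : √(k + 2) = T * r := by
    rw [hr6, Real.sqrt_mul hN.le, Real.sqrt_sq (by positivity)]
    ring
  have hT : 1 ≤ T := by
    have : 1 ≤ T * r := hsqrt_k ▸ Real.one_le_sqrt.2 (by linarith [Nat.cast_nonneg (α := ℝ) k])
    nlinarith [mul_le_of_le_one_right (by positivity : 0 ≤ T) hr1]
  have hwindow : √(2 * T / √((n - (k + 1) : ℕ) + 1)) ≤ 2 * r := by
    have hj : √(n + 1) ≤ 2 * √((n - (k + 1) : ℕ) + 1) := by
      refine sqrt_le_two_mul_sqrt ?_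
      exact_mod_cast (by omega : n + 1 ≤ 4 * (n - (k + 1) + 1))
    refine Real.sqrt_le_iff.2 ⟨by positivity, (div_le_iff₀ (by positivity)).2 ?_⟩
    calc 2 * T = 2 * (√(n + 1) * r ^ 2) := rfl
      _ ≤ 2 * (2 * √((n - (k + 1) : ℕ) + 1) * r ^ 2) := by gcongr
      _ = (2 * r) ^ 2 * √((n - (k + 1) : ℕ) + 1) := by ring
  calc convDensity (posWeightedDensity μ p (k + 1)) (maxLaw μ (n - (k + 1))) y
      ≤ B * √(2 * T / √((n - (k + 1) : ℕ) + 1)) * C + C * √(k + 2) / T :=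
        hb.convDensity_maxLaw_le h hB hT k _ y
    _ ≤ B * (2 * r) * C + C * r := by
        gcongr
        rw [hsqrt_k]
        field_simp
        rfl
    _ = (2 * B * C + C) * r := by ring

lemma sum_head_le (hb : HasPosWeightedBounds μ p C) (h : HasBoundedDensity μ p M)
    (hB : HasConcentration μ B) {δ : ℝ} (hδ0 : 0 ≤ δ) (hδ : δ ≤ 1 / 2) (n : ℕ) (y : ℝ) :
    ∑ i ∈ Finset.range n with ((i : ℕ) + 2 : ℝ) ≤ δ * (n + 1), (i + 2 : ℝ)⁻¹ *
      convDensity (posWeightedDensity μ p (i + 1)) (maxLaw μ (n - (i + 1))) y ≤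
        (2 * B * C + C) * (δ ^ (6⁻¹ : ℝ) / 6⁻¹) := by
  have hC := hb.nonneg h
  have hB0 := hB.nonneg
  refine le_trans ?_ (mul_le_mul_of_nonneg_left
    (sum_inv_mul_rpow_le (by norm_num) (by norm_num) hδ0 n) (by positivity))
  rw [Finset.mul_sum]
  refine Finset.sum_le_sum fun i hi => ?_
  have hi2 : 2 * (i + 2) ≤ n + 1 := by
    have : 2 * ((i : ℝ) + 2) ≤ n + 1 := by nlinarith [(Finset.mem_filter.1 hi).2]
    exact_mod_cast this
  rw [mul_left_comm]
  gcongr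
  exact hb.convDensity_maxLaw_sub_le h hB hi2 y

end HasPosWeightedBounds

/-- The part of `regularPart μ p n` coming from the summands with index at least a proportion
`δ` of `n + 1`. -/
noncomputable def tailPart (μ : Measure ℝ) (p : ℝ → ℝ) (δ : ℝ) (n : ℕ) (y : ℝ) : ℝ :=
  ∑ i ∈ Finset.range n with δ * (n + 1) < ((i : ℕ) + 2 : ℝ), (i + 2 : ℝ)⁻¹ *
    convDensity (posWeightedDensity μ p (i + 1)) (maxLaw μ (n - (i + 1))) y

theorem HasPosWeightedBounds.exists_eventually_abs_regularPart_sub_tailPart_le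
    (hb : HasPosWeightedBounds μ p C) (h : HasBoundedDensity μ p M) (hc : IsCentered μ 1)
    (hB : HasConcentration μ B) {ε : ℝ} (hε : 0 < ε) :
    ∃ δ > 0, ∀ᶠ n in atTop, ∀ y, |regularPart μ p n y - tailPart μ p δ n y| ≤ ε := by
  have hhead : Tendsto (fun δ : ℝ => (2 * B * C + C) * (δ ^ (6⁻¹ : ℝ) / 6⁻¹)) (nhdsWithin 0 (Ioi 0))
      (nhds 0) := by
    have := (((continuous_id.rpow_const fun _ => Or.inr (by norm_num : (0 : ℝ) ≤ 6⁻¹)).div_const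
      (6⁻¹ : ℝ)).const_mul (2 * B * C + C)).tendsto 0
    rw [id, Real.zero_rpow (by norm_num), zero_div, mul_zero] at this
    exact this.mono_left nhdsWithin_le_nhds
  obtain ⟨δ, ⟨hδε, hδ⟩, hδ0 : 0 < δ⟩ := ((hhead.eventually_lt_const (half_pos hε)).and
    (nhdsWithin_le_nhds (eventually_le_nhds one_half_pos))).and self_mem_nhdsWithin |>.exists
  refine ⟨δ, hδ0, ?_⟩
  filter_upwards [h.eventually_setIntegral_posWeightedDensity_zero_le hc hB (half_pos hε)]
    with n hn y
  have hsplit : regularPart μ p n y - tailPart μ p δ n y =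
      ∫ u in Ioi 0, posWeightedDensity μ p 0 (y - u) ∂maxLaw μ n +
        ∑ i ∈ Finset.range n with ((i : ℕ) + 2 : ℝ) ≤ δ * (n + 1), (i + 2 : ℝ)⁻¹ *
          convDensity (posWeightedDensity μ p (i + 1)) (maxLaw μ (n - (i + 1))) y := by
    rw [regularPart, tailPart, ← Finset.sum_filter_add_sum_filter_not (Finset.range n)
      fun i : ℕ => (i + 2 : ℝ) ≤ δ * (n + 1)]
    simp only [not_le]
    ring
  rw [hsplit, abs_of_nonneg (add_nonneg
    (integral_nonneg fun u => h.posWeightedDensity_nonneg 0 _)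
    (Finset.sum_nonneg fun i _ => mul_nonneg (by positivity)
      (h.convDensity_posWeightedDensity_nonneg _ _ y)))]
  linarith [hn y, hb.sum_head_le h hB hδ0.le hδ n y]

end ShortRange

section ScaledRegularPart

lemma abs_sum_inv_mul_le {δ B : ℝ} (hδ : 0 < δ) (hB : 0 ≤ B) {n : ℕ} {f : ℕ → ℝ}
    (hf : ∀ i < n, δ * (n + 1) < (i + 2 : ℝ) → |f i| ≤ B) :
    |∑ i ∈ Finset.range n with δ * (n + 1) < ((i : ℕ) + 2 : ℝ), (i + 2 : ℝ)⁻¹ * f i| ≤ B / δ := by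
  have hN : (0 : ℝ) < n + 1 := by positivity
  calc |∑ i ∈ Finset.range n with δ * (n + 1) < ((i : ℕ) + 2 : ℝ), (i + 2 : ℝ)⁻¹ * f i|
      ≤ ∑ i ∈ Finset.range n with δ * (n + 1) < ((i : ℕ) + 2 : ℝ), (δ * (n + 1))⁻¹ * B := by
        refine (Finset.abs_sum_le_sum_abs _ _).trans (Finset.sum_le_sum fun i hi => ?_)
        obtain ⟨hin, hδi⟩ := Finset.mem_filter.1 hi
        have := hf i (Finset.mem_range.1 hin) hδi
        rw [abs_mul, abs_of_nonneg (by positivity)]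
        gcongr
    _ ≤ ∑ _i ∈ Finset.range n, (δ * (n + 1))⁻¹ * B :=
        Finset.sum_le_sum_of_subset_of_nonneg (Finset.filter_subset _ _) fun _ _ _ => by positivity
    _ = n / (n + 1) * (B / δ) := by
        rw [Finset.sum_const, Finset.card_range, nsmul_eq_mul]
        field_simp
    _ ≤ B / δ := mul_le_of_le_one_left (by positivity) ((div_le_one hN).2 (by linarith))

lemma tendsto_zero_of_forall_exists_eventually_abs_sub_le {α : Type*} {l : Filter α} {f : α → ℝ}
    (hf : ∀ ε > 0, ∃ g : α → ℝ, Tendsto g l (nhds 0) ∧ ∀ᶠ a in l, |f a - g a| ≤ ε) :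
    Tendsto f l (nhds 0) := by
  refine Metric.tendsto_nhds.2 fun ε hε => ?_
  obtain ⟨g, hg, hfg⟩ := hf (ε / 2) (half_pos hε)
  filter_upwards [hfg, Metric.tendsto_nhds.1 hg (ε / 2) (half_pos hε)] with a hfa hga
  rw [Real.dist_eq, sub_zero] at hga ⊢
  linarith [abs_sub_abs_le_abs_sub (f a) (g a)]

variable {μ : Measure ℝ} [IsProbabilityMeasure μ] {p : ℝ → ℝ} {M B C δ : ℝ}

lemma measureReal_maxLaw_Ioi_mono {m n : ℕ} (hmn : m ≤ n) (u : ℝ) :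
    (maxLaw μ m).real (Ioi u) ≤ (maxLaw μ n).real (Ioi u) := by
  rw [← compl_Iic, probReal_compl_eq_one_sub measurableSet_Iic,
    probReal_compl_eq_one_sub measurableSet_Iic]
  exact sub_le_sub_left (ENNReal.toReal_mono (by finiteness) (antitone_maxLaw_Iic u hmn)) 1

namespace HasPosWeightedBounds

lemma abs_tailPart_sub_le (hb : HasPosWeightedBounds μ p C) (h : HasBoundedDensity μ p M)
    (hδ : 0 < δ) (n : ℕ) (y y' : ℝ) :
    |tailPart μ p δ n y - tailPart μ p δ n y'| ≤ C * (|y - y'| + 1) / √(δ * (n + 1)) / δ := by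
  have hC := hb.nonneg h
  rw [tailPart, tailPart, ← Finset.sum_sub_distrib]
  simp only [← mul_sub]
  refine abs_sum_inv_mul_le hδ (by positivity) fun i _ hδi => ?_
  rw [convDensity, convDensity, ← integral_sub (h.integrable_posWeightedDensity_comp_sub _ _ _)
    (h.integrable_posWeightedDensity_comp_sub _ _ _), ← Real.norm_eq_abs]
  refine (norm_integral_le_of_norm_le_const (.of_forall fun u =>
    (hb.abs_sub_le i (y - u) (y' - u)).trans ?_)).trans_eq (by rw [probReal_univ, mul_one])
  rw [sub_sub_sub_cancel_right]
  gcongr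

lemma convDensity_maxLaw_sqrt_mul_le (hb : HasPosWeightedBounds μ p C)
    (h : HasBoundedDensity μ p M) (hc : IsCentered μ 1) {n k : ℕ} (hk : k < n) {x : ℝ}
    (hx : 0 < x) :
    convDensity (posWeightedDensity μ p (k + 1)) (maxLaw μ (n - (k + 1))) (√(n + 1) * x) ≤
      6 * C / x := by
  have hC := hb.nonneg h
  set y := √(n + 1) * x
  have : 0 < y := by positivity
  have htail : (maxLaw μ (n - (k + 1))).real (Ioi (y / 2)) ≤ 4 / x :=
    calc (maxLaw μ (n - (k + 1))).real (Ioi (y / 2))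
        ≤ (maxLaw μ (n + 1)).real (Ioi (x / 2 * √(n + 1 : ℕ))) := by
          rw [div_mul_eq_mul_div, mul_comm, Nat.cast_succ]
          exact measureReal_maxLaw_Ioi_mono (by omega) _
      _ ≤ 2 / (x / 2) := measureReal_maxLaw_Ioi_le hc n.succ_ne_zero (half_pos hx)
      _ = 4 / x := by
          field_simp
          norm_num
  have hfar : ∀ u ∉ Ioi (y / 2), posWeightedDensity μ p (k + 1) (y - u) ≤ 2 * C / x := by
    intro u hu
    have hyu : y / 2 ≤ |y - u| := by
      linarith [not_lt.1 (mem_Ioi.not.1 hu), le_abs_self (y - u)]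
    have hmul : posWeightedDensity μ p (k + 1) (y - u) * (y / 2) ≤ C * √(n + 1) := by
      refine (mul_le_mul_of_nonneg_left hyu (h.posWeightedDensity_nonneg _ _)).trans
        ((hb.mul_abs_le k _).trans ?_)
      have : (k + 2 : ℝ) ≤ n + 1 := by exact_mod_cast (by omega : k + 2 ≤ n + 1)
      gcongr
    refine (le_div_iff₀ (by positivity)).2 hmul |>.trans_eq ?_
    simp only [y]
    field_simp
  refine (integral_le_measureReal_mul_add (h.integrable_posWeightedDensity_comp_sub _ _ y)
    measurableSet_Ioi (by positivity) (fun u _ => hb.le k _) hfar).trans ?_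
  calc (maxLaw μ (n - (k + 1))).real (Ioi (y / 2)) * C + 2 * C / x
      ≤ 4 / x * C + 2 * C / x := by gcongr
    _ = 6 * C / x := by ring

lemma abs_tailPart_sqrt_mul_le (hb : HasPosWeightedBounds μ p C) (h : HasBoundedDensity μ p M)
    (hc : IsCentered μ 1) (hδ : 0 < δ) (n : ℕ) {x : ℝ} (hx : 0 < x) :
    |tailPart μ p δ n (√(n + 1) * x)| ≤ 6 * C / x / δ := by
  have hC := hb.nonneg h
  refine abs_sum_inv_mul_le hδ (by positivity) fun i hi _ => ?_
  rw [abs_of_nonneg (h.convDensity_posWeightedDensity_nonneg _ _ _)]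
  exact hb.convDensity_maxLaw_sqrt_mul_le h hc hi hx

end HasPosWeightedBounds

/-- `regularPart μ p n` on the scale `√(n + 1)` of the maximum of `n + 1` partial sums. -/
noncomputable def scaledRegularPart (μ : Measure ℝ) (p : ℝ → ℝ) (n : ℕ) (x : ℝ) : ℝ :=
  regularPart μ p n (√(n + 1) * x)

namespace HasPosWeightedBounds

lemma tendsto_scaledRegularPart_sub (hb : HasPosWeightedBounds μ p C)
    (h : HasBoundedDensity μ p M) (hc : IsCentered μ 1) (hB : HasConcentration μ B) :
    Tendsto (fun q : ℕ × ℝ × ℝ =>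
      scaledRegularPart μ p q.1 q.2.1 - scaledRegularPart μ p q.1 q.2.2)
      (atTop ×ˢ uniformity ℝ) (nhds 0) := by
  refine tendsto_zero_of_forall_exists_eventually_abs_sub_le fun ε hε => ?_
  obtain ⟨δ, hδ, hsplit⟩ := hb.exists_eventually_abs_regularPart_sub_tailPart_le h hc hB
    (half_pos hε)
  refine ⟨fun q => tailPart μ p δ q.1 (√(q.1 + 1) * q.2.1) -
    tailPart μ p δ q.1 (√(q.1 + 1) * q.2.2), ?_, ?_⟩
  · refine squeeze_zero_norm (a := fun q : ℕ × ℝ × ℝ => C / √δ / δ * dist q.2.1 q.2.2 +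
      C / √(δ * (q.1 + 1)) / δ) (fun q => ?_) ?_
    · have hs : (0 : ℝ) < √(q.1 + 1) := by positivity
      refine (hb.abs_tailPart_sub_le h hδ q.1 _ _).trans_eq ?_
      rw [← mul_sub, abs_mul, abs_of_pos hs, Real.sqrt_mul hδ.le, Real.dist_eq]
      field_simp
    · have hdist : Tendsto (fun q : ℕ × ℝ × ℝ => dist q.2.1 q.2.2) (atTop ×ˢ uniformity ℝ)
          (nhds 0) := tendsto_uniformity_iff_dist_tendsto_zero.1 tendsto_snd
      have hsqrt : Tendsto (fun q : ℕ × ℝ × ℝ => √(δ * ((q.1 : ℝ) + 1)))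
          (atTop ×ˢ uniformity ℝ) atTop :=
        Real.tendsto_sqrt_atTop.comp <| (tendsto_atTop_add_const_right _ _
          (tendsto_natCast_atTop_atTop.comp tendsto_fst)).const_mul_atTop hδ
      simpa using (hdist.const_mul _).add ((tendsto_const_nhds.div_atTop hsqrt).div_const δ)
  · filter_upwards [tendsto_fst.eventually hsplit] with q hq
    have h₁ := hq (√(q.1 + 1) * q.2.1)
    have h₂ := hq (√(q.1 + 1) * q.2.2)
    rw [abs_le] at *
    simp only [scaledRegularPart]
    constructor <;> linarith

lemma tendsto_scaledRegularPart_atTop (hb : HasPosWeightedBounds μ p C)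
    (h : HasBoundedDensity μ p M) (hc : IsCentered μ 1) (hB : HasConcentration μ B) :
    Tendsto (fun q : ℕ × ℝ => scaledRegularPart μ p q.1 q.2) (atTop ×ˢ atTop) (nhds 0) := by
  refine tendsto_zero_of_forall_exists_eventually_abs_sub_le fun ε hε => ?_
  obtain ⟨δ, hδ, hsplit⟩ := hb.exists_eventually_abs_regularPart_sub_tailPart_le h hc hB hε
  refine ⟨fun q => tailPart μ p δ q.1 (√(q.1 + 1) * q.2), ?_, ?_⟩
  · refine squeeze_zero_norm' (a := fun q : ℕ × ℝ => 6 * C / q.2 / δ) ?_ ?_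
    · filter_upwards [tendsto_snd.eventually (eventually_gt_atTop 0)] with q hq
      exact hb.abs_tailPart_sqrt_mul_le h hc hδ q.1 hq
    · have := (tendsto_const_nhds (x := 6 * C)).div_atTop
        (tendsto_snd (f := (atTop : Filter ℕ)) (g := (atTop : Filter ℝ)))
      simpa using this.div_const δ
  · filter_upwards [tendsto_fst.eventually hsplit] with q hq
    exact hq _

end HasPosWeightedBounds

end ScaledRegularPart

section Tauberian

lemma abs_sub_mul_log_le_abs_integral_div {f : ℝ → ℝ} {x y d ε : ℝ} (hx : 0 < x) (hxy : x ≤ y)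
    (hf : IntervalIntegrable (fun t => f t / t) volume x y)
    (hε : ∀ t ∈ Ioc x y, |f t - d| ≤ ε) :
    (|d| - ε) * Real.log (y / x) ≤ |∫ t in x..y, f t / t| := by
  have hlog : ∫ t in x..y, t⁻¹ = Real.log (y / x) := integral_inv_of_pos hx (hx.trans_le hxy)
  have hlog0 : 0 ≤ Real.log (y / x) := Real.log_nonneg ((one_le_div hx).2 hxy)
  have hinv : IntervalIntegrable (fun t : ℝ => t⁻¹) volume x y :=
    intervalIntegral.intervalIntegrable_inv
      (fun t ht => ((lt_inf_iff.2 ⟨hx, hx.trans_le hxy⟩).trans_le ht.1).ne') continuousOn_id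
  have hdiff : |(∫ t in x..y, f t / t) - d * Real.log (y / x)| ≤ ε * Real.log (y / x) := by
    rw [← hlog, ← intervalIntegral.integral_const_mul, ← intervalIntegral.integral_const_mul,
      ← intervalIntegral.integral_sub hf (hinv.const_mul d), ← Real.norm_eq_abs]
    refine intervalIntegral.norm_integral_le_of_norm_le hxy (.of_forall fun t ht => ?_)
      (hinv.const_mul ε)
    have ht0 : 0 < t := hx.trans ht.1
    rw [div_eq_mul_inv, ← sub_mul, Real.norm_eq_abs, abs_mul, abs_of_pos (inv_pos.2 ht0)]
    exact mul_le_mul_of_nonneg_right (hε t ht) (inv_pos.2 ht0).le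
  have habs : |d * Real.log (y / x)| = |d| * Real.log (y / x) := by
    rw [abs_mul, abs_of_nonneg hlog0]
  rw [abs_sub_comm] at hdiff
  linarith [abs_sub_abs_le_abs_sub (d * Real.log (y / x)) (∫ t in x..y, f t / t)]

variable {ι : Type*} {l : Filter ι} {D : ι → ℝ → ℝ}

lemma exists_eventually_abs_sub_lt_of_tendsto_uniformity
    (hD : Tendsto (fun q : ι × ℝ × ℝ => D q.1 q.2.1 - D q.1 q.2.2) (l ×ˢ uniformity ℝ) (nhds 0))
    {ε : ℝ} (hε : 0 < ε) :
    ∃ ρ > 0, ∀ᶠ i in l, ∀ x y, |x - y| < ρ → |D i x - D i y| < ε := by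
  obtain ⟨P, hP, Q, hQ, hPQ⟩ := eventually_prod_iff.1 (Metric.tendsto_nhds.1 hD ε hε)
  obtain ⟨ρ, hρ, hρQ⟩ := Metric.uniformity_basis_dist.eventually_iff.1 hQ
  refine ⟨ρ, hρ, hP.mono fun i hi x y hxy => ?_⟩
  simpa only [Real.dist_eq, sub_zero] using hPQ hi (hρQ (x := (x, y)) hxy)

lemma tendsto_zero_of_tendsto_integral_div
    (hD : Tendsto (fun q : ι × ℝ × ℝ => D q.1 q.2.1 - D q.1 q.2.2) (l ×ˢ uniformity ℝ) (nhds 0))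
    (hint : ∀ i a b, 0 < a → a ≤ b → IntervalIntegrable (fun t => D i t / t) volume a b)
    (hlim : ∀ a b, 0 < a → a ≤ b → Tendsto (fun i => ∫ t in a..b, D i t / t) l (nhds 0))
    {x : ℝ} (hx : 0 < x) : Tendsto (fun i => D i x) l (nhds 0) := by
  refine Metric.tendsto_nhds.2 fun ε hε => ?_
  obtain ⟨ρ, hρ, hequi⟩ := exists_eventually_abs_sub_lt_of_tendsto_uniformity hD (half_pos hε)
  have hxy : x < x + ρ / 2 := by linarith
  have hlog : 0 < Real.log ((x + ρ / 2) / x) := Real.log_pos ((one_lt_div hx).2 hxy)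
  filter_upwards [hequi, Metric.tendsto_nhds.1 (hlim x (x + ρ / 2) hx hxy.le) _
    (mul_pos (half_pos hε) hlog)] with i hi hsmall
  rw [Real.dist_eq, sub_zero] at hsmall ⊢
  have hbound := abs_sub_mul_log_le_abs_integral_div hx hxy.le (hint i _ _ hx hxy.le)
    fun t ht => (hi t x (abs_lt.2 ⟨by linarith [ht.1], by linarith [ht.2]⟩)).le
  linarith [lt_of_mul_lt_mul_right (hbound.trans_lt hsmall) hlog.le]

theorem tendstoUniformlyOn_Ioi_of_tendsto_integral_div
    (hD : Tendsto (fun q : ι × ℝ × ℝ => D q.1 q.2.1 - D q.1 q.2.2) (l ×ˢ uniformity ℝ) (nhds 0))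
    (htop : Tendsto (fun q : ι × ℝ => D q.1 q.2) (l ×ˢ atTop) (nhds 0))
    (hint : ∀ i a b, 0 < a → a ≤ b → IntervalIntegrable (fun t => D i t / t) volume a b)
    (hlim : ∀ a b, 0 < a → a ≤ b → Tendsto (fun i => ∫ t in a..b, D i t / t) l (nhds 0)) :
    TendstoUniformlyOn D 0 l (Ioi 0) := by
  refine Metric.tendstoUniformlyOn_iff.2 fun ε hε => ?_
  simp only [Pi.zero_apply, dist_zero_left, Real.norm_eq_abs]
  obtain ⟨ρ, hρ, hequi⟩ := exists_eventually_abs_sub_lt_of_tendsto_uniformity hD (half_pos hε)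
  obtain ⟨P, hP, Q, hQ, hPQ⟩ := eventually_prod_iff.1 (Metric.tendsto_nhds.1 htop ε hε)
  obtain ⟨A, hA⟩ := eventually_atTop.1 hQ
  obtain ⟨t, htA, htfin, htcover⟩ :=
    Metric.finite_approx_of_totallyBounded (totallyBounded_Ioo 0 A) ρ hρ
  have hnet : ∀ᶠ i in l, ∀ y ∈ t, |D i y| < ε / 2 := by
    refine (eventually_all_finite htfin).2 fun y hy => ?_
    simpa only [dist_zero_right, Real.norm_eq_abs] using Metric.tendsto_nhds.1
      (tendsto_zero_of_tendsto_integral_div hD hint hlim (htA hy).1) _ (half_pos hε)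
  filter_upwards [hequi, hP, hnet] with i hi hPi hneti x hx
  rcases le_or_gt A x with hAx | hxA
  · simpa only [dist_zero_right, Real.norm_eq_abs] using hPQ hPi (hA x hAx)
  · obtain ⟨y, hy, hxy⟩ := mem_iUnion₂.1 (htcover ⟨hx, hxA⟩)
    linarith [abs_sub_abs_le_abs_sub (D i x) (D i y), hi x y hxy, hneti y hy]

end Tauberian

section HalfNormal

/-- The density `φ₊` of the absolute value of a standard normal variable, on `(0, ∞)`. -/
noncomputable def halfNormalPDF (x : ℝ) : ℝ := √(2 / Real.pi) * Real.exp (-x ^ 2 / 2)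

lemma halfNormalPDF_eq_two_mul_gaussianPDFReal (x : ℝ) :
    halfNormalPDF x = 2 * gaussianPDFReal 0 1 x := by
  have hsqrt : √(2 / Real.pi) = 2 * (√(2 * Real.pi))⁻¹ := by
    rw [Real.sqrt_div zero_le_two, Real.sqrt_mul zero_le_two]
    field_simp
    rw [Real.sq_sqrt zero_le_two]
  simp only [halfNormalPDF, gaussianPDFReal, hsqrt, sub_zero, NNReal.coe_one, mul_one, mul_assoc]

lemma continuous_mul_halfNormalPDF : Continuous fun x => x * halfNormalPDF x := by
  unfold halfNormalPDF
  fun_prop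

lemma tendsto_mul_halfNormalPDF_cocompact :
    Tendsto (fun x => x * halfNormalPDF x) (cocompact ℝ) (nhds 0) := by
  have := (tendsto_rpow_abs_mul_exp_neg_mul_sq_cocompact (one_half_pos (α := ℝ)) 1).const_mul
    √(2 / Real.pi)
  rw [mul_zero] at this
  refine squeeze_zero_norm (fun x => le_of_eq ?_) this
  have hpos : 0 ≤ halfNormalPDF x := by unfold halfNormalPDF; positivity
  rw [Real.norm_eq_abs, abs_mul, abs_of_nonneg hpos, halfNormalPDF, Real.rpow_one, mul_left_comm]
  congr 4
  ring

lemma uniformContinuous_mul_halfNormalPDF : UniformContinuous fun x => x * halfNormalPDF x :=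
  continuous_mul_halfNormalPDF.uniformContinuous_of_tendsto_cocompact
    tendsto_mul_halfNormalPDF_cocompact

lemma tendsto_mul_halfNormalPDF_sub_uniformity :
    Tendsto (fun q : ℝ × ℝ => q.1 * halfNormalPDF q.1 - q.2 * halfNormalPDF q.2) (uniformity ℝ)
      (nhds 0) := by
  have hdist := tendsto_uniformity_iff_dist_tendsto_zero.1 uniformContinuous_mul_halfNormalPDF
  exact tendsto_zero_iff_norm_tendsto_zero.2 (hdist.congr fun q => dist_eq_norm _ _)

lemma intervalIntegrable_mul_halfNormalPDF_div {a b : ℝ} (ha : 0 < a) (hab : a ≤ b) :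
    IntervalIntegrable (fun x => x * halfNormalPDF x / x) volume a b :=
  (continuous_mul_halfNormalPDF.continuousOn.div continuousOn_id
    fun _ hx => (ha.trans_le hx.1).ne').intervalIntegrable_of_Icc hab

lemma integral_mul_halfNormalPDF_div {a b : ℝ} (ha : 0 < a) (hab : a ≤ b) :
    ∫ x in a..b, x * halfNormalPDF x / x = ∫ x in a..b, halfNormalPDF x := by
  refine intervalIntegral.integral_congr fun x hx => ?_
  rw [uIcc_of_le hab] at hx
  exact mul_div_cancel_left₀ _ (ha.trans_le hx.1).ne'

lemma gaussianReal_real_Ioi_sub {a b : ℝ} (hab : a ≤ b) :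
    2 * (gaussianReal 0 1).real (Ioi a) - 2 * (gaussianReal 0 1).real (Ioi b) =
      ∫ x in a..b, halfNormalPDF x := by
  rw [← mul_sub, ← measureReal_sdiff (Ioi_subset_Ioi hab) measurableSet_Ioi,
    Ioi_sdiff_Ioi, Measure.real, gaussianReal_apply_eq_integral 0 one_ne_zero, ENNReal.toReal_ofReal
      (integral_nonneg fun x => gaussianPDFReal_nonneg 0 1 x),
    intervalIntegral.integral_of_le hab, ← integral_const_mul]
  simp only [halfNormalPDF_eq_two_mul_gaussianPDFReal]

end HalfNormal

section ScaledDensity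

lemma map_div_withDensity {c : ℝ} (hc : 0 < c) {f : ℝ → ℝ} (hf : Measurable f) :
    (volume.withDensity fun y => ENNReal.ofReal (f y)).map (· / c) =
      volume.withDensity fun x => ENNReal.ofReal (c * f (c * x)) := by
  refine Measure.ext_of_lintegral _ fun g hg => ?_
  rw [lintegral_map hg (by fun_prop), lintegral_withDensity_eq_lintegral_mul _ (by fun_prop)
      (by fun_prop), lintegral_withDensity_eq_lintegral_mul _ (by fun_prop) hg]
  nth_rw 1 [← Real.smul_map_volume_mul_left hc.ne']
  rw [lintegral_smul_measure, lintegral_map (by fun_prop) (by fun_prop), abs_of_pos hc, smul_eq_mul,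
    ← lintegral_const_mul _ (by fun_prop)]
  refine lintegral_congr fun x => ?_
  simp only [Pi.mul_apply]
  rw [mul_div_cancel_left₀ _ hc.ne', ENNReal.ofReal_mul hc.le, mul_assoc]

lemma restrict_Ioi_map_div (ν : Measure ℝ) {c : ℝ} (hc : 0 < c) :
    (ν.map (· / c)).restrict (Ioi 0) = (ν.restrict (Ioi 0)).map (· / c) := by
  rw [Measure.restrict_map (by fun_prop) measurableSet_Ioi]
  congr 2
  ext y
  simp [hc]

section SetIntegral

variable {ν : Measure ℝ} {f : ℝ → ℝ} {s : Set ℝ}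

lemma integrableOn_of_restrict_eq_withDensity [IsFiniteMeasure ν]
    (h : ν.restrict s = (volume.withDensity fun x => ENNReal.ofReal (f x)).restrict s)
    (hf : Measurable f) (hs : MeasurableSet s) (hf0 : ∀ x ∈ s, 0 ≤ f x) : IntegrableOn f s := by
  refine (lintegral_ofReal_ne_top_iff_integrable hf.aestronglyMeasurable
    ((ae_restrict_iff' hs).2 (.of_forall hf0))).1 ?_
  rw [← withDensity_apply _ hs, ← Measure.restrict_apply_self, ← h]
  finiteness

lemma setIntegral_of_restrict_eq_withDensity
    (h : ν.restrict s = (volume.withDensity fun x => ENNReal.ofReal (f x)).restrict s)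
    (hf : Measurable f) (hf0 : ∀ x ∈ s, 0 ≤ f x) {t : Set ℝ} (ht : MeasurableSet t) (hts : t ⊆ s) :
    ∫ x in t, f x = ν.real t := by
  rw [integral_eq_lintegral_of_nonneg_ae
      ((ae_restrict_iff' ht).2 (.of_forall fun x hx => hf0 x (hts hx))) hf.aestronglyMeasurable,
    ← withDensity_apply _ ht, ← Measure.restrict_eq_self _ hts, ← h,
    Measure.restrict_eq_self _ hts, Measure.real]

end SetIntegral

lemma restrict_Ioi_of_posWeighted_eq_withDensity {ν : Measure ℝ} {f : ℝ → ℝ} (hf : Measurable f)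
    (h : posWeighted ν = volume.withDensity fun y => ENNReal.ofReal (f y)) :
    ν.restrict (Ioi 0) =
      (volume.withDensity fun y => ENNReal.ofReal (f y / y)).restrict (Ioi 0) := by
  have hinv : ν.restrict (Ioi 0) =
      ((posWeighted ν).restrict (Ioi 0)).withDensity fun y => (ENNReal.ofReal y)⁻¹ := by
    rw [posWeighted, restrict_withDensity measurableSet_Ioi, withDensity_inv_same (by fun_prop)]
    · filter_upwards [ae_restrict_mem measurableSet_Ioi] with y hy
      simpa using hy
    · simp
  rw [hinv, h, restrict_withDensity measurableSet_Ioi, restrict_withDensity measurableSet_Ioi,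
    ← withDensity_mul _ (by fun_prop) (by fun_prop)]
  refine withDensity_congr_ae ?_
  filter_upwards [ae_restrict_mem measurableSet_Ioi] with y hy
  rw [Pi.mul_apply, ENNReal.ofReal_div_of_pos hy, ENNReal.div_eq_inv_mul, mul_comm]

variable {μ : Measure ℝ} {p : ℝ → ℝ} {M : ℝ}

lemma HasBoundedDensity.map_div (h : HasBoundedDensity μ p M) {c : ℝ} (hc : 0 < c) :
    μ.map (· / c) = volume.withDensity fun x => ENNReal.ofReal (c * p (c * x)) := by
  rw [h.eq_withDensity, map_div_withDensity hc h.measurable]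

variable [IsProbabilityMeasure μ]

namespace HasBoundedDensity

lemma regularPart_nonneg (h : HasBoundedDensity μ p M) (n : ℕ) (y : ℝ) : 0 ≤ regularPart μ p n y :=
  add_nonneg (integral_nonneg fun _ => h.posWeightedDensity_nonneg 0 _)
    (Finset.sum_nonneg fun _ _ =>
      mul_nonneg (by positivity) (h.convDensity_posWeightedDensity_nonneg _ _ y))

lemma measurable_regularPart (h : HasBoundedDensity μ p M) (n : ℕ) :
    Measurable (regularPart μ p n) := by
  refine Measurable.add ?_ (Finset.measurable_sum _ fun i _ =>
    (h.measurable_convDensity_posWeightedDensity _ _).const_mul _)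
  exact (StronglyMeasurable.integral_prod_right (f := fun y u => posWeightedDensity μ p 0 (y - u))
    ((h.measurable_posWeightedDensity 0).comp
      (measurable_fst.sub measurable_snd)).stronglyMeasurable).measurable

lemma scaledRegularPart_nonneg (h : HasBoundedDensity μ p M) (n : ℕ) (x : ℝ) :
    0 ≤ scaledRegularPart μ p n x := h.regularPart_nonneg n _

lemma measurable_scaledRegularPart (h : HasBoundedDensity μ p M) (n : ℕ) :
    Measurable (scaledRegularPart μ p n) :=
  (h.measurable_regularPart n).comp (measurable_const_mul _)

end HasBoundedDensity

/-- The density of `maxLaw μ (n + 1)`, rescaled by `√(n + 1)`, on `(0, ∞)`: the sum of the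
singular term `P(maximum of n steps = 0) · √(n + 1) p(√(n + 1) x)` and of a regular term. -/
noncomputable def scaledMaxDensity (μ : Measure ℝ) (p : ℝ → ℝ) (n : ℕ) (x : ℝ) : ℝ :=
  (maxLaw μ n).real {0} * (√(n + 1) * p (√(n + 1) * x)) + scaledRegularPart μ p n x / x

namespace HasBoundedDensity

lemma measurable_scaledMaxDensity (h : HasBoundedDensity μ p M) (n : ℕ) :
    Measurable (scaledMaxDensity μ p n) := by
  have := h.measurable
  have := h.measurable_scaledRegularPart n
  unfold scaledMaxDensity
  fun_prop

lemma scaledMaxDensity_nonneg (h : HasBoundedDensity μ p M) (n : ℕ) {x : ℝ} (hx : 0 ≤ x) :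
    0 ≤ scaledMaxDensity μ p n x := by
  have := h.nonneg (√(n + 1) * x)
  have := h.scaledRegularPart_nonneg n x
  unfold scaledMaxDensity
  positivity

theorem restrict_Ioi_map_maxLaw_succ (h : HasBoundedDensity μ p M) (n : ℕ) :
    ((maxLaw μ (n + 1)).map (· / √(n + 1))).restrict (Ioi 0) =
      (volume.withDensity fun x => ENNReal.ofReal (scaledMaxDensity μ p n x)).restrict (Ioi 0) := by
  have hc : 0 < √((n : ℝ) + 1) := by positivity
  have hp := h.measurable
  have hr := h.measurable_regularPart n
  rw [restrict_Ioi_map_div _ hc, restrict_Ioi_of_posWeighted_eq_withDensity (by fun_prop)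
    (h.posWeighted_maxLaw_succ_eq_withDensity n), ← restrict_Ioi_map_div _ hc,
    map_div_withDensity hc (by fun_prop), restrict_withDensity measurableSet_Ioi,
    restrict_withDensity measurableSet_Ioi]
  refine withDensity_congr_ae ?_
  filter_upwards [ae_restrict_mem measurableSet_Ioi] with x hx
  have hx0 : 0 < x := hx
  rw [max_eq_left (by positivity), scaledMaxDensity, scaledRegularPart]
  congr 1
  field_simp

lemma integrableOn_scaledMaxDensity (h : HasBoundedDensity μ p M) (n : ℕ) :
    IntegrableOn (scaledMaxDensity μ p n) (Ioi 0) :=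
  integrableOn_of_restrict_eq_withDensity (h.restrict_Ioi_map_maxLaw_succ n)
    (h.measurable_scaledMaxDensity n) measurableSet_Ioi
    fun _ hx => h.scaledMaxDensity_nonneg n (mem_Ioi.1 hx).le

lemma integrableOn_scaledRegularPart_div (h : HasBoundedDensity μ p M) (n : ℕ) :
    IntegrableOn (fun x => scaledRegularPart μ p n x / x) (Ioi 0) := by
  have hp : Integrable fun x => (maxLaw μ n).real {0} * (√(n + 1) * p (√(n + 1) * x)) :=
    ((h.integrable.comp_mul_left' (by positivity)).const_mul _).const_mul _
  refine ((h.integrableOn_scaledMaxDensity n).sub hp.integrableOn).congr_fun (fun x _ => ?_)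
    measurableSet_Ioi
  simp [scaledMaxDensity]

lemma setIntegral_scaledRegularPart_div (h : HasBoundedDensity μ p M) (n : ℕ) {s : Set ℝ}
    (hs : MeasurableSet s) (hs0 : s ⊆ Ioi 0) :
    ∫ x in s, scaledRegularPart μ p n x / x = ((maxLaw μ (n + 1)).map (· / √(n + 1))).real s -
      (maxLaw μ n).real {0} * (μ.map (· / √(n + 1))).real s := by
  have hc : 0 < √((n : ℝ) + 1) := by positivity
  have hp := h.measurable
  have hsingular : ∫ x in s, √(n + 1) * p (√(n + 1) * x) = (μ.map (· / √(n + 1))).real s :=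
    setIntegral_of_restrict_eq_withDensity (s := univ) (by rw [h.map_div hc]) (by fun_prop)
      (fun x _ => mul_nonneg hc.le (h.nonneg _)) hs (subset_univ s)
  have htotal := setIntegral_of_restrict_eq_withDensity (h.restrict_Ioi_map_maxLaw_succ n)
    (h.measurable_scaledMaxDensity n)
    (fun _ hx => h.scaledMaxDensity_nonneg n (mem_Ioi.1 hx).le) hs hs0
  rw [← htotal, ← hsingular, eq_sub_iff_add_eq', ← integral_const_mul]
  exact (integral_add
    (((h.integrable.comp_mul_left' hc.ne').const_mul _).const_mul _).integrableOn
    ((h.integrableOn_scaledRegularPart_div n).mono_set hs0)).symm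

end HasBoundedDensity

lemma measureReal_map_div_Ioc {ν : Measure ℝ} [IsFiniteMeasure ν] {a b c : ℝ} (hc : 0 < c)
    (hab : a ≤ b) :
    (ν.map (· / c)).real (Ioc a b) = ν.real (Ioi (a * c)) - ν.real (Ioi (b * c)) := by
  rw [map_measureReal_apply (by fun_prop) measurableSet_Ioc,
    ← measureReal_sdiff (Ioi_subset_Ioi (by gcongr)) measurableSet_Ioi, Ioi_sdiff_Ioi]
  congr 1
  ext y
  simp [lt_div_iff₀ hc, div_le_iff₀ hc]

lemma IsCentered.tendsto_map_div_sqrt_Ioc (hc : IsCentered μ 1) {a b : ℝ} (ha : 0 < a) :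
    Tendsto (fun n : ℕ => (μ.map (· / √(n + 1))).real (Ioc a b)) atTop (nhds 0) := by
  have hbound : Tendsto (fun n : ℕ => 1 / a ^ 2 * (1 / ((n : ℝ) + 1))) atTop (nhds 0) := by
    simpa only [mul_zero] using
      (tendsto_one_div_add_atTop_nhds_zero_nat (𝕜 := ℝ)).const_mul (1 / a ^ 2)
  refine squeeze_zero (fun n => measureReal_nonneg) (fun n => ?_) hbound
  have hsqrt : 0 < √((n : ℝ) + 1) := by positivity
  calc (μ.map (· / √(n + 1))).real (Ioc a b) = μ.real ((· / √(n + 1)) ⁻¹' Ioc a b) :=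
        map_measureReal_apply (by fun_prop) measurableSet_Ioc
    _ ≤ μ.real {y | a * √(n + 1) ≤ |y|} := measureReal_mono fun y hy =>
        ((lt_div_iff₀ hsqrt).1 hy.1).le.trans (le_abs_self y)
    _ ≤ 1 / (a * √(n + 1)) ^ 2 := hc.measureReal_le_abs_le (by positivity)
    _ = 1 / a ^ 2 * (1 / ((n : ℝ) + 1)) := by
        rw [mul_pow, Real.sq_sqrt (by positivity), one_div_mul_one_div]

namespace HasBoundedDensity

lemma intervalIntegrable_scaledRegularPart_div (h : HasBoundedDensity μ p M) (n : ℕ) {a b : ℝ}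
    (ha : 0 < a) (hab : a ≤ b) :
    IntervalIntegrable (fun x => scaledRegularPart μ p n x / x) volume a b :=
  (intervalIntegrable_iff_integrableOn_Ioc_of_le hab).2 <|
    (h.integrableOn_scaledRegularPart_div n).mono_set fun _ hx => ha.trans hx.1

lemma tendsto_integral_scaledRegularPart_div (h : HasBoundedDensity μ p M) (hc : IsCentered μ 1)
    {a b : ℝ} (ha : 0 < a) (hab : a ≤ b) :
    Tendsto (fun n => ∫ x in a..b, scaledRegularPart μ p n x / x) atTop
      (nhds (∫ x in a..b, halfNormalPDF x)) := by
  have htail {x : ℝ} (hx : 0 ≤ x) := (tendsto_add_atTop_iff_nat 1).2 (tendsto_maxLaw_Ioi hc hx)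
  have hsingular : Tendsto (fun n : ℕ => (maxLaw μ n).real {0} * (μ.map (· / √(n + 1))).real
      (Ioc a b)) atTop (nhds 0) :=
    squeeze_zero (fun n => by positivity)
      (fun n => mul_le_of_le_one_left measureReal_nonneg measureReal_le_one)
      (hc.tendsto_map_div_sqrt_Ioc ha)
  have hlim := ((htail ha.le).sub (htail (ha.le.trans hab))).sub hsingular
  rw [sub_zero, gaussianReal_real_Ioi_sub hab] at hlim
  refine hlim.congr fun n => ?_
  rw [intervalIntegral.integral_of_le hab, h.setIntegral_scaledRegularPart_div n measurableSet_Ioc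
    (fun _ hx => ha.trans hx.1), measureReal_map_div_Ioc (ν := maxLaw μ (n + 1)) (by positivity)
    hab, Nat.cast_succ]

theorem tendstoUniformlyOn_scaledRegularPart (h : HasBoundedDensity μ p M)
    (hc : IsCentered μ 1) :
    TendstoUniformlyOn (scaledRegularPart μ p) (fun x => x * halfNormalPDF x) atTop (Ioi 0) := by
  obtain ⟨C, hl⟩ := h.exists_hasLocalBounds hc
  obtain ⟨B, hB⟩ := hl.exists_hasConcentration h hc
  have hb := hl.hasPosWeightedBounds h hc
  have hdiff : TendstoUniformlyOn (fun n x => scaledRegularPart μ p n x - x * halfNormalPDF x) 0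
      atTop (Ioi 0) := by
    refine tendstoUniformlyOn_Ioi_of_tendsto_integral_div ?_ ?_ (fun n a b ha hab => ?_)
      fun a b ha hab => ?_
    · have hequi := (hb.tendsto_scaledRegularPart_sub h hc hB).sub
        (tendsto_mul_halfNormalPDF_sub_uniformity.comp tendsto_snd)
      rw [sub_zero] at hequi
      exact hequi.congr fun q => sub_sub_sub_comm ..
    · simpa only [sub_zero, Function.comp_apply] using
        (hb.tendsto_scaledRegularPart_atTop h hc hB).sub
          ((tendsto_mul_halfNormalPDF_cocompact.mono_left atTop_le_cocompact).comp tendsto_snd)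
    · simpa only [sub_div] using (h.intervalIntegrable_scaledRegularPart_div n ha hab).sub
        (intervalIntegrable_mul_halfNormalPDF_div ha hab)
    · simp only [sub_div, intervalIntegral.integral_sub
        (h.intervalIntegrable_scaledRegularPart_div _ ha hab)
        (intervalIntegrable_mul_halfNormalPDF_div ha hab), integral_mul_halfNormalPDF_div ha hab]
      exact tendsto_sub_nhds_zero_iff.2 (h.tendsto_integral_scaledRegularPart_div hc ha hab)
  refine Metric.tendstoUniformlyOn_iff.2 fun ε hε => ?_
  simpa only [Pi.zero_apply, dist_zero_left, dist_comm (_ * _), dist_eq_norm, zero_sub,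
    norm_neg] using Metric.tendstoUniformlyOn_iff.1 hdiff ε hε

end HasBoundedDensity

end ScaledDensity

section RandomWalk

/-- The maximum of `0` and of the first `n` partial sums of `x`, encoded by Lindley's recursion to
match `maxLaw`. -/
noncomputable def runMax : ℕ → (ℕ → ℝ) → ℝ
  | 0, _ => 0
  | n + 1, x => max (x 0 + runMax n fun i => x (i + 1)) 0

lemma runMax_le_iff {n : ℕ} {x : ℕ → ℝ} {t : ℝ} :
    runMax n x ≤ t ↔ ∀ k ≤ n, ∑ i ∈ Finset.range k, x i ≤ t := by
  induction n generalizing x t with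
  | zero => simp [runMax]
  | succ n ih =>
    rw [runMax, max_le_iff, ← le_sub_iff_add_le', ih, and_comm]
    simp only [le_sub_iff_add_le, ← Finset.sum_range_succ']
    constructor
    · rintro ⟨h0, h⟩ (_ | k) hk
      · simpa only [Finset.range_zero, Finset.sum_empty] using h0
      · exact h k (Nat.le_of_succ_le_succ hk)
    · exact fun h => ⟨by simpa only [Finset.range_zero, Finset.sum_empty] using h 0 (Nat.zero_le _),
        fun k hk => h (k + 1) (Nat.succ_le_succ hk)⟩

lemma sup'_Icc_sum_range_eq (n : ℕ) (x : ℕ → ℝ) (h : (Finset.Icc 1 (n + 1)).Nonempty) :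
    (Finset.Icc 1 (n + 1)).sup' h (fun k => ∑ i ∈ Finset.range k, x i) =
      x 0 + runMax n fun i => x (i + 1) := by
  refine eq_of_forall_ge_iff fun t => ?_
  rw [Finset.sup'_le_iff, ← le_sub_iff_add_le', runMax_le_iff]
  simp only [le_sub_iff_add_le, ← Finset.sum_range_succ', Finset.mem_Icc]
  constructor
  · exact fun h k hk => h (k + 1) ⟨Nat.le_add_left 1 k, Nat.succ_le_succ hk⟩
  · rintro h (_ | k) ⟨hk1, hk⟩
    · exact absurd hk1 (by norm_num)
    · exact h k (Nat.le_of_succ_le_succ hk)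

section Law

variable {Ω : Type*} {X : ℕ → Ω → ℝ}

lemma measurable_runMax_iSup_comap (n i : ℕ) :
    Measurable[⨆ j ∈ Ici i, MeasurableSpace.comap (X j) inferInstance]
      fun ω => runMax n fun j => X (i + j) ω := by
  induction n generalizing i with
  | zero => exact measurable_const
  | succ n ih =>
    have hstep : Measurable[⨆ j ∈ Ici i, MeasurableSpace.comap (X j) inferInstance] (X i) :=
      (comap_measurable (X i)).mono (le_iSup₂_of_le i self_mem_Ici le_rfl) le_rfl
    have hshift : Measurable[⨆ j ∈ Ici i, MeasurableSpace.comap (X j) inferInstance]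
        fun ω => runMax n fun j => X (i + 1 + j) ω :=
      (ih (i + 1)).mono (iSup₂_mono' fun j hj => ⟨j, (Nat.le_succ i).trans hj, le_rfl⟩) le_rfl
    simpa only [runMax, add_zero, add_assoc, add_comm 1, Pi.add_apply] using
      (hstep.add hshift).max measurable_const

variable [MeasurableSpace Ω] {P : Measure Ω}

lemma measurable_runMax (hX : ∀ i, Measurable (X i)) (n i : ℕ) :
    Measurable fun ω => runMax n fun j => X (i + j) ω :=
  (measurable_runMax_iSup_comap n i).mono (iSup₂_le fun j _ => (hX j).comap_le) le_rfl

lemma indepFun_runMax_succ (hX : ∀ i, Measurable (X i)) (hindep : iIndepFun X P) (n i : ℕ) :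
    IndepFun (X i) (fun ω => runMax n fun j => X (i + 1 + j) ω) P := by
  have h := indep_iSup_of_disjoint (fun j => (hX j).comap_le) hindep.iIndep (S := {i})
    (T := Ici (i + 1)) (by simp)
  refine indep_of_indep_of_le_left (indep_of_indep_of_le_right h ?_) ?_
  · exact (measurable_runMax_iSup_comap n (i + 1)).comap_le
  · exact le_iSup₂_of_le i (mem_singleton i) le_rfl

variable [IsProbabilityMeasure P]

lemma map_add_runMax (hX : ∀ i, Measurable (X i)) (hindep : iIndepFun X P) (n i : ℕ) :
    P.map (fun ω => X i ω + runMax n fun j => X (i + 1 + j) ω) =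
      P.map (X i) ∗ P.map (fun ω => runMax n fun j => X (i + 1 + j) ω) :=
  (indepFun_runMax_succ hX hindep n i).map_add_eq_map_conv_map (hX i) (measurable_runMax hX n _)

variable {μ : Measure ℝ}

lemma map_runMax (hX : ∀ i, Measurable (X i)) (hindep : iIndepFun X P)
    (hμ : ∀ i, P.map (X i) = μ) (n i : ℕ) :
    P.map (fun ω => runMax n fun j => X (i + j) ω) = maxLaw μ n := by
  induction n generalizing i with
  | zero => simp [runMax, maxLaw]
  | succ n ih =>
    have hR := measurable_runMax hX n (i + 1)
    have hXi := hX i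
    rw [maxLaw, posPartLaw, ← ih (i + 1), ← hμ i, ← map_add_runMax hX hindep,
      Measure.map_map (by fun_prop) (by fun_prop)]
    congr 1
    ext ω
    simp only [runMax, Function.comp_apply, add_zero, add_assoc, add_comm 1]

lemma measurable_sup'_Icc_sum_range (hX : ∀ i, Measurable (X i)) (n : ℕ)
    (h : (Finset.Icc 1 (n + 1)).Nonempty) :
    Measurable fun ω => (Finset.Icc 1 (n + 1)).sup' h fun k => ∑ i ∈ Finset.range k, X i ω := by
  simp only [sup'_Icc_sum_range_eq]
  exact (hX 0).add (by simpa only [add_comm 1] using measurable_runMax hX n 1)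

theorem map_sup'_Icc_sum_range (hX : ∀ i, Measurable (X i)) (hindep : iIndepFun X P)
    (hμ : ∀ i, P.map (X i) = μ) (n : ℕ) (h : (Finset.Icc 1 (n + 1)).Nonempty) :
    P.map (fun ω => (Finset.Icc 1 (n + 1)).sup' h fun k => ∑ i ∈ Finset.range k, X i ω) =
      μ ∗ maxLaw μ n := by
  have hlaw := map_add_runMax hX hindep n 0
  rw [map_runMax hX hindep hμ, hμ] at hlaw
  simpa only [sup'_Icc_sum_range_eq, zero_add, add_comm 1] using hlaw

end Law

lemma isCentered_map {Ω : Type*} [MeasurableSpace Ω] {P : Measure Ω} {Y : Ω → ℝ}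
    (hY : MemLp Y 2 P) (hmean : ∫ ω, Y ω ∂P = 0) :
    IsCentered (P.map Y) (∫ ω, Y ω ^ 2 ∂P) where
  memLp_id := (memLp_map_measure_iff (by fun_prop) hY.aestronglyMeasurable.aemeasurable).2 hY
  integral_id := by
    rwa [integral_map hY.aestronglyMeasurable.aemeasurable (by fun_prop)]
  variance_id := by
    rw [variance_map (by fun_prop) hY.aestronglyMeasurable.aemeasurable, Function.id_comp,
      variance_of_integral_eq_zero hY.aestronglyMeasurable.aemeasurable hmean]

end RandomWalk

section Density

variable {μ : Measure ℝ} [IsProbabilityMeasure μ] {p : ℝ → ℝ} {M : ℝ}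

namespace HasBoundedDensity

lemma measureReal_lt_zero_eq (h : HasBoundedDensity μ p M) {Ω : Type*} [MeasurableSpace Ω]
    {P : Measure Ω} {Y : Ω → ℝ} {n : ℕ} (hY : Measurable Y) (hlaw : P.map Y = μ ∗ maxLaw μ n) :
    P.real {ω | Y ω < 0} = (maxLaw μ (n + 1)).real {0} := by
  have hac : μ ∗ maxLaw μ n ≪ volume := by
    rw [Measure.conv_comm]
    exact (h.conv (ν := maxLaw μ n)).absolutelyContinuous
  calc P.real {ω | Y ω < 0} = (μ ∗ maxLaw μ n).real (Iio 0) := by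
        rw [← hlaw, map_measureReal_apply hY measurableSet_Iio]; rfl
    _ = (μ ∗ maxLaw μ n).real (Iic 0) := measureReal_congr (hac.ae_eq Iio_ae_eq_Iic)
    _ = (maxLaw μ (n + 1)).real {0} := by
        rw [Measure.real, Measure.real, maxLaw, posPartLaw_singleton_zero]

theorem ae_eq_scaledMaxDensity (h : HasBoundedDensity μ p M) (n : ℕ) {q : ℝ → ℝ}
    (hq : Measurable q) (hq0 : ∀ x, 0 ≤ q x)
    (hqν : (μ ∗ maxLaw μ n).map (· / √(n + 1)) = volume.withDensity fun x => ENNReal.ofReal (q x)) :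
    ∀ᵐ x ∂volume.restrict (Ioi 0), q x = scaledMaxDensity μ p n x := by
  have hpos : (μ ∗ maxLaw μ n).restrict (Ioi 0) = (maxLaw μ (n + 1)).restrict (Ioi 0) :=
    Measure.ext fun s hs => by
      rw [Measure.restrict_apply hs, Measure.restrict_apply hs, maxLaw,
        posPartLaw_apply_of_subset_Ioi (hs.inter measurableSet_Ioi) inter_subset_right]
  have hlaw : (volume.restrict (Ioi 0)).withDensity (fun x => ENNReal.ofReal (q x)) =
      (volume.restrict (Ioi 0)).withDensity
        fun x => ENNReal.ofReal (scaledMaxDensity μ p n x) := by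
    rw [← restrict_withDensity measurableSet_Ioi, ← restrict_withDensity measurableSet_Ioi, ← hqν,
      ← h.restrict_Ioi_map_maxLaw_succ, restrict_Ioi_map_div _ (by positivity), hpos,
      restrict_Ioi_map_div _ (by positivity)]
  have hmeas := h.measurable_scaledMaxDensity n
  filter_upwards [(withDensity_eq_iff_of_sigmaFinite (by fun_prop) (by fun_prop)).1 hlaw,
    ae_restrict_mem measurableSet_Ioi] with x hx hx0
  exact (ENNReal.ofReal_eq_ofReal_iff (hq0 x)
    (h.scaledMaxDensity_nonneg n (mem_Ioi.1 hx0).le)).1 hx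

end HasBoundedDensity

end Density

lemma exists_tendsto_zero_of_tendstoUniformlyOn {α : Type*} {f : ℕ → α → ℝ} {g : α → ℝ}
    {s : Set α} (h : TendstoUniformlyOn f g atTop s) :
    ∃ ε : ℕ → ℝ, (∀ n, 0 < ε n) ∧ Tendsto ε atTop (nhds 0) ∧
      ∀ᶠ n in atTop, ∀ x ∈ s, |f n x - g x| ≤ ε n := by
  have hsmall {δ : ℝ} (hδ : 0 < δ) : ∀ᶠ n in atTop, ∀ x : s, |f n x - g x| ≤ δ := by
    filter_upwards [Metric.tendstoUniformlyOn_iff.1 h δ hδ] with n hn x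
    rw [abs_sub_comm]
    exact (hn x x.2).le
  have hnonneg (n : ℕ) : 0 ≤ ⨆ x : s, |f n x - g x| := Real.iSup_nonneg fun _ => abs_nonneg _
  have hsup : Tendsto (fun n => ⨆ x : s, |f n x - g x|) atTop (nhds 0) := by
    refine Metric.tendsto_nhds.2 fun δ hδ => ?_
    filter_upwards [hsmall (half_pos hδ)] with n hn
    rw [Real.dist_eq, sub_zero, abs_of_nonneg (hnonneg n)]
    exact (Real.iSup_le hn (half_pos hδ).le).trans_lt (half_lt_self hδ)
  refine ⟨fun n => (⨆ x : s, |f n x - g x|) + 1 / ((n : ℝ) + 1),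
    fun n => add_pos_of_nonneg_of_pos (hnonneg n) (by positivity), ?_, ?_⟩
  · simpa only [add_zero] using hsup.add tendsto_one_div_add_atTop_nhds_zero_nat
  · filter_upwards [hsmall one_pos] with n hn x hx
    exact (le_ciSup (f := fun x : s => |f n x - g x|) ⟨1, forall_mem_range.2 hn⟩ ⟨x, hx⟩).trans
      (le_add_of_nonneg_right (by positivity))

theorem HasBoundedDensity.exists_abs_scaledMaxDensity_sub_le {μ : Measure ℝ}
    [IsProbabilityMeasure μ] {p : ℝ → ℝ} {M : ℝ} (h : HasBoundedDensity μ p M)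
    (hc : IsCentered μ 1) :
    ∃ ε : ℕ → ℝ, (∀ n, 0 < ε n) ∧ Tendsto ε atTop (nhds 0) ∧ ∃ N, ∀ n ≥ N, ∀ x > 0,
      |scaledMaxDensity μ p n x - halfNormalPDF x
          - (maxLaw μ n).real {0} * √(n + 1) * p (√(n + 1) * x)| ≤ ε n / x := by
  obtain ⟨ε, hε, hε0, hbound⟩ :=
    exists_tendsto_zero_of_tendstoUniformlyOn (h.tendstoUniformlyOn_scaledRegularPart hc)
  obtain ⟨N, hN⟩ := eventually_atTop.1 hbound
  refine ⟨ε, hε, hε0, N, fun n hn x hx => ?_⟩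
  have hregular : scaledMaxDensity μ p n x - halfNormalPDF x
      - (maxLaw μ n).real {0} * √(n + 1) * p (√(n + 1) * x) =
      (scaledRegularPart μ p n x - x * halfNormalPDF x) / x := by
    rw [scaledMaxDensity, sub_div, mul_div_cancel_left₀ _ hx.ne']
    ring
  rw [hregular, abs_div, abs_of_pos hx]
  exact div_le_div_of_nonneg_right (hN n hn x hx) hx.le

/-- Local limit theorem for the maximum of sums (Aleshkyavichene): if the i.i.d.
summands have a bounded density `p`, mean `0` and variance `1`, then uniformly in
`x > 0`, `p̄ₙ*(x) = φ₊(x) + P(S̄_{n-1} < 0) √n p(√n x) + o(1/x)`, where `p̄ₙ*` is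
the density of `S̄ₙ/√n` and `φ₊` is the one-sided standard normal density. -/
theorem stmt14 {Ω : Type*} [MeasureSpace Ω] [IsProbabilityMeasure (ℙ : Measure Ω)]
    (X : ℕ → Ω → ℝ) (hmeas : ∀ i, Measurable (X i))
    (hindep : iIndepFun X ℙ)
    (hident : ∀ i, Measure.map (X i) ℙ = Measure.map (X 0) ℙ)
    (hL2 : MemLp (X 0) 2 ℙ)
    (hmean : ∫ ω, X 0 ω ∂ℙ = 0)
    (hvar : ∫ ω, (X 0 ω) ^ 2 ∂ℙ = 1)
    (p : ℝ → ℝ) (hpmeas : Measurable p) (hp0 : ∀ x, 0 ≤ p x)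
    (hpbdd : ∃ M : ℝ, ∀ x, p x ≤ M)
    (hpdens : Measure.map (X 0) ℙ = volume.withDensity (fun x => ENNReal.ofReal (p x)))
    (Sbar : ℕ → Ω → ℝ)
    (hSbar : ∀ n, ∀ hn : 1 ≤ n, ∀ ω, Sbar n ω =
      (Finset.Icc 1 n).sup' (Finset.nonempty_Icc.mpr hn)
        (fun k => ∑ i ∈ Finset.range k, X i ω))
    (pstar : ℕ → ℝ → ℝ) (hpstarmeas : ∀ n, Measurable (pstar n))
    (hpstar0 : ∀ n x, 0 ≤ pstar n x)
    (hpstar : ∀ n, 1 ≤ n → Measure.map (fun ω => Sbar n ω / Real.sqrt n) ℙ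
      = volume.withDensity (fun x => ENNReal.ofReal (pstar n x))) :
    ∃ ε : ℕ → ℝ, (∀ n, 0 < ε n) ∧ Tendsto ε atTop (nhds 0) ∧
      ∃ N : ℕ, ∀ n ≥ N,
        ∀ᵐ x ∂(volume.restrict (Ioi (0 : ℝ))),
          |pstar n x - Real.sqrt (2 / Real.pi) * Real.exp (-x ^ 2 / 2)
              - (ℙ {ω | Sbar (n - 1) ω < 0}).toReal * Real.sqrt n * p (Real.sqrt n * x)|
            ≤ ε n / x := by
  obtain ⟨M, hM⟩ := hpbdd
  have := Measure.isProbabilityMeasure_map (μ := ℙ) (hmeas 0).aemeasurable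
  have hd : HasBoundedDensity (Measure.map (X 0) ℙ) p M := ⟨hpmeas, hp0, hM, hpdens⟩
  have hc : IsCentered (Measure.map (X 0) ℙ) 1 := hvar ▸ isCentered_map hL2 hmean
  have hS (n : ℕ) := funext (hSbar (n + 1) n.succ_pos)
  have hSmeas (n : ℕ) : Measurable (Sbar (n + 1)) :=
    hS n ▸ measurable_sup'_Icc_sum_range hmeas n _
  have hlaw (n : ℕ) : Measure.map (Sbar (n + 1)) ℙ = _ :=
    hS n ▸ map_sup'_Icc_sum_range hmeas hindep hident n _
  obtain ⟨ε, hε, hε0, N, hN⟩ := hd.exists_abs_scaledMaxDensity_sub_le hc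
  refine ⟨fun n => ε (n - 1), fun n => hε _, hε0.comp (tendsto_sub_atTop_nat 1), N + 2,
    fun n hn => ?_⟩
  obtain ⟨m, rfl⟩ : ∃ m, n = m + 2 := ⟨n - 2, by omega⟩
  have hdens := hpstar (m + 1 + 1) (Nat.le_add_left 1 _)
  rw [Nat.cast_succ, ← Function.comp_def (· / _), ← Measure.map_map (by fun_prop) (hSmeas _),
    hlaw] at hdens
  filter_upwards [hd.ae_eq_scaledMaxDensity (m + 1) (hpstarmeas _) (hpstar0 _) hdens,
    ae_restrict_mem measurableSet_Ioi] with x hx hx0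
  rw [hx, Nat.cast_succ]
  have hbound := hN (m + 1) (by omega) x hx0
  rwa [← hd.measureReal_lt_zero_eq (hSmeas m) (hlaw m)] at hbound
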